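/- Let n ≥ 2, let Ω ⊂ ℝⁿ be a bounded domain with C¹ boundary, and let 1 ≤ p < 2n/(n−2) (p ≥ 1 if n = 2). Let Ω* be the ball centered at the origin with |Ω*| = |Ω|, and let B* be the ball with C_p(B*) = C_p(Ω). Then B* ⊆ Ω*, with equality if and only if Ω = Ω* = B* (i.e., Ω is a ball). -/

import Mathlib

open MeasureTheory Metric Set
open scoped ENNReal NNReal Pointwise

noncomputable section

/-- A bounded set `Ω ⊆ ℝⁿ` has `C¹` boundary if every boundary point admits a local `C¹`
defining function with nonvanishing gradient. -/
def HasC1Boundary {n : ℕ} (Ω : Set (EuclideanSpace ℝ (Fin n))) : Prop :=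
  ∀ x ∈ frontier Ω, ∃ (U : Set (EuclideanSpace ℝ (Fin n)))
    (f : EuclideanSpace ℝ (Fin n) → ℝ),
      IsOpen U ∧ x ∈ U ∧ ContDiff ℝ 1 f ∧ (∀ y ∈ U, fderiv ℝ f y ≠ 0) ∧
      Ω ∩ U = {y | y ∈ U ∧ f y < 0}

/-- Admissible (nontrivial) test functions for the Sobolev quotient on `Ω`; these form a dense
subclass of `W₀^{1,2}(Ω) \ {0}`. -/
def Admissible {n : ℕ} (Ω : Set (EuclideanSpace ℝ (Fin n)))
    (f : EuclideanSpace ℝ (Fin n) → ℝ) : Prop :=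
  ContDiff ℝ 1 f ∧ HasCompactSupport f ∧ tsupport f ⊆ Ω ∧ ∃ x, f x ≠ 0

/-- The Sobolev quotient `Φ_p(f) = ∫_Ω |∇f|² dm / (∫_Ω |f|^p dm)^{2/p}`. -/
def sobolevQuotient {n : ℕ} (p : ℝ) (Ω : Set (EuclideanSpace ℝ (Fin n)))
    (f : EuclideanSpace ℝ (Fin n) → ℝ) : ℝ :=
  (∫ x in Ω, ‖fderiv ℝ f x‖ ^ 2) / (∫ x in Ω, |f x| ^ p) ^ (2 / p)

/-- The Sobolev constant `C_p(Ω)`. -/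
def sobolevConstant {n : ℕ} (p : ℝ) (Ω : Set (EuclideanSpace ℝ (Fin n))) : ℝ :=
  sInf (sobolevQuotient p Ω '' {f | Admissible Ω f})

/-- `u` is a positive extremal function realizing `C_p(Ω)`. -/
def IsExtremal {n : ℕ} (p : ℝ) (Ω : Set (EuclideanSpace ℝ (Fin n)))
    (u : EuclideanSpace ℝ (Fin n) → ℝ) : Prop :=
  Admissible Ω u ∧ (∀ x ∈ Ω, 0 < u x) ∧
    sobolevQuotient p Ω u = sobolevConstant p Ω

/-- The distribution function `μ(t) = |{x ∈ Ω : u(x) > t}|`. -/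
def distFun {n : ℕ} (Ω : Set (EuclideanSpace ℝ (Fin n)))
    (u : EuclideanSpace ℝ (Fin n) → ℝ) (t : ℝ) : ℝ :=
  (volume {x | x ∈ Ω ∧ t < u x}).toReal

/-- The decreasing rearrangement `u*(s) = inf{t ≥ 0 : μ(t) < s}`. -/
def decRearrangement {n : ℕ} (Ω : Set (EuclideanSpace ℝ (Fin n)))
    (u : EuclideanSpace ℝ (Fin n) → ℝ) (s : ℝ) : ℝ :=
  sInf {t : ℝ | 0 ≤ t ∧ distFun Ω u t < s}

/-- `ω_n`, the volume of the unit ball in `ℝⁿ`. -/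
def unitBallVol (n : ℕ) : ℝ :=
  (volume (ball (0 : EuclideanSpace ℝ (Fin n)) 1)).toReal

/-- The Laplacian `Δf = ∑ᵢ ∂²f/∂xᵢ²`. -/
def laplacian {n : ℕ} (f : EuclideanSpace ℝ (Fin n) → ℝ)
    (x : EuclideanSpace ℝ (Fin n)) : ℝ :=
  ∑ i : Fin n, fderiv ℝ (fun y => fderiv ℝ f y (EuclideanSpace.single i 1)) x
    (EuclideanSpace.single i 1)

section PartA
open Filter Topology Module

abbrev EE (n : ℕ) := EuclideanSpace ℝ (Fin n)

structure IsSplit {N : ℕ} (L : (ℝ × EE N) ≃L[ℝ] EE (N + 1)) : Prop where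
  mp : MeasurePreserving L volume volume
  nrm : ∀ s y, ‖L (s, y)‖ ^ 2 = s ^ 2 + ‖y‖ ^ 2

lemma exists_split {N : ℕ} (θ : EE (N + 1)) (hθ : ‖θ‖ = 1) :
    ∃ L : (ℝ × EE N) ≃L[ℝ] EE (N + 1), IsSplit L ∧ L (1, 0) = θ := by
  let V := WithLp 2 (ℝ × EE N)
  have hfin : finrank ℝ V = finrank ℝ (EE (N + 1)) := by
    have : finrank ℝ V = finrank ℝ (ℝ × EE N) :=
      (WithLp.linearEquiv 2 ℝ (ℝ × EE N)).finrank_eq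
    rw [this]; simp [finrank_prod]; ring
  have hf2 : finrank ℝ V = N + 1 := by rw [hfin]; simp
  let I : V ≃ₗᵢ[ℝ] EE (N + 1) := ((stdOrthonormalBasis ℝ V).reindex (finCongr hf2)).repr
  let e : V := WithLp.toLp 2 (1, 0)
  have he : ‖I e‖ = ‖θ‖ := by
    rw [I.norm_map, hθ]
    have : ‖e‖ ^ 2 = 1 := by
      rw [WithLp.prod_norm_sq_eq_of_L2]; simp [e]
    have h0 : 0 ≤ ‖e‖ := norm_nonneg e
    nlinarith
  let J : V ≃ₗᵢ[ℝ] EE (N + 1) := I.trans (ℝ ∙ (I e - θ))ᗮ.reflection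
  let L : (ℝ × EE N) ≃L[ℝ] EE (N + 1) :=
    (WithLp.prodContinuousLinearEquiv 2 ℝ ℝ (EE N)).symm.trans J.toContinuousLinearEquiv
  have hL : ∀ z, L z = J (WithLp.toLp 2 z) := fun z => rfl
  refine ⟨L, ⟨?_, ?_⟩, ?_⟩
  · exact J.measurePreserving.comp (WithLp.volume_preserving_toLp ℝ (EE N))
  · intro s y
    rw [hL, J.norm_map, WithLp.prod_norm_sq_eq_of_L2]; simp
  · rw [hL]
    exact Submodule.reflection_sub he

lemma om_pos (n : ℕ) : 0 < unitBallVol n := by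
  unfold unitBallVol
  exact ENNReal.toReal_pos (measure_ball_pos _ _ one_pos).ne' measure_ball_lt_top.ne

lemma vol_ball {n : ℕ} (c : EE n) {r : ℝ} (hr : 0 ≤ r) (hn : n ≠ 0 ∨ 0 < r) :
    volume (ball c r) = ENNReal.ofReal (unitBallVol n * r ^ n) := by
  have h1 : volume (ball c r) = ENNReal.ofReal (r ^ n) * volume (ball (0 : EE n) 1) := by
    rcases hr.eq_or_lt with h | h
    · subst h
      have : n ≠ 0 := by rcases hn with h | h; exact h; exact absurd h (lt_irrefl _)
      simp [this]
    · have := Measure.addHaar_ball_of_pos (volume : Measure (EE n)) c h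
      simpa using this
  rw [h1, unitBallVol, mul_comm, ENNReal.ofReal_mul ENNReal.toReal_nonneg,
    ENNReal.ofReal_toReal measure_ball_lt_top.ne]

lemma IsSplit.vol_eq {N : ℕ} {L : (ℝ × EE N) ≃L[ℝ] EE (N + 1)} (hL : IsSplit L)
    {U : Set (EE (N + 1))} (hU : MeasurableSet U) :
    volume U = ∫⁻ s, volume {y | L (s, y) ∈ U} := by
  rw [← hL.mp.measure_preimage hU.nullMeasurableSet, Measure.volume_eq_prod,
    Measure.prod_apply (hL.mp.measurable hU)]
  rfl

lemma IsSplit.integral_eq {N : ℕ} {L : (ℝ × EE N) ≃L[ℝ] EE (N + 1)} (hL : IsSplit L)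
    (f : EE (N + 1) → ℝ) : ∫ x, f x = ∫ z, f (L z) :=
  (hL.mp.integral_comp L.toHomeomorph.measurableEmbedding f).symm

lemma om_succ (N : ℕ) : unitBallVol (N + 1) =
    ∫ τ in (-1 : ℝ)..1, unitBallVol N * √(1 - τ ^ 2) ^ N := by
  obtain ⟨L, hL, -⟩ := exists_split (N := N) (EuclideanSpace.single 0 1) (by simp)
  have hsl : ∀ s : ℝ, volume {y | L (s, y) ∈ ball (0 : EE (N + 1)) 1} =
      (Ioo (-1 : ℝ) 1).indicator
        (fun τ => ENNReal.ofReal (unitBallVol N * √(1 - τ ^ 2) ^ N)) s := by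
    intro s
    have hmem : ∀ y, L (s, y) ∈ ball (0 : EE (N + 1)) 1 ↔ s ^ 2 + ‖y‖ ^ 2 < 1 := by
      intro y
      rw [mem_ball_zero_iff, ← hL.nrm]
      constructor
      · intro h; have := norm_nonneg (L (s, y)); nlinarith
      · intro h; have := norm_nonneg (L (s, y)); nlinarith
    by_cases hs : s ∈ Ioo (-1 : ℝ) 1
    · have h1 : 0 < 1 - s ^ 2 := by nlinarith [hs.1, hs.2]
      have hq := Real.sqrt_pos.2 h1
      rw [indicator_of_mem hs, ← vol_ball (0 : EE N) hq.le (Or.inr hq)]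
      congr 1; ext y
      rw [mem_ofPred_eq, hmem, mem_ball_zero_iff, Real.lt_sqrt (norm_nonneg y)]
      constructor <;> intro h <;> linarith
    · rw [indicator_of_notMem hs]
      convert measure_empty (μ := (volume : Measure (EE N)))
      ext y
      simp only [mem_ofPred_eq, mem_empty_iff_false, iff_false, hmem]
      intro h
      apply hs
      have : s ^ 2 < 1 := by nlinarith [sq_nonneg ‖y‖]
      exact abs_lt.1 (by rwa [sq_lt_one_iff_abs_lt_one] at this)
  have h := hL.vol_eq (measurableSet_ball (x := (0 : EE (N + 1))) (ε := 1))
  simp_rw [hsl] at h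
  rw [lintegral_indicator measurableSet_Ioo] at h
  rw [unitBallVol, h, intervalIntegral.integral_of_le (by norm_num),
    integral_Ioc_eq_integral_Ioo, integral_eq_lintegral_of_nonneg_ae]
  · exact Eventually.of_forall fun τ => by
      have := (om_pos N).le
      positivity
  · exact Continuous.aestronglyMeasurable (by fun_prop)

end PartA

section PartB
open Filter Topology Module

def bb (N : ℕ) (τ : ℝ) : ℝ := unitBallVol N * √(1 - τ ^ 2) ^ N

lemma bb_cont (N : ℕ) : Continuous (bb N) := by unfold bb; fun_prop

lemma bb_nonneg (N : ℕ) (τ : ℝ) : 0 ≤ bb N τ := by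
  have := (om_pos N).le
  unfold bb; positivity

lemma bb_pos (N : ℕ) {τ : ℝ} (h : |τ| < 1) : 0 < bb N τ := by
  have := om_pos N
  have h1 : 0 < 1 - τ ^ 2 := by
    have := (sq_lt_one_iff_abs_lt_one τ).2 h
    linarith
  have := Real.sqrt_pos.2 h1
  unfold bb; positivity

lemma bb_int (N : ℕ) (x y : ℝ) : IntervalIntegrable (bb N) volume x y :=
  (bb_cont N).intervalIntegrable x y

lemma bb_integral_lt (N : ℕ) {x y : ℝ} (hx : -1 ≤ x) (hxy : x < y) (hy : y ≤ 1) :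
    ∫ τ in (-1)..x, bb N τ < ∫ τ in (-1)..y, bb N τ := by
  rw [← intervalIntegral.integral_add_adjacent_intervals (bb_int N (-1) x) (bb_int N x y)]
  have : 0 < ∫ τ in x..y, bb N τ := by
    apply intervalIntegral.intervalIntegral_pos_of_pos_on (bb_int N x y) _ hxy
    intro z hz
    apply bb_pos
    rw [abs_lt]; constructor <;> linarith [hz.1, hz.2]
  linarith

/-- monotone transport -/
structure IsTransp (N : ℕ) (κ : ℝ) (F T : ℝ → ℝ) : Prop where
  cont : Continuous T
  mono : Monotone T
  mem : ∀ s, T s ∈ Icc (-1 : ℝ) 1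
  eq : ∀ s, ∫ τ in (-1)..(T s), bb N τ = κ * F s

lemma exists_trans (N : ℕ) (κ : ℝ) (F : ℝ → ℝ) (hF : Continuous F) (hm : Monotone F)
    (hκ : 0 ≤ κ) (h0 : ∀ s, 0 ≤ F s) (h1 : ∀ s, κ * F s ≤ unitBallVol (N + 1)) :
    ∃ T, IsTransp N κ F T := by
  let Φ : ℝ → ℝ := fun x => ∫ τ in (-1)..x, bb N τ
  have hΦc : Continuous Φ := intervalIntegral.continuous_primitive (bb_int N) (-1)
  have hex : ∀ s, ∃ x : Icc (-1 : ℝ) 1, Φ x = κ * F s := by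
    intro s
    have := intermediate_value_Icc (by norm_num : (-1 : ℝ) ≤ 1) hΦc.continuousOn
    have h2 : κ * F s ∈ Icc (Φ (-1)) (Φ 1) := by
      constructor
      · simp only [Φ, intervalIntegral.integral_same]; exact mul_nonneg hκ (h0 s)
      · have := h1 s
        rw [om_succ] at this
        exact this
    obtain ⟨x, hx, hxe⟩ := this h2
    exact ⟨⟨x, hx⟩, hxe⟩
  choose T hT using hex
  let Ψ : Icc (-1 : ℝ) 1 → ℝ := fun x => Φ x
  have hΨs : StrictMono Ψ := fun x y hxy => bb_integral_lt N x.2.1 hxy y.2.2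
  have hΨc : Continuous Ψ := hΦc.comp continuous_subtype_val
  have hemb := (hΨc.isClosedEmbedding hΨs.injective).isEmbedding
  have hTc : Continuous T := by
    rw [hemb.continuous_iff]
    have : Ψ ∘ T = fun s => κ * F s := funext hT
    rw [this]; fun_prop
  refine ⟨fun s => T s, ?_, ?_, fun s => (T s).2, hT⟩
  · exact continuous_subtype_val.comp hTc
  · intro s t hst
    have : Ψ (T s) ≤ Ψ (T t) := by
      simp only [Ψ, hT]
      exact mul_le_mul_of_nonneg_left (hm hst) hκ
    exact hΨs.le_iff_le.1 this

lemma IsTransp.hasDerivAt {N : ℕ} {κ : ℝ} {F T : ℝ → ℝ} (h : IsTransp N κ F T) {s a : ℝ}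
    (hs : |T s| < 1) (hF : HasDerivAt F a s) : HasDerivAt T (κ * a / bb N (T s)) s := by
  let Φ : ℝ → ℝ := fun x => ∫ τ in (-1)..x, bb N τ
  have hb := bb_pos N hs
  have hΦ : HasStrictDerivAt Φ (bb N (T s)) (T s) :=
    intervalIntegral.integral_hasStrictDerivAt_right (bb_int N _ _)
      ((bb_cont N).stronglyMeasurableAtFilter _ _) (bb_cont N).continuousAt
  have h1 := hΦ.to_localInverse hb.ne'
  have h2 : ∀ᶠ x in 𝓝 (T s), hΦ.localInverse Φ (bb N (T s)) (T s) hb.ne' (Φ x) = x :=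
    HasStrictFDerivAt.eventually_left_inverse _
  have h3 := h.cont.continuousAt.eventually h2
  have h4 : Φ (T s) = κ * F s := h.eq s
  rw [h4] at h1
  have h5 := h1.hasDerivAt.comp s (hF.const_mul κ)
  have h6 : HasDerivAt T ((bb N (T s))⁻¹ * (κ * a)) s := by
    refine h5.congr_of_eventuallyEq ?_
    filter_upwards [h3] with x hx
    have : Φ (T x) = κ * F x := h.eq x
    rw [this] at hx
    exact hx.symm
  convert h6 using 1
  field_simp

lemma IsTransp.lip {N : ℕ} {κ : ℝ} {F T : ℝ → ℝ} (h : IsTransp N κ F T) {α β : ℝ}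
    (hα : -1 < T α) (hβ : T β < 1) {C : ℝ} (hC : 0 ≤ C) (hκ : 0 ≤ κ)
    (hF : ∀ x y, x ≤ y → F y - F x ≤ C * (y - x)) :
    ∃ c, 0 < c ∧ (∀ s ∈ Icc α β, c ≤ bb N (T s)) ∧
      LipschitzOnWith (Real.toNNReal (κ * C / c)) T (Icc α β) := by
  by_cases hab : T α ≤ T β
  swap
  · have : ¬ α ≤ β := fun h' => hab (h.mono h')
    refine ⟨1, one_pos, ?_, ?_⟩
    · rw [Icc_eq_empty this]; simp
    · rw [Icc_eq_empty this]; simp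
  obtain ⟨z, hz, hmin⟩ := isCompact_Icc.exists_isMinOn (nonempty_Icc.2 hab)
    (bb_cont N).continuousOn
  have hz1 : |z| < 1 := by rw [abs_lt]; constructor <;> linarith [hz.1, hz.2]
  have hc := bb_pos N hz1
  refine ⟨bb N z, hc, fun s hs => hmin ⟨h.mono hs.1, h.mono hs.2⟩, ?_⟩
  have key : ∀ x ∈ Icc α β, ∀ y ∈ Icc α β, x ≤ y → T y - T x ≤ κ * C / bb N z * (y - x) := by
    intro x hx y hy hxy
    have e : ∫ τ in (T x)..(T y), bb N τ = κ * (F y - F x) := by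
      rw [mul_sub, ← h.eq, ← h.eq,
        intervalIntegral.integral_interval_sub_left (bb_int N _ _) (bb_int N _ _)]
    have e2 : bb N z * (T y - T x) ≤ ∫ τ in (T x)..(T y), bb N τ := by
      have := intervalIntegral.integral_mono_on (h.mono hxy) (intervalIntegrable_const (c := bb N z))
        (bb_int N (T x) (T y)) (fun τ hτ => hmin ⟨(h.mono hx.1).trans hτ.1, hτ.2.trans (h.mono hy.2)⟩)
      simp only [intervalIntegral.integral_const, smul_eq_mul] at this
      linarith
    have e3 : κ * (F y - F x) ≤ κ * (C * (y - x)) := mul_le_mul_of_nonneg_left (hF x y hxy) hκ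
    rw [div_mul_eq_mul_div, le_div_iff₀ hc]
    linarith
  apply LipschitzOnWith.of_dist_le_mul
  have hnn : 0 ≤ κ * C / bb N z := by positivity
  intro x hx y hy
  rw [Real.coe_toNNReal _ hnn, Real.dist_eq, Real.dist_eq]
  rcases le_total x y with hxy | hxy
  · rw [abs_sub_comm, abs_of_nonneg (sub_nonneg.2 (h.mono hxy)), abs_sub_comm,
      abs_of_nonneg (sub_nonneg.2 hxy)]
    exact key x hx y hy hxy
  · rw [abs_of_nonneg (sub_nonneg.2 (h.mono hxy)), abs_of_nonneg (sub_nonneg.2 hxy)]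
    exact key y hy x hx hxy

lemma IsTransp.by_parts {N : ℕ} {κ : ℝ} {F T a : ℝ → ℝ} (h : IsTransp N κ F T) {α β : ℝ}
    (hα : -1 < T α) (hβ : T β < 1) {C : ℝ} (hC : 0 ≤ C) (hκ : 0 ≤ κ)
    (hF : ∀ x y, x ≤ y → F y - F x ≤ C * (y - x))
    (hd : ∀ᵐ s, HasDerivAt F (a s) s) {H : ℝ → ℝ} (hH : ContDiff ℝ 1 H)
    (hs : ∀ s, s ∉ Ioo α β → H s = 0) :
    ∫ s, T s * deriv H s = - ∫ s, κ * a s / bb N (T s) * H s := by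
  rcases le_or_gt α β with hab | hab
  swap
  · have : H = 0 := funext fun s => hs s (by rw [Ioo_eq_empty (by linarith)]; simp)
    subst this; simp
  obtain ⟨c, hc, -, hlip⟩ := h.lip hα hβ hC hκ hF
  have hac : AbsolutelyContinuousOnInterval T α β :=
    LipschitzOnWith.absolutelyContinuousOnInterval (by rwa [uIcc_of_le hab])
  have hHac : AbsolutelyContinuousOnInterval H α β := by
    obtain ⟨K, hK⟩ := hH.contDiffOn.exists_lipschitzOnWith (s := Icc α β) (by norm_num)
      (convex_Icc α β) isCompact_Icc
    exact LipschitzOnWith.absolutelyContinuousOnInterval (by rwa [uIcc_of_le hab])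
  have hmain := hac.integral_mul_deriv_eq_deriv_mul hHac
  rw [hs α (by simp), hs β (by simp)] at hmain
  have hd0 : ∀ s, s ∉ Ioc α β → deriv H s = 0 := by
    intro s hsm
    by_cases hs1 : s = α
    · subst hs1
      have h1 : HasDerivWithinAt H (deriv H s) (Iic s) s :=
        (hH.differentiable (by norm_num) s).hasDerivAt.hasDerivWithinAt
      have h2 : HasDerivWithinAt H 0 (Iic s) s := by
        refine (hasDerivWithinAt_const s (Iic s) (0 : ℝ)).congr (fun x hx => ?_) ?_
        · exact hs x (fun hh => by have : x ≤ s := hx; linarith [hh.1])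
        · exact hs s (by simp)
      exact (uniqueDiffOn_Iic s s self_mem_Iic).eq_deriv _ h1 h2
    · have : H =ᶠ[𝓝 s] 0 := by
        have hs2 : s ∈ (Icc α β)ᶜ := by
          intro hh
          exact hsm ⟨lt_of_le_of_ne hh.1 (Ne.symm hs1), hh.2⟩
        filter_upwards [isClosed_Icc.isOpen_compl.mem_nhds hs2] with x hx
        exact hs x (fun hh => hx (Ioo_subset_Icc_self hh))
      rw [this.deriv_eq]; simp
  have i1 : ∫ s, T s * deriv H s = ∫ s in α..β, T s * deriv H s := by
    rw [intervalIntegral.integral_of_le hab]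
    symm
    apply setIntegral_eq_integral_of_forall_compl_eq_zero
    intro x hx; rw [hd0 x hx, mul_zero]
  have i2 : ∫ s, κ * a s / bb N (T s) * H s = ∫ s in α..β, deriv T s * H s := by
    rw [intervalIntegral.integral_of_le hab]
    rw [← setIntegral_eq_integral_of_forall_compl_eq_zero (s := Ioc α β)]
    · apply integral_congr_ae
      rw [EventuallyEq, ae_restrict_iff' measurableSet_Ioc]
      filter_upwards [hd] with s hsd hsm
      have : |T s| < 1 := by
        rw [abs_lt]
        exact ⟨hα.trans_le (h.mono hsm.1.le), (h.mono hsm.2).trans_lt hβ⟩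
      rw [(h.hasDerivAt this hsd).deriv]
    · intro x hx
      rw [hs x (fun hh => hx ⟨hh.1, hh.2.le⟩), mul_zero]
  rw [i1, i2, hmain]; ring

end PartB

section PartC
open Filter Topology Module

def IC (n : ℕ) : Prop := ∀ (U : Set (EE n)) (h : EE n → ℝ), IsOpen U → Bornology.IsBounded U →
  ContDiff ℝ 1 h → HasCompactSupport h → (∀ x, 0 ≤ h x) → tsupport h ⊆ U → ∀ r : ℝ, 0 < r →
  volume U ≤ ENNReal.ofReal (unitBallVol n * r ^ n) →
  (n / r) * ∫ x, h x ≤ ∫ x, ‖fderiv ℝ h x‖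

variable {N : ℕ}

def sl (L : (ℝ × EE N) ≃L[ℝ] EE (N + 1)) (U : Set (EE (N + 1))) (s : ℝ) : ℝ :=
  (volume {y | L (s, y) ∈ U}).toReal

def FF (L : (ℝ × EE N) ≃L[ℝ] EE (N + 1)) (U : Set (EE (N + 1))) (s : ℝ) : ℝ :=
  ∫ t in Iic s, sl L U t

variable {L : (ℝ × EE N) ≃L[ℝ] EE (N + 1)} {U : Set (EE (N + 1))}

lemma sl_nonneg (s : ℝ) : 0 ≤ sl L U s := ENNReal.toReal_nonneg

lemma slice_subset (hL : IsSplit L) {D : ℝ} (hD : U ⊆ ball 0 D) (s : ℝ) :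
    {y | L (s, y) ∈ U} ⊆ ball 0 D := by
  intro y hy
  have h1 := hD hy
  rw [mem_ball_zero_iff] at h1 ⊢
  have h2 := hL.nrm s y
  have := norm_nonneg y
  have := norm_nonneg (L (s, y))
  nlinarith [sq_nonneg s]

lemma slice_lt_top (hL : IsSplit L) (hUb : Bornology.IsBounded U) (s : ℝ) :
    volume {y | L (s, y) ∈ U} < ⊤ := by
  obtain ⟨D, hD⟩ := hUb.subset_ball 0
  exact (measure_mono (slice_subset hL hD s)).trans_lt measure_ball_lt_top

lemma sl_meas (hU : MeasurableSet U) : Measurable (sl L U) := by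
  have h1 : MeasurableSet (L ⁻¹' U) := L.continuous.measurable hU
  exact (measurable_measure_prodMk_left h1).ennreal_toReal

lemma sl_lintegral (hL : IsSplit L) (hU : MeasurableSet U) (hUb : Bornology.IsBounded U) :
    ∫⁻ s, ENNReal.ofReal (sl L U s) = volume U := by
  rw [hL.vol_eq hU]
  congr 1; ext s
  exact ENNReal.ofReal_toReal (slice_lt_top hL hUb s).ne

lemma sl_integrable (hL : IsSplit L) (hU : MeasurableSet U) (hUb : Bornology.IsBounded U) :
    Integrable (sl L U) := by
  refine ⟨(sl_meas hU).aestronglyMeasurable, ?_⟩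
  rw [hasFiniteIntegral_iff_ofReal (Eventually.of_forall sl_nonneg), sl_lintegral hL hU hUb]
  exact hUb.measure_lt_top

lemma sl_le (hL : IsSplit L) (hUb : Bornology.IsBounded U) :
    ∃ C, 0 ≤ C ∧ ∀ s, sl L U s ≤ C := by
  obtain ⟨D, hD⟩ := hUb.subset_ball 0
  exact ⟨(volume (ball (0 : EE N) D)).toReal, ENNReal.toReal_nonneg, fun s =>
    ENNReal.toReal_mono measure_ball_lt_top.ne (measure_mono (slice_subset hL hD s))⟩

lemma FF_sub (hL : IsSplit L) (hU : MeasurableSet U) (hUb : Bornology.IsBounded U) (x y : ℝ) :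
    FF L U y - FF L U x = ∫ t in x..y, sl L U t :=
  intervalIntegral.integral_Iic_sub_Iic (sl_integrable hL hU hUb).integrableOn
    (sl_integrable hL hU hUb).integrableOn

lemma FF_mono (hL : IsSplit L) (hU : MeasurableSet U) (hUb : Bornology.IsBounded U) :
    Monotone (FF L U) := by
  intro x y hxy
  have := FF_sub hL hU hUb x y
  have h2 := intervalIntegral.integral_nonneg (μ := volume) hxy (fun t _ => sl_nonneg (L := L) (U := U) t)
  linarith

lemma FF_lip (hL : IsSplit L) (hU : MeasurableSet U) (hUb : Bornology.IsBounded U) {C : ℝ}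
    (hC : ∀ s, sl L U s ≤ C) (x y : ℝ) (hxy : x ≤ y) : FF L U y - FF L U x ≤ C * (y - x) := by
  rw [FF_sub hL hU hUb]
  have := intervalIntegral.integral_mono_on hxy (sl_integrable hL hU hUb).intervalIntegrable
    (intervalIntegrable_const (c := C)) (fun t _ => hC t)
  simp only [intervalIntegral.integral_const, smul_eq_mul] at this
  linarith

lemma FF_eq_prim (hL : IsSplit L) (hU : MeasurableSet U) (hUb : Bornology.IsBounded U) :
    FF L U = fun y => FF L U 0 + ∫ t in (0 : ℝ)..y, sl L U t := by
  ext y; rw [← FF_sub hL hU hUb]; ring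

lemma FF_cont (hL : IsSplit L) (hU : MeasurableSet U) (hUb : Bornology.IsBounded U) :
    Continuous (FF L U) := by
  rw [FF_eq_prim hL hU hUb]
  exact continuous_const.add (intervalIntegral.continuous_primitive
    (fun _ _ => (sl_integrable hL hU hUb).intervalIntegrable) 0)

lemma FF_ae_deriv (hL : IsSplit L) (hU : MeasurableSet U) (hUb : Bornology.IsBounded U) :
    ∀ᵐ s, HasDerivAt (FF L U) (sl L U s) s := by
  filter_upwards [_root_.LocallyIntegrable.ae_hasDerivAt_integral (sl_integrable hL hU hUb).locallyIntegrable] with s hs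
  rw [FF_eq_prim hL hU hUb]
  exact (hs 0).const_add _

lemma FF_nonneg (s : ℝ) : 0 ≤ FF L U s := integral_nonneg fun t => sl_nonneg t

lemma FF_ofReal (hL : IsSplit L) (hU : MeasurableSet U) (hUb : Bornology.IsBounded U) (s : ℝ) :
    ENNReal.ofReal (FF L U s) = volume (U ∩ {x | (L.symm x).1 ≤ s}) := by
  have hm : MeasurableSet {x | (L.symm x).1 ≤ s} :=
    (isClosed_le (by fun_prop) continuous_const).measurableSet
  rw [hL.vol_eq (hU.inter hm), FF, ofReal_integral_eq_lintegral_ofReal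
    (sl_integrable hL hU hUb).integrableOn (Eventually.of_forall sl_nonneg),
    ← lintegral_indicator measurableSet_Iic]
  congr 1; ext t
  by_cases ht : t ∈ Iic s
  · rw [indicator_of_mem ht, sl, ENNReal.ofReal_toReal (slice_lt_top hL hUb t).ne]
    congr 1; ext y
    have : t ≤ s := ht
    simp [this]
  · rw [indicator_of_notMem ht]
    symm
    convert measure_empty (μ := (volume : Measure (EE N)))
    ext y
    have : ¬ t ≤ s := ht
    simp [this]

lemma FF_le (hL : IsSplit L) (hU : MeasurableSet U) (hUb : Bornology.IsBounded U) (s : ℝ) :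
    ENNReal.ofReal (FF L U s) ≤ volume U := by
  rw [FF_ofReal hL hU hUb]; exact measure_mono inter_subset_left

lemma FF_pos (hL : IsSplit L) (hUo : IsOpen U) (hUb : Bornology.IsBounded U) {s : ℝ} {y : EE N}
    (hy : L (s, y) ∈ U) :
    0 < FF L U s ∧ ENNReal.ofReal (FF L U s) < volume U := by
  have hc : Continuous fun t : ℝ => L (t, y) := by fun_prop
  have hnh : ∀ᶠ t in 𝓝 s, L (t, y) ∈ U := hc.continuousAt.eventually (hUo.mem_nhds hy)
  obtain ⟨ε, hε, hball⟩ := Metric.eventually_nhds_iff.1 hnh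
  have hU := hUo.measurableSet
  constructor
  · rw [← ENNReal.ofReal_pos, FF_ofReal hL hU hUb]
    have ho : IsOpen (U ∩ {x | (L.symm x).1 < s}) :=
      hUo.inter (isOpen_lt (by fun_prop) continuous_const)
    have hne : (U ∩ {x | (L.symm x).1 < s}).Nonempty := by
      refine ⟨L (s - ε / 2, y), hball ?_, ?_⟩
      · rw [Real.dist_eq, sub_sub_cancel_left, abs_neg, abs_of_pos] <;> linarith
      · simp; linarith
    refine (ho.measure_pos volume hne).trans_le (measure_mono ?_)
    rintro x ⟨h1, h2⟩
    have h3 : (L.symm x).1 < s := by simpa using h2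
    exact ⟨h1, by simpa using h3.le⟩
  · rw [FF_ofReal hL hU hUb]
    have ho : IsOpen (U ∩ {x | s < (L.symm x).1}) :=
      hUo.inter (isOpen_lt continuous_const (by fun_prop))
    have hne : (U ∩ {x | s < (L.symm x).1}).Nonempty := by
      refine ⟨L (s + ε / 2, y), hball ?_, ?_⟩
      · rw [Real.dist_eq, add_sub_cancel_left, abs_of_pos] <;> linarith
      · simp; linarith
    have hp := ho.measure_pos volume hne
    have hdis : Disjoint (U ∩ {x | (L.symm x).1 ≤ s}) (U ∩ {x | s < (L.symm x).1}) := by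
      rw [Set.disjoint_left]
      rintro x ⟨_, h1⟩ ⟨_, h2⟩
      simp only [mem_ofPred_eq] at h1 h2
      linarith
    have hadd := measure_union (μ := volume) hdis ho.measurableSet
    have hle : volume ((U ∩ {x | (L.symm x).1 ≤ s}) ∪ (U ∩ {x | s < (L.symm x).1})) ≤ volume U :=
      measure_mono (union_subset inter_subset_left inter_subset_left)
    have hfin : volume (U ∩ {x | (L.symm x).1 ≤ s}) ≠ ⊤ :=
      ((measure_mono inter_subset_left).trans_lt hUb.measure_lt_top).ne
    calc _ < volume (U ∩ {x | (L.symm x).1 ≤ s}) + volume (U ∩ {x | s < (L.symm x).1}) :=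
          ENNReal.lt_add_right hfin hp.ne'
      _ ≤ _ := by rw [← hadd]; exact hle

lemma exists_transp (hL : IsSplit L) (hU : MeasurableSet U) (hUb : Bornology.IsBounded U)
    {ρ : ℝ} (hρ : 0 < ρ)
    (hv : volume U ≤ ENNReal.ofReal (unitBallVol (N + 1) * ρ ^ (N + 1))) :
    ∃ T, IsTransp N ((ρ ^ (N + 1))⁻¹) (FF L U) T := by
  apply exists_trans N _ _ (FF_cont hL hU hUb) (FF_mono hL hU hUb) (by positivity) FF_nonneg
  intro s
  have h := (FF_le hL hU hUb s).trans hv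
  have := om_pos (N + 1)
  rw [ENNReal.ofReal_le_ofReal_iff (by positivity)] at h
  rw [inv_mul_le_iff₀ (by positivity)]
  linarith

lemma transp_abs_lt (hL : IsSplit L) (hUo : IsOpen U) (hUb : Bornology.IsBounded U)
    {ρ : ℝ} (hρ : 0 < ρ)
    (hv : volume U ≤ ENNReal.ofReal (unitBallVol (N + 1) * ρ ^ (N + 1)))
    {T : ℝ → ℝ} (hT : IsTransp N ((ρ ^ (N + 1))⁻¹) (FF L U) T) {s : ℝ} {y : EE N}
    (hy : L (s, y) ∈ U) : |T s| < 1 := by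
  obtain ⟨h1, h2⟩ := FF_pos hL hUo hUb hy
  have hm := hT.mem s
  have he := hT.eq s
  have := om_pos (N + 1)
  have hpos : 0 < (ρ ^ (N + 1))⁻¹ * FF L U s := by positivity
  have hlt : (ρ ^ (N + 1))⁻¹ * FF L U s < unitBallVol (N + 1) := by
    have h := h2.trans_le hv
    rw [ENNReal.ofReal_lt_ofReal_iff (by positivity)] at h
    rw [inv_mul_lt_iff₀ (by positivity)]
    linarith
  rw [abs_lt]
  constructor
  · refine lt_of_le_of_ne hm.1 fun h => ?_
    rw [← h] at he
    simp at he
    rcases he with he | he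
    · rw [he] at hρ; exact lt_irrefl _ hρ
    · linarith
  · refine lt_of_le_of_ne hm.2 fun h => ?_
    rw [h] at he
    have h3 := om_succ N
    change _ = ∫ τ in (-1 : ℝ)..1, bb N τ at h3
    rw [h3] at hlt
    linarith

end PartC

section PartC2
open Filter Topology Module
variable {N : ℕ} {L : (ℝ × EE N) ≃L[ℝ] EE (N + 1)} {U : Set (EE (N + 1))}

lemma sl_pos (hL : IsSplit L) (hUo : IsOpen U) (hUb : Bornology.IsBounded U) {s : ℝ} {y : EE N}
    (hy : L (s, y) ∈ U) : 0 < sl L U s := by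
  have ho : IsOpen {y | L (s, y) ∈ U} := hUo.preimage (by fun_prop)
  exact ENNReal.toReal_pos (ho.measure_pos volume ⟨y, hy⟩).ne' (slice_lt_top hL hUb s).ne

lemma exists_rad (hL : IsSplit L) (hUo : IsOpen U) (hUb : Bornology.IsBounded U) {s : ℝ}
    {y : EE N} (hy : L (s, y) ∈ U) : ∃ r, 0 < r ∧ sl L U s = unitBallVol N * r ^ N := by
  have hp := sl_pos hL hUo hUb hy
  have ho := om_pos N
  rcases Nat.eq_zero_or_pos N with h | h
  · subst h
    refine ⟨1, one_pos, ?_⟩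
    have h1 : {y | L (s, y) ∈ U} = ball (0 : EE 0) 1 := by
      ext z
      rw [Subsingleton.elim z y]
      simp only [mem_ofPred_eq, hy, true_iff]
      rw [Subsingleton.elim y 0]; simp
    rw [sl, h1]; simp [unitBallVol]
  · refine ⟨(sl L U s / unitBallVol N) ^ ((N : ℝ)⁻¹), by positivity, ?_⟩
    rw [Real.rpow_inv_natCast_pow (by positivity) h.ne']
    field_simp

lemma fd_bound (hL : IsSplit L) (ℓ : EE (N + 1) →L[ℝ] ℝ) {t : ℝ} (ht : |t| ≤ 1) :
    -t * ℓ (L (1, 0)) + √(1 - t ^ 2) *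
      ‖ℓ.comp ((L : (ℝ × EE N) →L[ℝ] EE (N + 1)).comp (ContinuousLinearMap.inr ℝ ℝ (EE N)))‖
      ≤ ‖ℓ‖ := by
  set m := ℓ.comp ((L : (ℝ × EE N) →L[ℝ] EE (N + 1)).comp (ContinuousLinearMap.inr ℝ ℝ (EE N)))
  have ht2 : 0 ≤ 1 - t ^ 2 := by
    have := (sq_le_one_iff_abs_le_one t).2 ht
    linarith
  set w := √(1 - t ^ 2)
  have hw : w ^ 2 = 1 - t ^ 2 := Real.sq_sqrt ht2
  have hw0 : 0 ≤ w := Real.sqrt_nonneg _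
  have key : ∀ y : EE N, ‖y‖ ≤ 1 → -t * ℓ (L (1, 0)) + w * m y ≤ ‖ℓ‖ := by
    intro y hy
    have e1 : -t * ℓ (L (1, 0)) + w * m y = ℓ (L (-t, w • y)) := by
      have : ((-t, w • y) : ℝ × EE N) = (-t) • ((1 : ℝ), (0 : EE N)) + w • ((0 : ℝ), y) := by
        simp
      rw [this, map_add, map_add, map_smul, map_smul, map_smul, map_smul]
      simp [m]
    have e2 : ‖L (-t, w • y)‖ ≤ 1 := by
      have := hL.nrm (-t) (w • y)
      rw [norm_smul, mul_pow, Real.norm_eq_abs, sq_abs, hw] at this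
      have h1 : ‖y‖ ^ 2 ≤ 1 := by nlinarith [norm_nonneg y]
      have h2 : ‖L (-t, w • y)‖ ^ 2 ≤ 1 := by rw [this]; nlinarith
      nlinarith [norm_nonneg (L (-t, w • y))]
    rw [e1]
    calc _ ≤ ‖ℓ (L (-t, w • y))‖ := le_abs_self _
      _ ≤ ‖ℓ‖ * ‖L (-t, w • y)‖ := ℓ.le_opNorm _
      _ ≤ ‖ℓ‖ * 1 := by gcongr
      _ = _ := mul_one _
  have h2 : w * ‖m‖ ≤ ‖ℓ‖ + t * ℓ (L (1, 0)) := by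
    rcases hw0.eq_or_lt with h | h
    · have := key 0 (by simp)
      rw [← h] at this ⊢
      simp at this ⊢
      linarith
    rw [mul_comm, ← le_div_iff₀ h]
    have hpos : 0 ≤ ‖ℓ‖ + t * ℓ (L (1, 0)) := by
      have := key 0 (by simp)
      simp at this
      linarith
    apply m.opNorm_le_of_unit_norm (div_nonneg hpos hw0)
    intro y hy
    rw [le_div_iff₀ h, Real.norm_eq_abs]
    rcases abs_cases (m y) with ⟨h1, _⟩ | ⟨h1, _⟩
    · rw [h1]; linarith [key y hy.le]
    · have := key (-y) (by rw [norm_neg]; exact hy.le)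
      rw [map_neg] at this
      rw [h1]; linarith
  linarith

lemma step (hIC : IC N) (hL : IsSplit L) (hUo : IsOpen U) (hUb : Bornology.IsBounded U)
    {ρ : ℝ} (hρ : 0 < ρ)
    (hv : volume U ≤ ENNReal.ofReal (unitBallVol (N + 1) * ρ ^ (N + 1)))
    {T : ℝ → ℝ} (hT : IsTransp N ((ρ ^ (N + 1))⁻¹) (FF L U) T)
    {q : ℝ → ℝ} (hqm : Measurable q) {B : ℝ} (hqb : ∀ s, |q s| ≤ B)
    (hq : ∀ s r, 0 < r → |T s| < 1 → sl L U s = unitBallVol N * r ^ N →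
      q s ≤ (ρ ^ (N + 1))⁻¹ * sl L U s / bb N (T s) + √(1 - T s ^ 2) * (N / r))
    {h : EE (N + 1) → ℝ} (hh : ContDiff ℝ 1 h) (hc : HasCompactSupport h) (h0 : ∀ x, 0 ≤ h x)
    (hs : tsupport h ⊆ U) :
    ∫ x, q (L.symm x).1 * h x ≤ ∫ x, ‖fderiv ℝ h x‖ := by
  have hU := hUo.measurableSet
  set κ := (ρ ^ (N + 1))⁻¹ with hκ
  have hκ0 : 0 ≤ κ := by positivity
  by_cases hne : (tsupport h).Nonempty
  swap
  · have : h = 0 := by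
      rw [← tsupport_eq_empty_iff]; exact not_nonempty_iff_eq_empty.1 hne
    subst this
    simp
  -- the projection interval
  have hcont1 : Continuous fun x => (L.symm x).1 := by fun_prop
  obtain ⟨xa, hxa, hmin⟩ := hc.isCompact.exists_isMinOn hne hcont1.continuousOn
  obtain ⟨xb, hxb, hmax⟩ := hc.isCompact.exists_isMaxOn hne hcont1.continuousOn
  have hTa : |T (L.symm xa).1| < 1 := transp_abs_lt hL hUo hUb hρ hv hT (s := (L.symm xa).1)
    (y := (L.symm xa).2) (by simpa using hs hxa)
  have hTb : |T (L.symm xb).1| < 1 := transp_abs_lt hL hUo hUb hρ hv hT (s := (L.symm xb).1)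
    (y := (L.symm xb).2) (by simpa using hs hxb)
  obtain ⟨α, hαl, hα⟩ : ∃ α < (L.symm xa).1, -1 < T α := by
    have h1 : ∀ᶠ s in 𝓝 (L.symm xa).1, -1 < T s :=
      hT.cont.continuousAt.eventually (lt_mem_nhds (abs_lt.1 hTa).1)
    obtain ⟨ε, hε, hb⟩ := Metric.eventually_nhds_iff.1 h1
    refine ⟨(L.symm xa).1 - ε / 2, by linarith, hb ?_⟩
    rw [Real.dist_eq, sub_sub_cancel_left, abs_neg, abs_of_pos] <;> linarith
  obtain ⟨β, hβl, hβ⟩ : ∃ β > (L.symm xb).1, T β < 1 := by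
    have h1 : ∀ᶠ s in 𝓝 (L.symm xb).1, T s < 1 :=
      hT.cont.continuousAt.eventually (gt_mem_nhds (abs_lt.1 hTb).2)
    obtain ⟨ε, hε, hb⟩ := Metric.eventually_nhds_iff.1 h1
    refine ⟨(L.symm xb).1 + ε / 2, by linarith, hb ?_⟩
    rw [Real.dist_eq, add_sub_cancel_left, abs_of_pos] <;> linarith
  have hvan : ∀ s y, s ∉ Ioo α β → L (s, y) ∉ tsupport h := by
    intro s y hsn hmem
    have h1 := hmin hmem
    have h2 := hmax hmem
    simp at h1 h2
    exact hsn ⟨by linarith, by linarith⟩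
  obtain ⟨C, hC, hCs⟩ := sl_le hL hUb
  have hFl := FF_lip hL hU hUb hCs
  obtain ⟨c, hcp, hcb, -⟩ := hT.lip hα hβ hC hκ0 hFl
  -- functions on the product
  let ι : EE N →L[ℝ] EE (N + 1) :=
    (L : (ℝ × EE N) →L[ℝ] EE (N + 1)).comp (ContinuousLinearMap.inr ℝ ℝ (EE N))
  let g : ℝ × EE N → ℝ := fun z => h (L z)
  let A : ℝ × EE N → ℝ := fun z => ‖fderiv ℝ h (L z)‖
  let a1 : ℝ × EE N → ℝ := fun z => fderiv ℝ h (L z) (L (1, 0))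
  let a2 : ℝ × EE N → ℝ := fun z => ‖(fderiv ℝ h (L z)).comp ι‖
  let τ : ℝ → ℝ := fun s => κ * sl L U s / bb N (T s)
  have hfc : Continuous (fderiv ℝ h) := hh.continuous_fderiv one_ne_zero
  have hK : IsCompact (L ⁻¹' tsupport h) :=
    L.toHomeomorph.isCompact_preimage.2 hc.isCompact
  have hfz : ∀ x, x ∉ tsupport h → fderiv ℝ h x = 0 := fun x hx =>
    image_eq_zero_of_notMem_tsupport (fun hx' => hx (tsupport_fderiv_subset ℝ hx'))
  have hgc : Continuous g := hh.continuous.comp L.continuous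
  have hAc : Continuous A := (hfc.comp L.continuous).norm
  have ha1c : Continuous a1 := (hfc.comp L.continuous).clm_apply continuous_const
  have ha2c : Continuous a2 := ((hfc.comp L.continuous).clm_comp continuous_const).norm
  have hTc : Continuous fun z : ℝ × EE N => T z.1 := hT.cont.comp continuous_fst
  have cs : ∀ f : ℝ × EE N → ℝ, (∀ z, L z ∉ tsupport h → f z = 0) → HasCompactSupport f :=
    fun f hf => HasCompactSupport.intro hK (fun z hz => hf z hz)
  have hgi : Integrable g := hgc.integrable_of_hasCompactSupport
    (cs g fun z hz => image_eq_zero_of_notMem_tsupport (f := h) hz)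
  have hAi : Integrable A := hAc.integrable_of_hasCompactSupport
    (cs A fun z hz => by simp [A, hfz _ hz])
  have hTa1i : Integrable (fun z => T z.1 * a1 z) :=
    (hTc.mul ha1c).integrable_of_hasCompactSupport
    (cs _ fun z hz => by simp [a1, hfz _ hz])
  have hnTi : Integrable (fun z => -(T z.1 * a1 z)) := hTa1i.neg
  have hwa2i : Integrable (fun z => √(1 - T z.1 ^ 2) * a2 z) :=
    ((Real.continuous_sqrt.comp (continuous_const.sub (hTc.pow 2))).mul
      ha2c).integrable_of_hasCompactSupport
    (cs _ fun z hz => by simp [a2, hfz _ hz])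
  have hτm : Measurable τ := ((sl_meas hU).const_mul κ).div ((bb_cont N).comp hT.cont).measurable
  have hτi : Integrable (fun z => τ z.1 * g z) := by
    refine (hgi.norm.const_mul (κ * C / c)).mono'
      ((hτm.comp measurable_fst).mul hgc.measurable).aestronglyMeasurable
      (Eventually.of_forall fun z => ?_)
    rw [norm_mul]
    by_cases hz : z.1 ∈ Ioo α β
    · gcongr
      have h1 := hcb z.1 (Ioo_subset_Icc_self hz)
      have h2 := sl_nonneg (L := L) (U := U) z.1
      have h3 := hCs z.1
      rw [Real.norm_of_nonneg (div_nonneg (by positivity) (hcp.le.trans h1))]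
      gcongr
    · have : g z = 0 := image_eq_zero_of_notMem_tsupport (f := h) (hvan z.1 z.2 hz)
      simp [this]
  have hqi : Integrable (fun z => q z.1 * g z) := by
    refine (hgi.norm.const_mul B).mono'
      ((hqm.comp measurable_fst).mul hgc.measurable).aestronglyMeasurable
      (Eventually.of_forall fun z => ?_)
    rw [norm_mul]
    gcongr
    exact hqb z.1
  -- rewrite both sides
  rw [hL.integral_eq, hL.integral_eq]
  simp only [ContinuousLinearEquiv.symm_apply_apply]
  change ∫ z, q z.1 * g z ≤ ∫ z, A z
  -- the one-dimensional part
  have hone : ∫ z, -(T z.1 * a1 z) = ∫ z, τ z.1 * g z := by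
    rw [Measure.volume_eq_prod, integral_prod_symm _ hnTi, integral_prod_symm _ hτi]
    congr 1; ext y
    have hline : ContDiff ℝ 1 (fun s => g (s, y)) :=
      hh.comp (L.contDiff.comp (contDiff_id.prodMk contDiff_const))
    have := hT.by_parts hα hβ hC hκ0 hFl (FF_ae_deriv hL hU hUb) hline
      (fun s hs' => image_eq_zero_of_notMem_tsupport (f := h) (hvan s y hs'))
    have hder : ∀ s, deriv (fun s => g (s, y)) s = a1 (s, y) := by
      intro s
      have h1 : HasDerivAt (fun s : ℝ => L (s, y)) (L (1, 0)) s :=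
        (L : (ℝ × EE N) →L[ℝ] EE (N + 1)).hasFDerivAt.comp_hasDerivAt s
          ((hasDerivAt_id s).prodMk (hasDerivAt_const s y))
      exact ((hh.differentiable one_ne_zero (L (s, y))).hasFDerivAt.comp_hasDerivAt s h1).deriv
    simp only [hder] at this
    rw [integral_neg, this, neg_neg]
  have hlow : ∫ z, (τ z.1 * g z + √(1 - T z.1 ^ 2) * a2 z) ≤ ∫ z, A z := by
    rw [integral_add hτi hwa2i, ← hone, ← integral_add hnTi hwa2i]
    refine integral_mono (hnTi.add hwa2i) hAi fun z => ?_
    have := fd_bound hL (fderiv ℝ h (L z)) (abs_le.2 ⟨(hT.mem z.1).1, (hT.mem z.1).2⟩)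
    simp only [a1, a2, A, ι]
    linarith
  refine le_trans ?_ hlow
  have hsum : Integrable (fun z => τ z.1 * g z + √(1 - T z.1 ^ 2) * a2 z) := hτi.add hwa2i
  rw [Measure.volume_eq_prod, integral_prod _ hqi, integral_prod _ hsum]
  refine integral_mono hqi.integral_prod_left hsum.integral_prod_left fun s => ?_
  change ∫ y, q s * g (s, y) ≤ ∫ y, (τ s * g (s, y) + √(1 - T s ^ 2) * a2 (s, y))
  by_cases hys : ∃ y, L (s, y) ∈ U
  swap
  · push Not at hys
    have hg0 : ∀ y, g (s, y) = 0 := fun y =>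
      image_eq_zero_of_notMem_tsupport (f := h) (fun hx => hys y (hs hx))
    simp only [hg0, mul_zero, zero_add, integral_zero]
    exact integral_nonneg fun y => mul_nonneg (Real.sqrt_nonneg _) (norm_nonneg _)
  obtain ⟨y0, hy0⟩ := hys
  have hTs := transp_abs_lt hL hUo hUb hρ hv hT hy0
  obtain ⟨r, hr, hsr⟩ := exists_rad hL hUo hUb hy0
  have hqs := hq s r hr hTs hsr
  -- slice function
  have hsc : ContDiff ℝ 1 (fun y => g (s, y)) :=
    hh.comp (L.contDiff.comp (contDiff_const.prodMk contDiff_id))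
  have hKs : ∀ f : EE N → ℝ, (∀ y, L (s, y) ∉ tsupport h → f y = 0) → HasCompactSupport f := by
    intro f hf
    refine HasCompactSupport.intro (hK.image continuous_snd) fun y hy => hf y fun hm => hy ?_
    exact ⟨(s, y), hm, rfl⟩
  have hscs := hKs (fun y => g (s, y)) fun y hy => image_eq_zero_of_notMem_tsupport (f := h) hy
  have hsi : Integrable (fun y => g (s, y)) := hsc.continuous.integrable_of_hasCompactSupport hscs
  have ha2i : Integrable (fun y => a2 (s, y)) :=
    (ha2c.comp (by fun_prop : Continuous fun y : EE N => (s, y))).integrable_of_hasCompactSupport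
      (hKs _ fun y hy => by simp [a2, hfz _ hy])
  have hfd : ∀ y, ‖fderiv ℝ (fun y => g (s, y)) y‖ = a2 (s, y) := by
    intro y
    have h1 : HasFDerivAt (fun y : EE N => L (s, y)) ι y :=
      (L : (ℝ × EE N) →L[ℝ] EE (N + 1)).hasFDerivAt.comp y (hasFDerivAt_prodMk_right s y)
    exact congrArg norm ((hh.differentiable one_ne_zero (L (s, y))).hasFDerivAt.comp y h1).fderiv
  have hic := hIC {y | L (s, y) ∈ U} (fun y => g (s, y)) (hUo.preimage (by fun_prop)) (by
      obtain ⟨D, hD⟩ := hUb.subset_ball 0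
      exact isBounded_ball.subset (slice_subset hL hD s)) hsc hscs (fun y => h0 _) (by
      refine closure_minimal ?_ ((isClosed_tsupport h).preimage
        (by fun_prop : Continuous fun y : EE N => L (s, y))) |>.trans (preimage_mono hs)
      intro y hy
      exact subset_tsupport h (by simpa [g] using hy)) r hr (by
    rw [← hsr, sl, ENNReal.ofReal_toReal (slice_lt_top hL hUb s).ne])
  simp only [hfd] at hic
  have hG : 0 ≤ ∫ y, g (s, y) := integral_nonneg fun y => h0 _
  rw [integral_add (hsi.const_mul _) (ha2i.const_mul _), integral_const_mul, integral_const_mul,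
    integral_const_mul]
  have hw := Real.sqrt_nonneg (1 - T s ^ 2)
  have h3 := mul_le_mul_of_nonneg_left hic hw
  have h4 := mul_le_mul_of_nonneg_right hqs hG
  simp only [τ]
  nlinarith

end PartC2

section PartC3
open Filter Topology Module

lemma amgm (N : ℕ) {k y : ℝ} (hk : 0 < k) (hy : 0 < y) :
    (N + 1) * k ≤ k ^ (N + 1) / y ^ N + N * y := by
  obtain ⟨u, rfl⟩ : ∃ u, k = y * (1 + u) := ⟨k / y - 1, by field_simp; ring⟩
  have hu : -2 ≤ u := by
    have : 0 < 1 + u := by by_contra h; nlinarith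
    linarith
  have h1 := one_add_mul_le_pow hu (N + 1)
  have h2 : (y * (1 + u)) ^ (N + 1) / y ^ N = y * (1 + u) ^ (N + 1) := by
    rw [mul_pow, pow_succ y]; field_simp
  rw [h2]
  push_cast at h1
  nlinarith

lemma amgm_eq (N : ℕ) (hN : 1 ≤ N) {k y : ℝ} (hk : 0 < k) (hy : 0 < y)
    (h : k ^ (N + 1) / y ^ N + N * y ≤ (N + 1) * k) : y = k := by
  obtain ⟨u, rfl⟩ : ∃ u, k = y * (1 + u) := ⟨k / y - 1, by field_simp; ring⟩
  have hu : 0 < 1 + u := by by_contra h; nlinarith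
  have h1 := one_add_mul_le_pow (by linarith : -2 ≤ u) N
  have h2 : (y * (1 + u)) ^ (N + 1) / y ^ N = y * (1 + u) ^ (N + 1) := by
    rw [mul_pow, pow_succ y]; field_simp
  rw [h2, pow_succ] at h
  have h3 : (1 + N * u) * (1 + u) ≤ (1 + u) ^ N * (1 + u) := by gcongr
  have hN' : (1 : ℝ) ≤ N := by exact_mod_cast hN
  have h4 : y * (N * u ^ 2) ≤ 0 := by nlinarith
  have h5 : u ^ 2 = 0 := by
    by_contra hne
    have : 0 < u ^ 2 := by positivity
    have : 0 < y * (N * u ^ 2) := by positivity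
    linarith
  have : u = 0 := by simpa using h5
  rw [this]; ring

lemma tau_eq (N : ℕ) {ρ r t : ℝ} (hρ : 0 < ρ) (hr : 0 < r) (ht : |t| < 1) :
    (ρ ^ (N + 1))⁻¹ * (unitBallVol N * r ^ N) / bb N t =
      (1 / ρ) ^ (N + 1) / (√(1 - t ^ 2) / r) ^ N := by
  have h1 : 0 < 1 - t ^ 2 := by
    have := (sq_lt_one_iff_abs_lt_one t).2 ht
    linarith
  have := Real.sqrt_pos.2 h1
  have := om_pos N
  unfold bb
  rw [div_pow, div_pow, one_pow]
  field_simp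

lemma sqrt_pos_of {t : ℝ} (ht : |t| < 1) : 0 < √(1 - t ^ 2) := by
  apply Real.sqrt_pos.2
  have := (sq_lt_one_iff_abs_lt_one t).2 ht
  linarith

lemma q_ok (N : ℕ) {ρ r t : ℝ} (hρ : 0 < ρ) (hr : 0 < r) (ht : |t| < 1) :
    ((N + 1 : ℕ) : ℝ) / ρ ≤
      (ρ ^ (N + 1))⁻¹ * (unitBallVol N * r ^ N) / bb N t + √(1 - t ^ 2) * (N / r) := by
  rw [tau_eq N hρ hr ht]
  have := amgm N (k := 1 / ρ) (y := √(1 - t ^ 2) / r) (by positivity)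
    (div_pos (sqrt_pos_of ht) hr)
  push_cast
  calc ((N : ℝ) + 1) / ρ = (N + 1) * (1 / ρ) := by ring
    _ ≤ _ := this
    _ = _ := by ring

theorem IC_all (n : ℕ) : IC n := by
  induction n with
  | zero =>
    intro U h _ _ _ _ _ _ r hr _
    simp
  | succ N ih =>
    intro U h hUo hUb hh hc h0 hs r hr hv
    obtain ⟨L, hL, -⟩ := exists_split (N := N) (EuclideanSpace.single 0 1) (by simp)
    obtain ⟨T, hT⟩ := exists_transp hL hUo.measurableSet hUb hr hv
    have := step ih hL hUo hUb hr hv hT (q := fun _ => ((N + 1 : ℕ) : ℝ) / r) measurable_const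
      (fun _ => le_rfl) (fun s r' hr' hTs hsl => by
        rw [hsl]
        exact q_ok N hr hr' hTs) hh hc h0 hs
    rwa [integral_const_mul] at this

end PartC3

section PartD
open Filter Topology Module
variable {N : ℕ} {L : (ℝ × EE N) ≃L[ℝ] EE (N + 1)} {U : Set (EE (N + 1))}

/-- improved isoperimetric inequality -/
def Improved (N : ℕ) (U : Set (EE (N + 1))) (ρ : ℝ) : Prop :=
  ∃ δ : ℝ, 0 < δ ∧ ∃ E : Set (EE (N + 1)), MeasurableSet E ∧ E ⊆ U ∧ 0 < volume E ∧
    ∀ h : EE (N + 1) → ℝ, ContDiff ℝ 1 h → HasCompactSupport h → (∀ x, 0 ≤ h x) →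
      tsupport h ⊆ U →
      ∫ x, (((N + 1 : ℕ) : ℝ) / ρ + E.indicator (fun _ => δ) x) * h x ≤ ∫ x, ‖fderiv ℝ h x‖

lemma slice_nonempty {s : ℝ} (h : 0 < sl L U s) : ∃ y, L (s, y) ∈ U := by
  by_contra hne
  push Not at hne
  have : {y | L (s, y) ∈ U} = ∅ := by ext y; simp [hne y]
  rw [sl, this] at h
  simp at h

lemma dicho (hN : 1 ≤ N) (hL : IsSplit L) (hUo : IsOpen U) (hUb : Bornology.IsBounded U)
    {ρ : ℝ} (hρ : 0 < ρ)
    (hv : volume U ≤ ENNReal.ofReal (unitBallVol (N + 1) * ρ ^ (N + 1)))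
    {T : ℝ → ℝ} (hT : IsTransp N ((ρ ^ (N + 1))⁻¹) (FF L U) T) :
    Improved N U ρ ∨ ∀ᵐ s, 0 < sl L U s → sl L U s = ρ ^ N * bb N (T s) := by
  have hU := hUo.measurableSet
  have ho := om_pos N
  let rr : ℝ → ℝ := fun s => (sl L U s / unitBallVol N) ^ ((N : ℝ)⁻¹)
  have hrr : ∀ s r, 0 < r → sl L U s = unitBallVol N * r ^ N → rr s = r := by
    intro s r hr h
    simp only [rr, h]
    rw [mul_div_cancel_left₀ _ ho.ne', Real.pow_rpow_inv_natCast hr.le (by omega)]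
  let X : ℝ → ℝ := fun s => (ρ ^ (N + 1))⁻¹ * sl L U s / bb N (T s) + √(1 - T s ^ 2) * (N / rr s)
  have hslm := sl_meas (L := L) hU
  have hTm := hT.cont.measurable
  have hXm : Measurable X := by
    have h1 : Measurable rr := (hslm.div_const _).pow_const _
    have h2 : Measurable fun s => bb N (T s) := ((bb_cont N).comp hT.cont).measurable
    exact ((hslm.const_mul _).div h2).add
      (((measurable_const.sub (hTm.pow_const 2)).sqrt).mul (measurable_const.div h1))
  let Bad : ℕ → Set ℝ := fun k =>
    {s | 0 < sl L U s} ∩ {s | ((N + 1 : ℕ) : ℝ) / ρ + 1 / ((k : ℝ) + 1) ≤ X s}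
  have hBm : ∀ k, MeasurableSet (Bad k) := fun k =>
    (measurableSet_lt measurable_const hslm).inter (measurableSet_le measurable_const hXm)
  by_cases hb : ∃ k, 0 < volume (Bad k)
  · left
    obtain ⟨k, hk⟩ := hb
    have hδ : (0 : ℝ) < 1 / ((k : ℝ) + 1) := by positivity
    set δ : ℝ := 1 / ((k : ℝ) + 1) with hδd
    have hm1 : Measurable fun x => (L.symm x).1 := by fun_prop
    refine ⟨δ, hδ, U ∩ (fun x => (L.symm x).1) ⁻¹' Bad k, hU.inter (hm1 (hBm k)),
      inter_subset_left, ?_, ?_⟩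
    · rw [hL.vol_eq (hU.inter (hm1 (hBm k))), lintegral_pos_iff_support]
      · refine hk.trans_le (measure_mono fun s hs => ?_)
        have h1 : {y | L (s, y) ∈ U ∩ (fun x => (L.symm x).1) ⁻¹' Bad k} =
            {y | L (s, y) ∈ U} := by
          ext y; simp [hs]
        rw [Function.mem_support, h1]
        have h2 : 0 < sl L U s := hs.1
        rw [sl, ENNReal.toReal_pos_iff] at h2
        exact h2.1.ne'
      · exact measurable_measure_prodMk_left (L.continuous.measurable (hU.inter (hm1 (hBm k))))
    · intro h hh hc h0 hs
      have hst := step (IC_all N) hL hUo hUb hρ hv hT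
        (q := fun s => ((N + 1 : ℕ) : ℝ) / ρ + (Bad k).indicator (fun _ => δ) s)
        (measurable_const.add (measurable_const.indicator (hBm k)))
        (B := ((N + 1 : ℕ) : ℝ) / ρ + δ) (fun s => by
          have h1 : 0 ≤ (Bad k).indicator (fun _ => δ) s :=
            indicator_nonneg (fun _ _ => hδ.le) s
          have h2 : (Bad k).indicator (fun _ => δ) s ≤ δ :=
            indicator_le_self' (fun _ _ => hδ.le) s
          rw [abs_of_nonneg (by positivity)]
          linarith)
        (fun s r hr hTs hsl => by
          by_cases hsB : s ∈ Bad k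
          · rw [indicator_of_mem hsB]
            have := hsB.2
            simp only [mem_ofPred_eq, X, hrr s r hr hsl] at this
            exact this
          · rw [indicator_of_notMem hsB, add_zero, hsl]
            exact q_ok N hρ hr hTs) hh hc h0 hs
      refine le_trans (le_of_eq ?_) hst
      congr 1; ext x
      by_cases hx : x ∈ U
      · congr 2
        by_cases hxB : (L.symm x).1 ∈ Bad k
        · rw [indicator_of_mem hxB, indicator_of_mem (show x ∈ U ∩ (fun x => (L.symm x).1) ⁻¹' Bad k from ⟨hx, hxB⟩)]
        · rw [indicator_of_notMem hxB, indicator_of_notMem (fun hh' => hxB hh'.2)]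
      · have : h x = 0 := image_eq_zero_of_notMem_tsupport fun hx' => hx (hs hx')
        simp [this]
  · right
    push Not at hb
    have hnull : ∀ᵐ s, ∀ k, s ∉ Bad k := by
      rw [ae_all_iff]
      intro k
      exact measure_eq_zero_iff_ae_notMem.1 (le_antisymm (hb k) bot_le)
    filter_upwards [hnull] with s hs hpos
    obtain ⟨y, hy⟩ := slice_nonempty hpos
    have hTs := transp_abs_lt hL hUo hUb hρ hv hT hy
    obtain ⟨r, hr, hsl⟩ := exists_rad hL hUo hUb hy
    have hXle : X s ≤ ((N + 1 : ℕ) : ℝ) / ρ := by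
      refine le_of_forall_pos_le_add fun ε hε => ?_
      obtain ⟨k, hk⟩ := exists_nat_one_div_lt hε
      have h1 := hs k
      by_contra hcon
      push Not at hcon
      refine h1 ⟨hpos, ?_⟩
      simp only [mem_ofPred_eq]
      linarith
    have hw := sqrt_pos_of hTs
    simp only [X, hrr s r hr hsl] at hXle
    rw [hsl, tau_eq N hρ hr hTs] at hXle
    have h3 : √(1 - T s ^ 2) / r = 1 / ρ := amgm_eq N hN (by positivity) (by positivity) (by
      push_cast at hXle
      calc _ = (1 / ρ) ^ (N + 1) / (√(1 - T s ^ 2) / r) ^ N + √(1 - T s ^ 2) * (N / r) := by ring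
        _ ≤ _ := hXle
        _ = _ := by ring)
    have h4 : r = ρ * √(1 - T s ^ 2) := by
      field_simp at h3
      linarith
    rw [hsl, h4, bb, mul_pow]
    ring

lemma slab (hL : IsSplit L) (hUo : IsOpen U) (hUb : Bornology.IsBounded U)
    (hUc : IsConnected U) {ρ : ℝ} (hρ : 0 < ρ)
    (hv : volume U = ENNReal.ofReal (unitBallVol (N + 1) * ρ ^ (N + 1)))
    {T : ℝ → ℝ} (hT : IsTransp N ((ρ ^ (N + 1))⁻¹) (FF L U) T)
    (hae : ∀ᵐ s, 0 < sl L U s → sl L U s = ρ ^ N * bb N (T s)) :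
    ∃ m, (∀ x ∈ U, |(L.symm x).1 - m| < ρ) ∧ ∫ x in U, ((L.symm x).1 - m) = 0 := by
  have hU := hUo.measurableSet
  have hpc : Continuous fun x => (L.symm x).1 := by fun_prop
  let P : Set ℝ := (fun x => (L.symm x).1) '' U
  have hPc : IsConnected P := hUc.image _ hpc.continuousOn
  have hPo : IsOpen P := by
    have : P = Prod.fst '' (L.symm '' U) := by simp only [P, image_image]
    rw [this]
    exact isOpenMap_fst _ (L.symm.toHomeomorph.isOpenMap _ hUo)
  have hPb : Bornology.IsBounded P := by
    have : IsCompact ((fun x => (L.symm x).1) '' closure U) :=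
      hUb.isCompact_closure.image hpc
    exact this.isBounded.subset (image_mono subset_closure)
  set α := sInf P
  set β := sSup P
  have hsub : Ioo α β ⊆ P := hPc.Ioo_csInf_csSup_subset hPb.bddBelow hPb.bddAbove
  have hα : ∀ s ∈ P, α < s := by
    intro s hs
    obtain ⟨ε, hε, hb⟩ := Metric.isOpen_iff.1 hPo s hs
    have : s - ε / 2 ∈ P := hb (by
      rw [mem_ball, Real.dist_eq, sub_sub_cancel_left, abs_neg, abs_of_pos] <;> linarith)
    linarith [csInf_le hPb.bddBelow this]
  have hβ : ∀ s ∈ P, s < β := by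
    intro s hs
    obtain ⟨ε, hε, hb⟩ := Metric.isOpen_iff.1 hPo s hs
    have : s + ε / 2 ∈ P := hb (by
      rw [mem_ball, Real.dist_eq, add_sub_cancel_left, abs_of_pos] <;> linarith)
    linarith [le_csSup hPb.bddAbove this]
  obtain ⟨s0, hs0⟩ := hPc.nonempty
  have hαβ : α < β := (hα s0 hs0).trans (hβ s0 hs0)
  have hPm : ∀ s, s ∈ P ↔ ∃ y, L (s, y) ∈ U := by
    intro s
    constructor
    · rintro ⟨x, hx, rfl⟩
      exact ⟨(L.symm x).2, by simpa using hx⟩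
    · rintro ⟨y, hy⟩
      exact ⟨L (s, y), hy, by simp⟩
  have hslP : ∀ s ∈ P, 0 < sl L U s := fun s hs => by
    obtain ⟨y, hy⟩ := (hPm s).1 hs
    exact sl_pos hL hUo hUb hy
  have hsl0 : ∀ s, s ∉ P → sl L U s = 0 := fun s hs => by
    by_contra hne
    have := (sl_nonneg (L := L) (U := U) s).lt_of_ne' hne
    exact hs ((hPm s).2 (slice_nonempty this))
  have hTP : ∀ s ∈ P, |T s| < 1 := fun s hs => by
    obtain ⟨y, hy⟩ := (hPm s).1 hs
    exact transp_abs_lt hL hUo hUb hρ hv.le hT hy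
  -- derivative
  have hcb : Continuous fun s => ρ ^ N * bb N (T s) :=
    continuous_const.mul ((bb_cont N).comp hT.cont)
  have hFd : ∀ s ∈ Ioo α β, HasDerivAt (FF L U) (ρ ^ N * bb N (T s)) s := by
    intro s hs
    have h1 : HasDerivAt (fun u => FF L U s + ∫ t in s..u, ρ ^ N * bb N (T t))
        (ρ ^ N * bb N (T s)) s :=
      (intervalIntegral.integral_hasDerivAt_right (hcb.intervalIntegrable _ _)
        (hcb.stronglyMeasurableAtFilter _ _) hcb.continuousAt).const_add _
    refine h1.congr_of_eventuallyEq ?_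
    filter_upwards [isOpen_Ioo.mem_nhds hs] with u hu
    have h2 := FF_sub hL hU hUb s u
    have h3 : ∫ t in s..u, sl L U t = ∫ t in s..u, ρ ^ N * bb N (T t) := by
      apply intervalIntegral.integral_congr_ae
      filter_upwards [hae] with t ht htm
      refine ht (hslP t (hsub ?_))
      rw [uIoc, mem_Ioc] at htm
      exact ⟨(lt_min hs.1 hu.1).trans htm.1, htm.2.trans_lt (max_lt hs.2 hu.2)⟩
    rw [← h3]; linarith
  have hTd : ∀ s ∈ Ioo α β, HasDerivAt T (1 / ρ) s := by
    intro s hs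
    have h1 := hT.hasDerivAt (hTP s (hsub hs)) (hFd s hs)
    convert h1 using 1
    have := bb_pos N (hTP s (hsub hs))
    rw [pow_succ]
    field_simp
  set m := s0 - ρ * T s0
  have hs0' : s0 ∈ Ioo α β := ⟨hα s0 hs0, hβ s0 hs0⟩
  have hTlin : EqOn T (fun s => (s - m) / ρ) (Ioo α β) := by
    have hd : ∀ s ∈ Ioo α β, HasDerivAt (fun s => T s - (s - m) / ρ) 0 s := by
      intro s hs
      have := (hTd s hs).sub (((hasDerivAt_id s).sub_const m).div_const ρ)
      rw [sub_self] at this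
      exact this
    intro s hs
    have := (isOpen_Ioo (a := α) (b := β)).is_const_of_deriv_eq_zero
      (isPreconnected_Ioo) (fun t ht => (hd t ht).differentiableAt.differentiableWithinAt)
      (fun t ht => (hd t ht).deriv) hs hs0'
    simp only [m] at this ⊢
    field_simp at this ⊢
    linarith
  have hTlin' : EqOn T (fun s => (s - m) / ρ) (Icc α β) := by
    have := hTlin.closure hT.cont (by fun_prop)
    rwa [closure_Ioo hαβ.ne] at this
  have om := om_pos (N + 1)
  have hTα : T α = -1 := by
    have h1 : FF L U α = 0 := by
      have h2 := FF_ofReal hL hU hUb α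
      have h3 : U ∩ {x | (L.symm x).1 ≤ α} = ∅ := by
        ext x
        simp only [mem_inter_iff, mem_ofPred_eq, mem_empty_iff_false, iff_false, not_and, not_le]
        exact fun hx => hα _ ⟨x, hx, rfl⟩
      rw [h3, measure_empty, ENNReal.ofReal_eq_zero] at h2
      exact le_antisymm h2 (FF_nonneg α)
    by_contra hne
    have h2 : -1 < T α := (hT.mem α).1.lt_of_ne' hne
    have := bb_integral_lt N le_rfl h2 (hT.mem α).2
    rw [hT.eq α, h1] at this
    simp at this
  have hTβ : T β = 1 := by
    have h1 : FF L U β = unitBallVol (N + 1) * ρ ^ (N + 1) := by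
      have h2 := FF_ofReal hL hU hUb β
      have h3 : U ∩ {x | (L.symm x).1 ≤ β} = U := by
        apply inter_eq_left.2
        intro x hx
        simpa using (hβ _ ⟨x, hx, rfl⟩).le
      rw [h3, hv, ENNReal.ofReal_eq_ofReal_iff (FF_nonneg β) (by positivity)] at h2
      exact h2
    by_contra hne
    have h2 : T β < 1 := (hT.mem β).2.lt_of_ne hne
    have := bb_integral_lt N (hT.mem β).1 h2 le_rfl
    have h3 := om_succ N
    change _ = ∫ τ in (-1 : ℝ)..1, bb N τ at h3
    rw [hT.eq β, h1, ← h3] at this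
    field_simp at this
    exact lt_irrefl _ this
  have hαm : α = m - ρ := by
    have := hTlin' (left_mem_Icc.2 hαβ.le)
    rw [hTα] at this
    simp only at this
    field_simp at this
    linarith
  have hβm : β = m + ρ := by
    have := hTlin' (right_mem_Icc.2 hαβ.le)
    rw [hTβ] at this
    simp only at this
    field_simp at this
    linarith
  refine ⟨m, fun x hx => ?_, ?_⟩
  · have h1 := hα _ ⟨x, hx, rfl⟩
    have h2 := hβ _ ⟨x, hx, rfl⟩
    simp only at h1 h2
    rw [abs_lt]; constructor <;> linarith
  · -- the integral
    have hint : Integrable (U.indicator fun x => (L.symm x).1 - m) := by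
      rw [integrable_indicator_iff hU]
      refine Measure.integrableOn_of_bounded (M := ρ) hUb.measure_lt_top.ne
        (by fun_prop) ?_
      refine (ae_restrict_iff' hU).2 (Eventually.of_forall fun x hx => ?_)
      have h1 := hα _ ⟨x, hx, rfl⟩
      have h2 := hβ _ ⟨x, hx, rfl⟩
      simp only at h1 h2
      rw [Real.norm_eq_abs, abs_le]; constructor <;> linarith
    rw [← integral_indicator hU, hL.integral_eq]
    have hint2 : Integrable (fun z => U.indicator (fun x => (L.symm x).1 - m) (L z)) :=
      (hL.mp.integrable_comp_emb L.toHomeomorph.measurableEmbedding).2 hint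
    rw [Measure.volume_eq_prod, integral_prod _ hint2]
    have hin : ∀ s, ∫ y, U.indicator (fun x => (L.symm x).1 - m) (L (s, y)) =
        (s - m) * sl L U s := by
      intro s
      have : (fun y => U.indicator (fun x => (L.symm x).1 - m) (L (s, y))) =
          {y | L (s, y) ∈ U}.indicator (fun _ => s - m) := by
        ext y
        by_cases hy : L (s, y) ∈ U
        · rw [indicator_of_mem hy, indicator_of_mem (by simpa using hy)]; simp
        · rw [indicator_of_notMem hy, indicator_of_notMem (by simpa using hy)]
      have hms : MeasurableSet {y | L (s, y) ∈ U} :=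
        (hUo.preimage (by fun_prop : Continuous fun y : EE N => L (s, y))).measurableSet
      rw [this, integral_indicator_const _ hms]
      simp [sl, Measure.real, mul_comm]
    simp only [hin]
    have hcong : ∫ s, (s - m) * sl L U s =
        ∫ s, (s - m) * (Ioo α β).indicator (fun s => ρ ^ N * bb N ((s - m) / ρ)) s := by
      apply integral_congr_ae
      filter_upwards [hae] with s hs
      by_cases hsm : s ∈ Ioo α β
      · rw [indicator_of_mem hsm, hs (hslP s (hsub hsm)), hTlin hsm]
      · rw [indicator_of_notMem hsm, hsl0 s fun h => hsm ⟨hα s h, hβ s h⟩]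
    rw [hcong]
    set Φ : ℝ → ℝ :=
      fun s => (s - m) * (Ioo α β).indicator (fun s => ρ ^ N * bb N ((s - m) / ρ)) s with hΦ
    have hodd : ∀ s, Φ (2 * m - s) = - Φ s := by
      intro s
      have h1 : (2 * m - s ∈ Ioo α β) ↔ s ∈ Ioo α β := by
        rw [mem_Ioo, mem_Ioo, hαm, hβm]
        constructor <;> rintro ⟨h1, h2⟩ <;> constructor <;> linarith
      by_cases hs : s ∈ Ioo α β
      · simp only [hΦ, indicator_of_mem hs, indicator_of_mem (h1.2 hs)]
        have h2 : bb N ((2 * m - s - m) / ρ) = bb N ((s - m) / ρ) := by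
          unfold bb
          congr 4
          ring
        rw [h2]; ring
      · simp only [hΦ, indicator_of_notMem hs, indicator_of_notMem (fun h => hs (h1.1 h))]
        simp
    have h2 := integral_sub_left_eq_self Φ volume (2 * m)
    simp only [hodd, integral_neg] at h2
    linarith

end PartD

section PartD2
open Filter Topology Module

lemma eq_ball_of_full {n : ℕ} {Ω : Set (EE n)} (hΩo : IsOpen Ω) (hbd : HasC1Boundary Ω)
    {c : EE n} {ρ : ℝ} (hsub : Ω ⊆ ball c ρ) (hv : volume (ball c ρ) ≤ volume Ω) :
    Ω = ball c ρ := by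
  have hnull : volume (ball c ρ \ Ω) = 0 := by
    rw [measure_sdiff hsub hΩo.measurableSet.nullMeasurableSet
      ((measure_mono hsub).trans_lt measure_ball_lt_top).ne]
    exact tsub_eq_zero_of_le hv
  have hopen : ∀ V : Set (EE n), IsOpen V → V ⊆ ball c ρ \ Ω → V = ∅ := by
    intro V hV hVs
    by_contra hne
    have := hV.measure_pos volume (nonempty_iff_ne_empty.2 hne)
    exact absurd (measure_mono_null hVs hnull) this.ne'
  refine hsub.antisymm fun x hx => ?_
  by_contra hxΩ
  have hcl : x ∈ closure Ω := by
    by_contra hxc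
    have := hopen (ball c ρ ∩ (closure Ω)ᶜ) (isOpen_ball.inter isClosed_closure.isOpen_compl)
      (fun z hz => ⟨hz.1, fun h => hz.2 (subset_closure h)⟩)
    have h2 : x ∈ ball c ρ ∩ (closure Ω)ᶜ := ⟨hx, hxc⟩
    rw [this] at h2
    exact h2
  have hfr : x ∈ frontier Ω := by
    rw [hΩo.frontier_eq]; exact ⟨hcl, hxΩ⟩
  obtain ⟨V, f, hVo, hxV, hf, hfd, hV⟩ := hbd x hfr
  have hfx : 0 ≤ f x := by
    by_contra h
    push Not at h
    have : x ∈ Ω ∩ V := by rw [hV]; simpa using ⟨hxV, h⟩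
    exact hxΩ this.1
  have hem := hopen ((ball c ρ ∩ V) ∩ {y | 0 < f y})
    ((isOpen_ball.inter hVo).inter (isOpen_lt continuous_const hf.continuous))
    (fun z hz => ⟨hz.1.1, fun h => by
      have h1 : z ∈ Ω ∩ V := ⟨h, hz.1.2⟩
      rw [hV] at h1
      have h2 := hz.2
      simp only [mem_ofPred_eq] at h1 h2
      linarith [h1.2]⟩)
  have hmax : IsLocalMax f x := by
    filter_upwards [(isOpen_ball.inter hVo).mem_nhds ⟨hx, hxV⟩] with z hz
    by_contra h
    push Not at h
    have : z ∈ (ball c ρ ∩ V) ∩ {y | 0 < f y} := ⟨hz, by simpa using hfx.trans_lt h⟩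
    rw [hem] at this
    exact this
  exact hfd x hxV hmax.fderiv_eq_zero

theorem rigidity {N : ℕ} (hN : 1 ≤ N) {Ω : Set (EE (N + 1))} (hΩo : IsOpen Ω)
    (hΩc : IsConnected Ω) (hΩb : Bornology.IsBounded Ω) (hbd : HasC1Boundary Ω)
    {ρ : ℝ} (hρ : 0 < ρ)
    (hv : volume Ω = ENNReal.ofReal (unitBallVol (N + 1) * ρ ^ (N + 1))) :
    (∃ c, Ω = ball c ρ) ∨ Improved N Ω ρ := by
  by_cases himp : Improved N Ω ρ
  · exact Or.inr himp
  left
  have hvpos : 0 < (volume Ω).toReal :=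
    ENNReal.toReal_pos (hΩo.measure_pos volume hΩc.nonempty).ne' hΩb.measure_lt_top.ne
  have hint : IntegrableOn (fun x : EE (N + 1) => x) Ω := by
    obtain ⟨D, hD⟩ := hΩb.exists_norm_le
    exact Measure.integrableOn_of_bounded (M := D) hΩb.measure_lt_top.ne (by fun_prop)
      ((ae_restrict_iff' hΩo.measurableSet).2 (Eventually.of_forall fun x hx => hD x hx))
  let c : EE (N + 1) := ((volume Ω).toReal)⁻¹ • ∫ x in Ω, x
  have hsub : Ω ⊆ ball c ρ := by
    intro x hx
    rw [mem_ball, dist_eq_norm]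
    by_cases hxc : x = c
    · rw [hxc]; simpa using hρ
    have hpos : 0 < ‖x - c‖ := norm_pos_iff.2 (sub_ne_zero.2 hxc)
    obtain ⟨L, hL, hLθ⟩ := exists_split (‖x - c‖⁻¹ • (x - c))
      (by rw [norm_smul, norm_inv, norm_norm, inv_mul_cancel₀ hpos.ne'])
    obtain ⟨T, hT⟩ := exists_transp hL hΩo.measurableSet hΩb hρ hv.le
    have hae := (dicho hN hL hΩo hΩb hρ hv.le hT).resolve_left himp
    obtain ⟨m, hm1, hm2⟩ := slab hL hΩo hΩb hΩc hρ hv hT hae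
    let φ : EE (N + 1) →L[ℝ] ℝ :=
      (ContinuousLinearMap.fst ℝ ℝ (EE N)).comp (L.symm : EE (N + 1) →L[ℝ] (ℝ × EE N))
    have hφ : ∀ x, (L.symm x).1 = φ x := fun x => rfl
    have hcm : φ c = m := by
      simp only [hφ] at hm2
      rw [integral_sub (φ.integrable_comp hint) (integrableOn_const hΩb.measure_lt_top.ne),
        ContinuousLinearMap.integral_comp_comm φ hint] at hm2
      simp only [integral_const, smul_eq_mul, Measure.real, Measure.restrict_apply_univ] at hm2
      simp only [c, map_smul, smul_eq_mul]
      field_simp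
      linarith
    have h1 := hm1 x hx
    rw [hφ, ← hcm, ← map_sub] at h1
    have h2 : φ (x - c) = ‖x - c‖ := by
      have h3 : x - c = ‖x - c‖ • L (1, 0) := by
        rw [hLθ, smul_smul, mul_inv_cancel₀ hpos.ne', one_smul]
      rw [h3, map_smul, ← hφ]
      simp
      rw [hLθ, norm_smul, norm_smul, norm_inv, norm_norm, inv_mul_cancel₀ hpos.ne', mul_one]
    rw [h2, abs_of_pos hpos] at h1
    exact h1
  refine ⟨c, eq_ball_of_full hΩo hbd hsub ?_⟩
  rw [hv, vol_ball c hρ.le (Or.inr hρ)]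

end PartD2

section PartE
open Filter Topology Module

/-- trapezoid cut-off -/
def eta (s t ε u : ℝ) : ℝ := max 0 (min 1 (min ((u - (s + ε)) / ε) ((t - ε - u) / ε)))

lemma eta_cont (s t ε : ℝ) : Continuous (eta s t ε) := by unfold eta; fun_prop

lemma eta_nonneg (s t ε u : ℝ) : 0 ≤ eta s t ε u := le_max_left _ _

lemma eta_le (s t ε u : ℝ) : eta s t ε u ≤ 1 := max_le zero_le_one (min_le_left _ _)

lemma eta_zero {s t ε u : ℝ} (hε : 0 < ε) (h : u ≤ s + ε ∨ t - ε ≤ u) : eta s t ε u = 0 := by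
  unfold eta
  apply max_eq_left
  rcases h with h | h
  · exact (min_le_right _ _).trans ((min_le_left _ _).trans
      (div_nonpos_of_nonpos_of_nonneg (by linarith) hε.le))
  · exact (min_le_right _ _).trans ((min_le_right _ _).trans
      (div_nonpos_of_nonpos_of_nonneg (by linarith) hε.le))

lemma eta_one {s t ε u : ℝ} (hε : 0 < ε) (h1 : s + 2 * ε ≤ u) (h2 : u ≤ t - 2 * ε) :
    eta s t ε u = 1 := by
  unfold eta
  rw [min_eq_left, max_eq_right zero_le_one]
  apply le_min <;> rw [le_div_iff₀ hε] <;> linarith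

def Psi (s t ε u : ℝ) : ℝ := ∫ v in (0 : ℝ)..u, eta s t ε v

lemma Psi_deriv (s t ε u : ℝ) : HasDerivAt (Psi s t ε) (eta s t ε u) u :=
  intervalIntegral.integral_hasDerivAt_right ((eta_cont s t ε).intervalIntegrable _ _)
    ((eta_cont s t ε).stronglyMeasurableAtFilter _ _) (eta_cont s t ε).continuousAt

lemma Psi_C1 (s t ε : ℝ) : ContDiff ℝ 1 (Psi s t ε) := by
  rw [contDiff_one_iff_deriv]
  refine ⟨fun u => (Psi_deriv s t ε u).differentiableAt, ?_⟩
  have : deriv (Psi s t ε) = eta s t ε := funext fun u => (Psi_deriv s t ε u).deriv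
  rw [this]; exact eta_cont s t ε

lemma Psi_zero {s t ε u : ℝ} (hs : 0 ≤ s) (hε : 0 < ε) (h : u ≤ s + ε) : Psi s t ε u = 0 := by
  unfold Psi
  rw [intervalIntegral.integral_congr (g := fun _ => 0)]
  · simp
  · intro v hv
    refine eta_zero hε (Or.inl ?_)
    rcases le_total 0 u with h0 | h0
    · rw [uIcc_of_le h0] at hv; linarith [hv.2]
    · rw [uIcc_of_ge h0] at hv; linarith [hv.2]

lemma Psi_nonneg {s t ε : ℝ} (hs : 0 ≤ s) (hε : 0 < ε) (u : ℝ) : 0 ≤ Psi s t ε u := by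
  rcases le_total 0 u with h0 | h0
  · exact intervalIntegral.integral_nonneg h0 fun v _ => eta_nonneg _ _ _ _
  · rw [Psi_zero hs hε (by linarith)]

lemma Psi_ge {s t ε u : ℝ} (hs : 0 ≤ s) (hε : 0 < ε) (hst : 4 * ε ≤ t - s) (h : t ≤ u) :
    t - s - 4 * ε ≤ Psi s t ε u := by
  have hi := fun a b => (eta_cont s t ε).intervalIntegrable (μ := volume) a b
  unfold Psi
  rw [← intervalIntegral.integral_add_adjacent_intervals (hi 0 (s + 2 * ε)) (hi _ u),
    ← intervalIntegral.integral_add_adjacent_intervals (hi (s + 2 * ε) (t - 2 * ε)) (hi _ u)]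
  have h1 : 0 ≤ ∫ v in (0 : ℝ)..(s + 2 * ε), eta s t ε v :=
    intervalIntegral.integral_nonneg (by linarith) fun v _ => eta_nonneg _ _ _ _
  have h2 : 0 ≤ ∫ v in (t - 2 * ε)..u, eta s t ε v :=
    intervalIntegral.integral_nonneg (by linarith) fun v _ => eta_nonneg _ _ _ _
  have h3 : ∫ v in (s + 2 * ε)..(t - 2 * ε), eta s t ε v = t - s - 4 * ε := by
    rw [intervalIntegral.integral_congr (g := fun _ => (1 : ℝ))]
    · simp; ring
    · intro v hv
      rw [uIcc_of_le (by linarith)] at hv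
      exact eta_one hε hv.1 hv.2
  linarith

lemma band {n : ℕ} {f : EE n → ℝ} (hf : ContDiff ℝ 1 f) (hc : HasCompactSupport f)
    {w : EE n → ℝ} (hwm : Measurable w) (hw0 : ∀ x, 0 ≤ w x) {B : ℝ} (hwB : ∀ x, w x ≤ B)
    {s t : ℝ} (hs : 0 ≤ s) (hst : s < t)
    (hiso : ∀ h : EE n → ℝ, ContDiff ℝ 1 h → HasCompactSupport h → (∀ x, 0 ≤ h x) →
      tsupport h ⊆ {x | s < |f x|} → ∫ x, w x * h x ≤ ∫ x, ‖fderiv ℝ h x‖) :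
    (t - s) * ∫ x in {x | t ≤ |f x|}, w x ≤ ∫ x in {x | s < |f x| ∧ |f x| < t}, ‖fderiv ℝ f x‖ := by
  have hfc := hf.continuous
  have hdc : Continuous (fderiv ℝ f) := hf.continuous_fderiv one_ne_zero
  have hmt : MeasurableSet {x | t ≤ |f x|} := (isClosed_le continuous_const hfc.abs).measurableSet
  have hmb : MeasurableSet {x | s < |f x| ∧ |f x| < t} :=
    ((isOpen_lt continuous_const hfc.abs).inter (isOpen_lt hfc.abs continuous_const)).measurableSet
  have hdi : Integrable fun x => ‖fderiv ℝ f x‖ :=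
    hdc.norm.integrable_of_hasCompactSupport (hc.fderiv ℝ).norm
  -- main inequality for ε
  have key : ∀ ε, 0 < ε → 4 * ε ≤ t - s → (t - s - 4 * ε) * ∫ x in {x | t ≤ |f x|}, w x ≤
      ∫ x in {x | s < |f x| ∧ |f x| < t}, ‖fderiv ℝ f x‖ := by
    intro ε hε h4
    let h : EE n → ℝ := fun x => Psi s t ε (f x) + Psi s t ε (- f x)
    have hh : ContDiff ℝ 1 h := ((Psi_C1 s t ε).comp hf).add ((Psi_C1 s t ε).comp hf.neg)
    have hz : ∀ x, |f x| ≤ s + ε → h x = 0 := by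
      intro x hx
      have := abs_le.1 hx
      simp only [h]
      rw [Psi_zero hs hε this.2, Psi_zero hs hε (by linarith [this.1]), add_zero]
    have hts : tsupport h ⊆ {x | s + ε ≤ |f x|} := by
      refine closure_minimal (fun x hx => ?_) (isClosed_le continuous_const hfc.abs)
      by_contra hne
      simp only [mem_ofPred_eq, not_le] at hne
      exact hx (hz x hne.le)
    have hhc : HasCompactSupport h := by
      refine HasCompactSupport.intro hc.isCompact fun x hx => hz x ?_
      rw [image_eq_zero_of_notMem_tsupport hx]; simp; linarith
    have h0 : ∀ x, 0 ≤ h x := fun x => add_nonneg (Psi_nonneg hs hε _) (Psi_nonneg hs hε _)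
    have hd : ∀ x, fderiv ℝ h x = (eta s t ε (f x) - eta s t ε (- f x)) • fderiv ℝ f x := by
      intro x
      have hfx := (hf.differentiable one_ne_zero x).hasFDerivAt
      have h1 := (Psi_deriv s t ε (f x)).comp_hasFDerivAt x hfx
      have h2 := (Psi_deriv s t ε (- f x)).comp_hasFDerivAt x hfx.neg
      refine ((h1.add h2).fderiv).trans ?_
      rw [sub_smul, smul_neg, sub_eq_add_neg]
    have hi := hiso h hh hhc h0 (fun x hx => by
      have := hts hx
      simp only [mem_ofPred_eq] at this ⊢
      linarith)
    have hhi : Integrable h := hh.continuous.integrable_of_hasCompactSupport hhc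
    have hwhi : Integrable fun x => w x * h x := by
      refine (hhi.const_mul B).mono' (hwm.mul hh.continuous.measurable).aestronglyMeasurable
        (Eventually.of_forall fun x => ?_)
      rw [Real.norm_of_nonneg (mul_nonneg (hw0 x) (h0 x))]
      exact mul_le_mul_of_nonneg_right (hwB x) (h0 x)
    have hfin : volume {x | t ≤ |f x|} < ⊤ := by
      refine (measure_mono (fun x hx => ?_)).trans_lt (hc.isCompact.measure_lt_top)
      by_contra hne
      simp only [mem_ofPred_eq, image_eq_zero_of_notMem_tsupport hne, abs_zero] at hx
      linarith
    have hwi : IntegrableOn w {x | t ≤ |f x|} :=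
      Measure.integrableOn_of_bounded (M := B) hfin.ne hwm.aestronglyMeasurable
        (Eventually.of_forall fun x => by rw [Real.norm_of_nonneg (hw0 x)]; exact hwB x)
    calc (t - s - 4 * ε) * ∫ x in {x | t ≤ |f x|}, w x
        = ∫ x in {x | t ≤ |f x|}, (t - s - 4 * ε) * w x := (integral_const_mul _ _).symm
      _ ≤ ∫ x in {x | t ≤ |f x|}, w x * h x := by
          refine setIntegral_mono_on (hwi.const_mul _) hwhi.integrableOn hmt fun x hx => ?_
          rw [mul_comm]
          refine mul_le_mul_of_nonneg_left ?_ (hw0 x)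
          simp only [mem_ofPred_eq] at hx
          rcases le_abs.1 hx with h1 | h1
          · exact (Psi_ge hs hε h4 h1).trans (le_add_of_nonneg_right (Psi_nonneg hs hε _))
          · exact (Psi_ge hs hε h4 h1).trans (le_add_of_nonneg_left (Psi_nonneg hs hε _))
      _ ≤ ∫ x, w x * h x := setIntegral_le_integral hwhi
          (Eventually.of_forall fun x => mul_nonneg (hw0 x) (h0 x))
      _ ≤ ∫ x, ‖fderiv ℝ h x‖ := hi
      _ ≤ ∫ x, {x | s < |f x| ∧ |f x| < t}.indicator (fun x => ‖fderiv ℝ f x‖) x := by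
          refine integral_mono ((hh.continuous_fderiv one_ne_zero).norm.integrable_of_hasCompactSupport
            (hhc.fderiv ℝ).norm) (hdi.indicator hmb) fun x => ?_
          simp only
          rw [hd x, norm_smul]
          by_cases hx : x ∈ {x | s < |f x| ∧ |f x| < t}
          · rw [indicator_of_mem hx]
            refine mul_le_of_le_one_left (norm_nonneg _) ?_
            rw [Real.norm_eq_abs, abs_le]
            have := eta_nonneg s t ε (f x)
            have := eta_nonneg s t ε (-f x)
            have := eta_le s t ε (f x)
            have := eta_le s t ε (-f x)
            constructor <;> linarith
          · rw [indicator_of_notMem hx]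
            simp only [mem_ofPred_eq, not_and_or, not_lt] at hx
            have h1 : eta s t ε (f x) = 0 ∧ eta s t ε (-f x) = 0 := by
              rcases hx with hx | hx
              · have := abs_le.1 hx
                exact ⟨eta_zero hε (Or.inl (by linarith)), eta_zero hε (Or.inl (by linarith))⟩
              · rcases le_abs.1 hx with h1 | h1
                · exact ⟨eta_zero hε (Or.inr (by linarith)), eta_zero hε (Or.inl (by linarith))⟩
                · exact ⟨eta_zero hε (Or.inl (by linarith)), eta_zero hε (Or.inr (by linarith))⟩
            rw [h1.1, h1.2]; simp
      _ = _ := integral_indicator hmb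
  have hW : 0 ≤ ∫ x in {x | t ≤ |f x|}, w x := integral_nonneg hw0
  have hlim : Tendsto (fun ε : ℝ => (t - s - 4 * ε) * ∫ x in {x | t ≤ |f x|}, w x) (𝓝[>] 0)
      (𝓝 ((t - s - 4 * 0) * ∫ x in {x | t ≤ |f x|}, w x)) := by
    refine Tendsto.mono_left (Continuous.tendsto (by fun_prop) 0) nhdsWithin_le_nhds
  rw [mul_zero, sub_zero] at hlim
  refine le_of_tendsto hlim ?_
  have : ∀ᶠ ε : ℝ in 𝓝[>] 0, ε < (t - s) / 4 :=
    nhdsWithin_le_nhds (gt_mem_nhds (by linarith))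
  filter_upwards [this, self_mem_nhdsWithin] with ε h1 h2
  exact key ε h2 (by linarith)

end PartE

section PartE2
open Filter Topology Module

lemma mem_tsupp_of_lt {n : ℕ} {f : EE n → ℝ} {s : ℝ} (hs : 0 ≤ s) :
    {x | s < |f x|} ⊆ tsupport f := by
  intro x hx
  by_contra hne
  simp only [mem_ofPred_eq, image_eq_zero_of_notMem_tsupport hne, abs_zero] at hx
  linarith

lemma band_iso {n : ℕ} {f : EE n → ℝ} (hf : ContDiff ℝ 1 f) (hc : HasCompactSupport f)
    {s t R : ℝ} (hs : 0 ≤ s) (hst : s < t) (hR : 0 < R)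
    (hv : volume {x | s < |f x|} ≤ ENNReal.ofReal (unitBallVol n * R ^ n)) :
    (n / R) * (t - s) * volume.real {x | t ≤ |f x|} ≤
      ∫ x in {x | s < |f x| ∧ |f x| < t}, ‖fderiv ℝ f x‖ := by
  have := band hf hc (w := fun _ => (n : ℝ) / R) measurable_const (fun _ => by positivity)
    (B := n / R) (fun _ => le_rfl) hs hst (fun h hh hhc h0 hts => by
      rw [integral_const_mul]
      exact IC_all n _ h (isOpen_lt continuous_const hf.continuous.abs)
        (hc.isCompact.isBounded.subset (mem_tsupp_of_lt hs)) hh hhc h0 hts R hR hv)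
  simp only [integral_const, smul_eq_mul, measureReal_restrict_apply_univ] at this
  calc _ = (t - s) * (volume.real {x | t ≤ |f x|} * (n / R)) := by ring
    _ ≤ _ := this

lemma sq_int_le {n : ℕ} {G : EE n → ℝ} (hGm : Measurable G) (hG0 : ∀ x, 0 ≤ G x) {M : ℝ}
    (hGM : ∀ x, G x ≤ M) {S : Set (EE n)} (hfin : volume S ≠ ⊤) :
    (∫ x in S, G x) ^ 2 ≤ volume.real S * ∫ x in S, G x ^ 2 := by
  have hi1 : IntegrableOn G S := Measure.integrableOn_of_bounded (M := M) hfin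
    hGm.aestronglyMeasurable (Eventually.of_forall fun x => by
      rw [Real.norm_of_nonneg (hG0 x)]; exact hGM x)
  have hi2 : IntegrableOn (fun x => G x ^ 2) S := Measure.integrableOn_of_bounded (M := M ^ 2) hfin
    (hGm.pow_const 2).aestronglyMeasurable (Eventually.of_forall fun x => by
      rw [Real.norm_of_nonneg (sq_nonneg _)]
      have := hG0 x; have := hGM x; gcongr)
  set I := ∫ x in S, G x
  set J := ∫ x in S, G x ^ 2
  set m := volume.real S
  have hm : 0 ≤ m := measureReal_nonneg
  have key : ∀ l : ℝ, 2 * l * I ≤ J + l ^ 2 * m := by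
    intro l
    have h1 : ∫ x in S, 2 * l * G x ≤ ∫ x in S, (G x ^ 2 + l ^ 2) := by
      refine setIntegral_mono (hi1.const_mul _) (hi2.add (integrableOn_const hfin)) fun x => ?_
      simp only
      nlinarith [sq_nonneg (G x - l)]
    rw [integral_const_mul, integral_add hi2 (integrableOn_const hfin)] at h1
    simp only [integral_const, smul_eq_mul, measureReal_restrict_apply_univ] at h1
    linarith
  have hJ : 0 ≤ J := by have := key 0; simpa using this
  rcases hm.eq_or_lt with h | h
  · have hI : I = 0 := by
      have h2 : volume S = 0 := by
        rw [← measureReal_eq_zero_iff hfin]; exact h.symm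
      simp [I, Measure.restrict_eq_zero.2 h2]
    rw [hI, ← h]; simp
  · have := key (I / m)
    field_simp at this
    nlinarith

end PartE2

section PartF
open Filter Topology Module

structure AP (n : ℕ) (f G : EE n → ℝ) (M : ℝ) : Prop where
  n1 : 1 ≤ n
  fc : Continuous f
  f0 : ∀ x, 0 ≤ f x
  fcs : HasCompactSupport f
  Gm : Measurable G
  G0 : ∀ x, 0 ≤ G x
  GM : ∀ x, G x ≤ M
  band : ∀ R s t : ℝ, 0 < R → 0 ≤ s → s < t →
    volume {x | s < f x} ≤ ENNReal.ofReal (unitBallVol n * R ^ n) →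
    (n / R) * (t - s) * volume.real {x | t ≤ f x} ≤ ∫ x in {x | s < f x ∧ f x < t}, G x

def muf {n : ℕ} (f : EE n → ℝ) (t : ℝ) : ℝ := volume.real {x | t < f x}

def VV {n : ℕ} (f : EE n → ℝ) (r : ℝ) : ℝ :=
  sInf {t | 0 ≤ t ∧ muf f t ≤ unitBallVol n * (max r 0) ^ n}

variable {n : ℕ} {f G : EE n → ℝ} {M : ℝ}

lemma AP.fin (h : AP n f G M) {t : ℝ} (ht : 0 ≤ t) : volume {x | t < f x} ≠ ⊤ := by
  refine ((measure_mono (fun x hx => ?_)).trans_lt h.fcs.isCompact.measure_lt_top).ne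
  by_contra hne
  simp only [mem_ofPred_eq, image_eq_zero_of_notMem_tsupport hne] at hx
  linarith

lemma AP.fin' (h : AP n f G M) {t : ℝ} (ht : 0 < t) : volume {x | t ≤ f x} ≠ ⊤ := by
  refine ne_top_of_le_ne_top (h.fin (t := t / 2) (by linarith)) (measure_mono fun x hx => ?_)
  simp only [mem_ofPred_eq] at hx ⊢
  linarith

lemma AP.mu_anti (h : AP n f G M) {s t : ℝ} (hs : 0 ≤ s) (hst : s ≤ t) : muf f t ≤ muf f s :=
  measureReal_mono (fun x hx => by simp only [mem_ofPred_eq] at hx ⊢; linarith) (h.fin hs)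

lemma AP.bdd (h : AP n f G M) : ∃ D, 0 ≤ D ∧ ∀ x, f x ≤ D := by
  obtain ⟨D, hD⟩ := h.fcs.exists_bound_of_continuous h.fc
  exact ⟨D, (norm_nonneg _).trans (hD 0), fun x => (le_abs_self _).trans (hD x)⟩

lemma mu_zero {D : ℝ} (hD : ∀ x, f x ≤ D) : muf f D = 0 := by
  have : {x | D < f x} = ∅ := by ext x; simp [hD x]
  rw [muf, this]; simp

lemma VV_ne (h : AP n f G M) (r : ℝ) :
    {t | 0 ≤ t ∧ muf f t ≤ unitBallVol n * (max r 0) ^ n}.Nonempty := by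
  obtain ⟨D, hD0, hD⟩ := h.bdd
  refine ⟨D, hD0, ?_⟩
  rw [mu_zero hD]
  have := om_pos n
  have : 0 ≤ max r 0 := le_max_right _ _
  positivity

lemma VV_bb (r : ℝ) : BddBelow {t | 0 ≤ t ∧ muf f t ≤ unitBallVol n * (max r 0) ^ n} :=
  ⟨0, fun _ ht => ht.1⟩

lemma VV_nonneg (r : ℝ) : 0 ≤ VV f r := Real.sInf_nonneg fun _ ht => ht.1

lemma VV_anti (h : AP n f G M) : Antitone (VV f) := by
  intro a b hab
  refine csInf_le_csInf (VV_bb b) (VV_ne h a) fun t ht => ⟨ht.1, ht.2.trans ?_⟩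
  have := om_pos n
  have h2 : 0 ≤ max a 0 := le_max_right _ _
  gcongr

lemma VV_le {D : ℝ} (hD0 : 0 ≤ D) (hD : ∀ x, f x ≤ D) (r : ℝ) : VV f r ≤ D := by
  refine csInf_le (VV_bb r) ⟨hD0, ?_⟩
  rw [mu_zero hD]
  have := om_pos n
  have : 0 ≤ max r 0 := le_max_right _ _
  positivity

lemma VV_mem (h : AP n f G M) (r : ℝ) : muf f (VV f r) ≤ unitBallVol n * (max r 0) ^ n := by
  have hU : {x | VV f r < f x} = ⋃ k : ℕ, {x | VV f r + 1 / ((k : ℝ) + 1) < f x} := by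
    ext x
    simp only [mem_ofPred_eq, mem_iUnion]
    constructor
    · intro hx
      obtain ⟨k, hk⟩ := exists_nat_one_div_lt (sub_pos.2 hx)
      exact ⟨k, by linarith⟩
    · rintro ⟨k, hk⟩
      have : (0 : ℝ) < 1 / ((k : ℝ) + 1) := by positivity
      linarith
  have hmono : Monotone fun k : ℕ => {x | VV f r + 1 / ((k : ℝ) + 1) < f x} := by
    intro i j hij x hx
    simp only [mem_ofPred_eq] at hx ⊢
    have : 1 / ((j : ℝ) + 1) ≤ 1 / ((i : ℝ) + 1) := by
      apply one_div_le_one_div_of_le (by positivity)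
      have : (i : ℝ) ≤ j := by exact_mod_cast hij
      linarith
    linarith
  have hlim := tendsto_measure_iUnion_atTop (μ := volume) hmono
  rw [← hU] at hlim
  have hlim2 := (ENNReal.tendsto_toReal (h.fin (VV_nonneg r))).comp hlim
  refine le_of_tendsto hlim2 (Eventually.of_forall fun k => ?_)
  have : (0 : ℝ) < 1 / ((k : ℝ) + 1) := by positivity
  obtain ⟨t, ht, htl⟩ := exists_lt_of_csInf_lt (VV_ne h r)
    (show VV f r < VV f r + 1 / ((k : ℝ) + 1) by linarith)
  exact (h.mu_anti ht.1 htl.le).trans ht.2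

lemma lt_VV_iff (h : AP n f G M) {t : ℝ} (ht : 0 ≤ t) (r : ℝ) :
    t < VV f r ↔ unitBallVol n * (max r 0) ^ n < muf f t := by
  constructor
  · intro hlt
    by_contra hne
    push Not at hne
    exact absurd (csInf_le (VV_bb r) ⟨ht, hne⟩) (not_le.2 hlt)
  · intro hlt
    by_contra hne
    push Not at hne
    have := (h.mu_anti (VV_nonneg r) hne).trans (VV_mem h r)
    linarith

lemma VV_ge (h : AP n f G M) {a : ℝ} (ha : 0 < a) (hV : 0 < VV f a) :
    unitBallVol n * a ^ n ≤ volume.real {x | VV f a ≤ f x} := by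
  set V := VV f a
  have hU : {x | V ≤ f x} = ⋂ k : ℕ, {x | V - V / ((k : ℝ) + 1) < f x} := by
    ext x
    simp only [mem_ofPred_eq, mem_iInter]
    constructor
    · intro hx k
      have : (0 : ℝ) < V / ((k : ℝ) + 1) := by positivity
      linarith
    · intro hx
      by_contra hne
      push Not at hne
      obtain ⟨k, hk⟩ := exists_nat_one_div_lt (div_pos (sub_pos.2 hne) hV)
      have h1 := hx k
      rw [lt_div_iff₀ hV] at hk
      have : V / ((k : ℝ) + 1) = 1 / ((k : ℝ) + 1) * V := by ring
      linarith
  have hanti : Antitone fun k : ℕ => {x | V - V / ((k : ℝ) + 1) < f x} := by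
    intro i j hij x hx
    simp only [mem_ofPred_eq] at hx ⊢
    have : V / ((j : ℝ) + 1) ≤ V / ((i : ℝ) + 1) := by
      have : (i : ℝ) ≤ j := by exact_mod_cast hij
      gcongr
    linarith
  have hle : ∀ k : ℕ, V / ((k : ℝ) + 1) ≤ V := fun k => by
    apply div_le_self hV.le
    have : (0 : ℝ) ≤ k := by positivity
    linarith
  have hlim := tendsto_measure_iInter_atTop (μ := volume)
    (fun k => (isOpen_lt continuous_const h.fc).measurableSet.nullMeasurableSet) hanti
    ⟨0, h.fin (by have := hle 0; linarith)⟩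
  rw [← hU] at hlim
  have hlim2 := (ENNReal.tendsto_toReal (h.fin' hV)).comp hlim
  refine ge_of_tendsto hlim2 (Eventually.of_forall fun k => ?_)
  have hp : (0 : ℝ) < V / ((k : ℝ) + 1) := by positivity
  have := (lt_VV_iff h (t := V - V / ((k : ℝ) + 1)) (by have := hle k; linarith) a).1
    (show V - V / ((k : ℝ) + 1) < V by linarith)
  rw [max_eq_left ha.le] at this
  exact this.le

lemma VV_band (h : AP n f G M) {a b : ℝ} (ha : 0 < a) (hab : a ≤ b) :
    (n / b) * (VV f a - VV f b) * (unitBallVol n * a ^ n) ≤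
      ∫ x in {x | VV f b < f x ∧ f x < VV f a}, G x := by
  have hb := ha.trans_le hab
  rcases (VV_anti h hab).eq_or_lt with he | hlt
  · rw [he]; simp
    exact integral_nonneg h.G0
  · have hbd := h.band b (VV f b) (VV f a) hb (VV_nonneg b) hlt (by
      have := VV_mem h b
      rw [max_eq_left hb.le] at this
      rw [muf, Measure.real] at this
      exact (ENNReal.le_ofReal_iff_toReal_le (h.fin (VV_nonneg b))
        (by have := om_pos n; positivity)).2 this)
    refine le_trans ?_ hbd
    have := VV_ge h ha ((VV_nonneg b).trans_lt hlt)
    have : 0 ≤ VV f a - VV f b := by linarith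
    gcongr

lemma VV_meas (h : AP n f G M) {a b : ℝ} (ha : 0 < a) (hab : a ≤ b) :
    volume.real {x | VV f b < f x ∧ f x < VV f a} ≤ unitBallVol n * (b ^ n - a ^ n) := by
  have hb := ha.trans_le hab
  have ho := om_pos n
  rcases (VV_anti h hab).eq_or_lt with he | hlt
  · have : {x | VV f b < f x ∧ f x < VV f a} = ∅ := by
      ext x; simp [he]; intro h; exact h.le
    rw [this]; simp
    have : a ^ n ≤ b ^ n := by gcongr
    nlinarith
  · have h1 : {x | VV f b < f x ∧ f x < VV f a} = {x | VV f b < f x} \ {x | VV f a ≤ f x} := by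
      ext x; simp
    have hm : MeasurableSet {x | VV f a ≤ f x} :=
      (isClosed_le continuous_const h.fc).measurableSet
    rw [h1, measureReal_sdiff (fun x hx => by simp only [mem_ofPred_eq] at hx ⊢; linarith) hm
      (h.fin (VV_nonneg b))]
    have h2 := VV_mem h b
    rw [max_eq_left hb.le, muf] at h2
    have h3 := VV_ge h ha ((VV_nonneg b).trans_lt hlt)
    linarith

lemma pow_diff_le (n : ℕ) (hn : 1 ≤ n) {a b : ℝ} (ha : 0 < a) (hab : a ≤ b) :
    b ^ n - a ^ n ≤ n * b ^ (n - 1) * (b - a) := by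
  have hb := ha.trans_le hab
  obtain ⟨k, rfl⟩ : ∃ k, n = k + 1 := ⟨n - 1, by omega⟩
  have h1 := one_add_mul_le_pow (a := a / b - 1) (by have : 0 < a / b := by positivity
                                                     linarith) (k + 1)
  have h2 : (1 + (a / b - 1)) ^ (k + 1) = a ^ (k + 1) / b ^ (k + 1) := by
    rw [← div_pow]; congr 1; ring
  rw [h2, le_div_iff₀ (by positivity)] at h1
  simp only [Nat.add_sub_cancel]
  have h3 : (1 + ((k + 1 : ℕ) : ℝ) * (a / b - 1)) * b ^ (k + 1) =
    b ^ (k + 1) - ((k + 1 : ℕ) : ℝ) * b ^ k * (b - a) := by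
    field_simp
    ring
  linarith

lemma VV_key (h : AP n f G M) {a b : ℝ} (ha : 0 < a) (hab : a ≤ b) :
    n * unitBallVol n * a ^ (2 * n) * (VV f a - VV f b) ^ 2 ≤
      b ^ (n + 1) * (b - a) * ∫ x in {x | VV f b < f x ∧ f x < VV f a}, G x ^ 2 := by
  have hb := ha.trans_le hab
  have ho := om_pos n
  have hn : (0 : ℝ) < n := by exact_mod_cast h.n1
  have hfin : volume {x | VV f b < f x ∧ f x < VV f a} ≠ ⊤ :=
    ne_top_of_le_ne_top (h.fin (VV_nonneg b)) (measure_mono fun x hx => hx.1)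
  have h1 := VV_band h ha hab
  have h2 := sq_int_le h.Gm h.G0 h.GM hfin
  have h3 := VV_meas h ha hab
  have h4 := pow_diff_le n h.n1 ha hab
  set I := ∫ x in {x | VV f b < f x ∧ f x < VV f a}, G x
  set J := ∫ x in {x | VV f b < f x ∧ f x < VV f a}, G x ^ 2
  have hJ : 0 ≤ J := integral_nonneg fun x => sq_nonneg _
  set d := VV f a - VV f b
  have hd : 0 ≤ d := sub_nonneg.2 (VV_anti h hab)
  have h5 : (n / b * d * (unitBallVol n * a ^ n)) ^ 2 ≤ I ^ 2 := by gcongr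
  have h6 : (n / b * d * (unitBallVol n * a ^ n)) ^ 2 ≤
      unitBallVol n * (n * b ^ (n - 1) * (b - a)) * J := by
    refine h5.trans (h2.trans ?_)
    gcongr
    exact h3.trans (by gcongr)
  have h7 : (n / b * d * (unitBallVol n * a ^ n)) ^ 2 =
      (n * unitBallVol n / b ^ 2) * (n * unitBallVol n * a ^ (2 * n) * d ^ 2) := by
    rw [pow_mul' a 2 n]; field_simp
  have h8 : unitBallVol n * (n * b ^ (n - 1) * (b - a)) * J =
      (n * unitBallVol n / b ^ 2) * (b ^ (n + 1) * (b - a) * J) := by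
    obtain ⟨k, rfl⟩ : ∃ k, n = k + 1 := ⟨n - 1, by have := h.n1; omega⟩
    simp only [Nat.add_sub_cancel]
    field_simp
    ring
  rw [h7, h8] at h6
  exact le_of_mul_le_mul_left h6 (by positivity)

lemma VV_cont (h : AP n f G M) {a : ℝ} (ha : 0 < a) : ContinuousAt (VV f) a := by
  have hM : 0 ≤ M := (h.G0 0).trans (h.GM 0)
  have hn : (0 : ℝ) < n := by exact_mod_cast h.n1
  have ho := om_pos n
  have hbd : ∀ b c : ℝ, 0 < b → b ≤ c →
      VV f b - VV f c ≤ M * (c ^ n - b ^ n) * (c / (n * b ^ n)) := by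
    intro b c hb hbc
    have hc := hb.trans_le hbc
    have h1 := VV_band h hb hbc
    have hfin : volume {x | VV f c < f x ∧ f x < VV f b} ≠ ⊤ :=
      ne_top_of_le_ne_top (h.fin (VV_nonneg c)) (measure_mono fun x hx => hx.1)
    have h2 : ∫ x in {x | VV f c < f x ∧ f x < VV f b}, G x ≤
        M * (unitBallVol n * (c ^ n - b ^ n)) := by
      calc _ ≤ ∫ x in {x | VV f c < f x ∧ f x < VV f b}, M := by
            refine setIntegral_mono ?_ (integrableOn_const hfin) h.GM
            exact Measure.integrableOn_of_bounded (M := M) hfin h.Gm.aestronglyMeasurable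
              (Eventually.of_forall fun x => by rw [Real.norm_of_nonneg (h.G0 x)]; exact h.GM x)
        _ = M * volume.real {x | VV f c < f x ∧ f x < VV f b} := by simp [mul_comm]
        _ ≤ _ := by gcongr; exact VV_meas h hb hbc
    have h3 := h1.trans h2
    have h4 : (n / c) * (VV f b - VV f c) * (unitBallVol n * b ^ n) =
      (VV f b - VV f c) * (n * b ^ n / c * unitBallVol n) := by ring
    rw [h4, ← le_div_iff₀ (by positivity)] at h3
    refine h3.trans (le_of_eq ?_)
    field_simp
  -- squeeze
  have hA : Tendsto (fun b => VV f a + M * (a ^ n - b ^ n) * (a / (n * b ^ n))) (𝓝 a)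
      (𝓝 (VV f a)) := by
    have : ContinuousAt (fun b => VV f a + M * (a ^ n - b ^ n) * (a / (n * b ^ n))) a := by
      have : (n * a ^ n : ℝ) ≠ 0 := by positivity
      fun_prop (disch := assumption)
    have h2 := this.tendsto
    simpa using h2
  have hB : Tendsto (fun c => VV f a - M * (c ^ n - a ^ n) * (c / (n * a ^ n))) (𝓝 a)
      (𝓝 (VV f a)) := by
    have : ContinuousAt (fun c => VV f a - M * (c ^ n - a ^ n) * (c / (n * a ^ n))) a := by
      fun_prop
    have h2 := this.tendsto
    simpa using h2
  have hmax := hA.max (tendsto_const_nhds (x := VV f a))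
  have hmin := hB.min (tendsto_const_nhds (x := VV f a))
  rw [max_self] at hmax
  rw [min_self] at hmin
  refine tendsto_of_tendsto_of_tendsto_of_le_of_le' hmin hmax ?_ ?_
  · filter_upwards [lt_mem_nhds ha] with b hb
    rcases le_total a b with hab | hab
    · exact (min_le_left _ _).trans (by have := hbd a b ha hab; linarith)
    · exact (min_le_right _ _).trans (VV_anti h hab)
  · filter_upwards [lt_mem_nhds ha] with b hb
    rcases le_total a b with hab | hab
    · exact (VV_anti h hab).trans (le_max_right _ _)
    · exact le_trans (by have := hbd b a hb hab; linarith) (le_max_left _ _)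

end PartF

section PartF2
open Filter Topology Module

variable {n : ℕ} {f G : EE n → ℝ} {M : ℝ}

lemma tonelli (h : AP n f G M) {τ : ℝ} (hτ : 0 < τ) :
    ∫⁻ y in Ioi (0 : ℝ), ENNReal.ofReal
        (∫ x in {x | VV f (y + τ + τ) < f x ∧ f x < VV f (y + τ)}, G x ^ 2) ≤
      ENNReal.ofReal (τ * ∫ x in {x | 0 < f x}, G x ^ 2) := by
  have hVm : Measurable (VV f) := (VV_anti h).measurable
  have hG2 : Measurable fun x => G x ^ 2 := h.Gm.pow_const 2
  have hint : ∀ S : Set (EE n), volume S ≠ ⊤ → IntegrableOn (fun x => G x ^ 2) S := by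
    intro S hS
    refine Measure.integrableOn_of_bounded (M := M ^ 2) hS hG2.aestronglyMeasurable
      (Eventually.of_forall fun x => ?_)
    rw [Real.norm_of_nonneg (sq_nonneg _)]
    exact pow_le_pow_left₀ (h.G0 x) (h.GM x) 2
  set S : Set (ℝ × EE n) := {z | VV f (z.1 + τ + τ) < f z.2 ∧ f z.2 < VV f (z.1 + τ)} with hS
  have hSm : MeasurableSet S := by
    have m1 : Measurable fun z : ℝ × EE n => VV f (z.1 + τ + τ) := hVm.comp (by fun_prop)
    have m2 : Measurable fun z : ℝ × EE n => VV f (z.1 + τ) := hVm.comp (by fun_prop)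
    have m3 : Measurable fun z : ℝ × EE n => f z.2 := h.fc.measurable.comp measurable_snd
    exact (measurableSet_lt m1 m3).inter (measurableSet_lt m3 m2)
  have h1 : ∀ y : ℝ, ENNReal.ofReal
        (∫ x in {x | VV f (y + τ + τ) < f x ∧ f x < VV f (y + τ)}, G x ^ 2) =
      ∫⁻ x, S.indicator (fun z => ENNReal.ofReal (G z.2 ^ 2)) (y, x) := by
    intro y
    have hm : MeasurableSet {x | VV f (y + τ + τ) < f x ∧ f x < VV f (y + τ)} :=
      hSm.preimage (f := fun x => (y, x)) (by fun_prop)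
    rw [ofReal_integral_eq_lintegral_ofReal (hint _ (ne_top_of_le_ne_top (h.fin (VV_nonneg _))
      (measure_mono fun x hx => hx.1))) (Eventually.of_forall fun x => sq_nonneg _),
      ← lintegral_indicator hm]
    rfl
  simp_rw [h1]
  rw [lintegral_lintegral_swap]
  swap
  · have m4 : Measurable fun z : ℝ × EE n => ENNReal.ofReal (G z.2 ^ 2) :=
      (hG2.comp measurable_snd).ennreal_ofReal
    exact (m4.indicator hSm).aemeasurable
  have hfo : MeasurableSet {x | 0 < f x} := (isOpen_lt continuous_const h.fc).measurableSet
  have h2 : ∀ x, ∫⁻ y in Ioi (0 : ℝ), S.indicator (fun z => ENNReal.ofReal (G z.2 ^ 2)) (y, x) ≤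
      {x | 0 < f x}.indicator (fun x => ENNReal.ofReal τ * ENNReal.ofReal (G x ^ 2)) x := by
    intro x
    set T : Set ℝ := {y | (y, x) ∈ S} with hT
    have hTm : MeasurableSet T := hSm.preimage (f := fun y => (y, x)) (by fun_prop)
    have e1 : ∀ y, S.indicator (fun z => ENNReal.ofReal (G z.2 ^ 2)) (y, x) =
        T.indicator (fun _ => ENNReal.ofReal (G x ^ 2)) y := fun y => rfl
    simp_rw [e1]
    by_cases hx : 0 < f x
    · rw [indicator_of_mem (show x ∈ {x | 0 < f x} from hx)]
      refine (setLIntegral_le_lintegral _ _).trans ?_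
      rw [lintegral_indicator hTm, setLIntegral_const, mul_comm]
      gcongr
      refine (Real.volume_le_diam T).trans (Metric.ediam_le fun a ha b hb => ?_)
      rw [edist_dist]
      apply ENNReal.ofReal_le_ofReal
      have key : ∀ a b, a ∈ T → b ∈ T → a - b ≤ τ := by
        intro a b ha hb
        by_contra hne
        push Not at hne
        have h3 : VV f (a + τ) ≤ VV f (b + τ + τ) := VV_anti h (by linarith)
        have h4 : f x < VV f (a + τ) := ha.2
        have h5 : VV f (b + τ + τ) < f x := hb.1
        linarith
      rw [Real.dist_eq, abs_le]
      have := key a b ha hb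
      have := key b a hb ha
      constructor <;> linarith
    · have : T = ∅ := by
        ext y
        simp only [mem_empty_iff_false, iff_false]
        intro hy
        exact hx ((VV_nonneg _).trans_lt hy.1)
      simp [this]
  refine (lintegral_mono h2).trans ?_
  rw [lintegral_indicator hfo, lintegral_const_mul' _ _ ENNReal.ofReal_ne_top,
    ENNReal.ofReal_mul hτ.le, ofReal_integral_eq_lintegral_ofReal (hint _ (h.fin le_rfl))
      (Eventually.of_forall fun x => sq_nonneg _)]

lemma VVe_cont (h : AP n f G M) {ε : ℝ} (hε : 0 < ε) : Continuous fun u => VV f (max u ε) := by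
  rw [continuous_iff_continuousAt]
  intro u
  exact ContinuousAt.comp (f := fun u => max u ε) (VV_cont h (lt_max_of_lt_right hε)) (by fun_prop)

lemma VV_zero (h : AP n f G M) {ρ : ℝ} (hρ : 0 < ρ)
    (hv : volume {x | 0 < f x} ≤ ENNReal.ofReal (unitBallVol n * ρ ^ n)) {r : ℝ} (hr : ρ ≤ r) :
    VV f r = 0 := by
  refine le_antisymm (not_lt.1 fun hlt => ?_) (VV_nonneg r)
  rw [lt_VV_iff h le_rfl, muf, Measure.real] at hlt
  have ho := om_pos n
  have h1 := ENNReal.toReal_le_of_le_ofReal (by positivity) hv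
  have h2 : ρ ^ n ≤ (max r 0) ^ n := by gcongr; exact hr.trans (le_max_left _ _)
  nlinarith

/-- one-dimensional profile -/
def WW (f : EE n → ℝ) (ε τ r : ℝ) : ℝ :=
  ((∫ u in (0 : ℝ)..(r + τ + τ), VV f (max u ε)) - ∫ u in (0 : ℝ)..(r + τ), VV f (max u ε)) / τ

def WD (f : EE n → ℝ) (ε τ r : ℝ) : ℝ :=
  (VV f (max (r + τ + τ) ε) - VV f (max (r + τ) ε)) / τ

lemma WW_deriv (h : AP n f G M) {ε τ : ℝ} (hε : 0 < ε) (r : ℝ) :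
    HasDerivAt (WW f ε τ) (WD f ε τ r) r := by
  have hc := VVe_cont h hε
  have key : ∀ c : ℝ, HasDerivAt (fun r => ∫ u in (0 : ℝ)..(r + c), VV f (max u ε))
      (VV f (max (r + c) ε)) r := by
    intro c
    have h1 := intervalIntegral.integral_hasDerivAt_right (hc.intervalIntegrable 0 (r + c))
      hc.aestronglyMeasurable.stronglyMeasurableAtFilter hc.continuousAt
    exact h1.comp_add_const r c
  have h1 := key (τ + τ)
  simp only [← add_assoc] at h1
  exact (h1.sub (key τ)).div_const τ

lemma WD_cont (h : AP n f G M) {ε τ : ℝ} (hε : 0 < ε) : Continuous (WD f ε τ) := by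
  have hc := VVe_cont h hε
  unfold WD
  exact ((hc.comp (f := fun r => r + τ + τ) (by fun_prop)).sub
    (hc.comp (f := fun r => r + τ) (by fun_prop))).div_const τ

lemma WW_C1 (h : AP n f G M) {ε τ : ℝ} (hε : 0 < ε) : ContDiff ℝ 1 (WW f ε τ) := by
  rw [contDiff_one_iff_deriv]
  refine ⟨fun r => (WW_deriv h hε r).differentiableAt, ?_⟩
  have : deriv (WW f ε τ) = WD f ε τ := funext fun r => (WW_deriv h hε r).deriv
  rw [this]; exact WD_cont h hε

lemma WW_eq (h : AP n f G M) {ε τ : ℝ} (hε : 0 < ε) (r : ℝ) :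
    WW f ε τ r = (∫ u in (r + τ)..(r + τ + τ), VV f (max u ε)) / τ := by
  have hc := VVe_cont h hε
  rw [WW, intervalIntegral.integral_interval_sub_left (hc.intervalIntegrable _ _)
    (hc.intervalIntegrable _ _)]

lemma WW_ge (h : AP n f G M) {ε τ : ℝ} (hε : 0 < ε) (hτ : 0 < τ) (r : ℝ) :
    VV f (max (r + τ + τ) ε) ≤ WW f ε τ r := by
  have hc := VVe_cont h hε
  rw [WW_eq h hε, le_div_iff₀ hτ]
  have h1 : ∫ u in (r + τ)..(r + τ + τ), VV f (max (r + τ + τ) ε) =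
      VV f (max (r + τ + τ) ε) * τ := by
    rw [intervalIntegral.integral_const]; simp [mul_comm]
  rw [← h1]
  refine intervalIntegral.integral_mono_on (by linarith) (by simp) (hc.intervalIntegrable _ _)
    fun u hu => VV_anti h (max_le_max hu.2 le_rfl)

lemma WW_zero (h : AP n f G M) {ε τ ρ : ℝ} (hε : 0 < ε) (hτ : 0 < τ) (hρ : 0 < ρ)
    (hv : volume {x | 0 < f x} ≤ ENNReal.ofReal (unitBallVol n * ρ ^ n)) {r : ℝ}
    (hr : ρ ≤ r + τ) : WW f ε τ r = 0 := by
  rw [WW_eq h hε, intervalIntegral.integral_congr (g := fun _ => (0 : ℝ))]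
  · simp
  · intro u hu
    rw [uIcc_of_le (by linarith)] at hu
    exact VV_zero h hρ hv ((hr.trans hu.1).trans (le_max_left _ _))

lemma WW_const (h : AP n f G M) {ε τ : ℝ} (hε : 0 < ε) (hτ : 0 < τ) {r : ℝ}
    (hr : r + τ + τ ≤ ε) : WW f ε τ r = VV f ε := by
  rw [WW_eq h hε, intervalIntegral.integral_congr (g := fun _ => VV f ε)]
  · rw [intervalIntegral.integral_const]; simp; field_simp
  · intro u hu
    rw [uIcc_of_le (by linarith)] at hu
    simp only
    rw [max_eq_right (hu.2.trans hr)]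

lemma WD_sq (h : AP n f G M) {ε τ r : ℝ} (hε : 0 < ε) (hτ : 0 < τ) (hr : 0 < r) :
    n * unitBallVol n * (r ^ (n - 1) * WD f ε τ r ^ 2) ≤
      ((1 + τ / ε) ^ (n + 1) / τ) *
        ∫ x in {x | VV f (r + τ + τ) < f x ∧ f x < VV f (r + τ)}, G x ^ 2 := by
  have ho := om_pos n
  have hn : (0 : ℝ) < n := by exact_mod_cast h.n1
  have hJ0 : ∀ S : Set (EE n), 0 ≤ ∫ x in S, G x ^ 2 := fun S => integral_nonneg fun x => sq_nonneg _
  rcases le_or_gt (r + τ + τ) ε with hle | hgt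
  · have : WD f ε τ r = 0 := by
      rw [WD, max_eq_right hle, max_eq_right (by linarith)]; simp
    rw [this]; simp
    have := hJ0 {x | VV f (r + τ + τ) < f x ∧ f x < VV f (r + τ)}
    positivity
  · set b := r + τ + τ with hb
    set a := max (r + τ) ε with ha
    have ha0 : 0 < a := lt_max_of_lt_right hε
    have hra : r ≤ a := le_trans (by linarith) (le_max_left _ _)
    have hea : ε ≤ a := le_max_right _ _
    have hta : r + τ ≤ a := le_max_left _ _
    have hab : a ≤ b := max_le (by linarith) hgt.le
    have hk := VV_key h ha0 hab
    have hJ : ∫ x in {x | VV f b < f x ∧ f x < VV f a}, G x ^ 2 ≤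
        ∫ x in {x | VV f b < f x ∧ f x < VV f (r + τ)}, G x ^ 2 := by
      refine setIntegral_mono_set ?_ (Eventually.of_forall fun x => sq_nonneg _)
        (Eventually.of_forall fun x hx => ⟨hx.1, hx.2.trans_le (VV_anti h hta)⟩)
      refine Measure.integrableOn_of_bounded (M := M ^ 2)
        (ne_top_of_le_ne_top (h.fin (VV_nonneg b)) (measure_mono fun x hx => hx.1))
        (h.Gm.pow_const 2).aestronglyMeasurable (Eventually.of_forall fun x => ?_)
      rw [Real.norm_of_nonneg (sq_nonneg _)]
      exact pow_le_pow_left₀ (h.G0 x) (h.GM x) 2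
    set J := ∫ x in {x | VV f b < f x ∧ f x < VV f (r + τ)}, G x ^ 2
    have hJp : 0 ≤ J := hJ0 _
    have hW : WD f ε τ r ^ 2 = (VV f a - VV f b) ^ 2 / τ ^ 2 := by
      rw [WD, max_eq_left hgt.le, div_pow]; ring
    rw [hW]
    set d := (VV f a - VV f b) ^ 2
    have hd : 0 ≤ d := sq_nonneg _
    have h2 : n * unitBallVol n * a ^ (2 * n) * d ≤ ((1 + τ / ε) * a) ^ (n + 1) * τ * J := by
      refine hk.trans ?_
      have hbb : b ≤ (1 + τ / ε) * a := by
        have : τ ≤ τ / ε * a := by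
          rw [div_mul_eq_mul_div, le_div_iff₀ hε]; gcongr
        nlinarith
      have : b - a ≤ τ := by linarith
      have : 0 ≤ b - a := by linarith
      have : 0 < b := by linarith
      gcongr
    obtain ⟨k, hk⟩ : ∃ k, n = k + 1 := ⟨n - 1, by have := h.n1; omega⟩
    have h3 : n * unitBallVol n * (a ^ (n - 1) * (d / τ ^ 2)) ≤
        ((1 + τ / ε) ^ (n + 1) / τ) * J := by
      have e1 : a ^ (2 * n) = a ^ (n - 1) * a ^ (n + 1) := by rw [← pow_add]; congr 1; omega
      rw [mul_pow, e1] at h2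
      have h4 : n * unitBallVol n * (a ^ (n - 1) * d) ≤ (1 + τ / ε) ^ (n + 1) * τ * J := by
        refine le_of_mul_le_mul_right ?_ (pow_pos ha0 (n + 1))
        calc _ = n * unitBallVol n * (a ^ (n - 1) * a ^ (n + 1)) * d := by ring
          _ ≤ _ := h2
          _ = _ := by ring
      calc _ = n * unitBallVol n * (a ^ (n - 1) * d) / τ ^ 2 := by ring
        _ ≤ (1 + τ / ε) ^ (n + 1) * τ * J / τ ^ 2 := by gcongr
        _ = _ := by field_simp
    refine le_trans ?_ h3
    gcongr

end PartF2

section PartF3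
open Filter Topology Module

variable {n : ℕ} {f G : EE n → ℝ} {M : ℝ}

lemma quot_nonneg (p : ℝ) (Ω : Set (EE n)) (v : EE n → ℝ) : 0 ≤ sobolevQuotient p Ω v :=
  div_nonneg (integral_nonneg fun x => sq_nonneg _)
    (Real.rpow_nonneg (integral_nonneg fun x => Real.rpow_nonneg (abs_nonneg _) _) _)

lemma sob_bdd (p : ℝ) (Ω : Set (EE n)) :
    BddBelow (sobolevQuotient p Ω '' {f | Admissible Ω f}) := by
  refine ⟨0, ?_⟩
  rintro _ ⟨v, _, rfl⟩
  exact quot_nonneg p Ω v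

lemma sob_nonneg (p : ℝ) (Ω : Set (EE n)) : 0 ≤ sobolevConstant p Ω := by
  refine Real.sInf_nonneg ?_
  rintro _ ⟨v, _, rfl⟩
  exact quot_nonneg p Ω v

lemma int_grad_eq {Ω : Set (EE n)} {v : EE n → ℝ} (hs : tsupport v ⊆ Ω) :
    ∫ x in Ω, ‖fderiv ℝ v x‖ ^ 2 = ∫ x, ‖fderiv ℝ v x‖ ^ 2 := by
  refine setIntegral_eq_integral_of_forall_compl_eq_zero fun x hx => ?_
  rw [fderiv_of_notMem_tsupport (f := v) (𝕜 := ℝ) (fun hh => hx (hs hh))]; simp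

lemma int_p_eq {p : ℝ} (hp : 1 ≤ p) {Ω : Set (EE n)} {v : EE n → ℝ} (hs : tsupport v ⊆ Ω) :
    ∫ x in Ω, |v x| ^ p = ∫ x, |v x| ^ p := by
  refine setIntegral_eq_integral_of_forall_compl_eq_zero fun x hx => ?_
  rw [image_eq_zero_of_notMem_tsupport (f := v) (fun hh => hx (hs hh))]
  rw [abs_zero, Real.zero_rpow (by linarith)]

lemma quot_eq {p : ℝ} (hp : 1 ≤ p) {Ω : Set (EE n)} {v : EE n → ℝ} (hs : tsupport v ⊆ Ω) :
    sobolevQuotient p Ω v = (∫ x, ‖fderiv ℝ v x‖ ^ 2) / (∫ x, |v x| ^ p) ^ (2 / p) := by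
  rw [sobolevQuotient, int_grad_eq hs, int_p_eq hp hs]

lemma sob_le {p : ℝ} (hp : 1 ≤ p) {Ω : Set (EE n)} {v : EE n → ℝ} (hv : ContDiff ℝ 1 v)
    (hc : HasCompactSupport v) (hs : tsupport v ⊆ Ω) :
    sobolevConstant p Ω * (∫ x, |v x| ^ p) ^ (2 / p) ≤ ∫ x, ‖fderiv ℝ v x‖ ^ 2 := by
  have h0 : 0 ≤ ∫ x, ‖fderiv ℝ v x‖ ^ 2 := integral_nonneg fun x => sq_nonneg _
  have h1 : 0 ≤ ∫ x, |v x| ^ p := integral_nonneg fun x => Real.rpow_nonneg (abs_nonneg _) _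
  rcases (Real.rpow_nonneg h1 (2 / p)).eq_or_lt with he | hlt
  · rw [← he]; simpa using h0
  · rw [← le_div_iff₀ hlt, ← quot_eq hp hs]
    refine csInf_le (sob_bdd p Ω) ⟨v, ⟨hv, hc, hs, ?_⟩, rfl⟩
    by_contra hne
    push Not at hne
    simp only [hne, abs_zero, Real.zero_rpow (show p ≠ 0 by linarith)] at hlt
    rw [integral_zero, Real.zero_rpow (by positivity)] at hlt
    exact lt_irrefl _ hlt

lemma nontriv (hn : 1 ≤ n) : Nontrivial (EE n) := by
  have : Nonempty (Fin n) := ⟨⟨0, hn⟩⟩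
  infer_instance

lemma vC1 (h : AP n f G M) {ε τ : ℝ} (hε : 0 < ε) (hτ : 0 < τ) (hτε : τ + τ < ε) :
    ContDiff ℝ 1 (fun x : EE n => WW f ε τ ‖x‖) ∧
      ∀ x : EE n, ‖fderiv ℝ (fun x : EE n => WW f ε τ ‖x‖) x‖ ≤ |WD f ε τ ‖x‖| := by
  have hloc : ∀ x : EE n, x = 0 → (fun x : EE n => WW f ε τ ‖x‖) =ᶠ[𝓝 x] fun _ => VV f ε := by
    rintro x rfl
    filter_upwards [ball_mem_nhds (0 : EE n) (sub_pos.2 hτε)] with y hy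
    rw [mem_ball_zero_iff] at hy
    exact WW_const h hε hτ (by linarith)
  constructor
  · rw [contDiff_iff_contDiffAt]
    intro x
    by_cases hx : x = 0
    · exact contDiffAt_const.congr_of_eventuallyEq (hloc x hx)
    · exact (WW_C1 h hε).contDiffAt.comp x (contDiffAt_norm ℝ hx)
  · intro x
    by_cases hx : x = 0
    · rw [(hloc x hx).fderiv_eq]; simp
    · have hd : DifferentiableAt ℝ (fun x : EE n => ‖x‖) x :=
        (contDiffAt_norm ℝ hx (n := 1)).differentiableAt (by simp)
      have h1 := (WW_deriv h hε ‖x‖ (τ := τ)).comp_hasFDerivAt x hd.hasFDerivAt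
      have h2 : fderiv ℝ (fun x : EE n => WW f ε τ ‖x‖) x =
        WD f ε τ ‖x‖ • fderiv ℝ (fun x : EE n => ‖x‖) x := h1.fderiv
      rw [h2, norm_smul, Real.norm_eq_abs]
      have h3 : ‖fderiv ℝ (fun x : EE n => ‖x‖) x‖ ≤ 1 := by
        have := norm_fderiv_le_of_lipschitz ℝ (x₀ := x) (lipschitzWith_one_norm (E := EE n))
        simpa using this
      exact mul_le_of_le_one_right (abs_nonneg _) h3

lemma energy (h : AP n f G M) {ε τ ρ : ℝ} (hε : 0 < ε) (hτ : 0 < τ) (hτε : τ + τ < ε)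
    (hρ : 0 < ρ) (hv : volume {x | 0 < f x} ≤ ENNReal.ofReal (unitBallVol n * ρ ^ n)) :
    ∫ x : EE n, ‖fderiv ℝ (fun x : EE n => WW f ε τ ‖x‖) x‖ ^ 2 ≤
      (1 + τ / ε) ^ (n + 1) * ∫ x in {x | 0 < f x}, G x ^ 2 := by
  have := nontriv h.n1
  have ho := om_pos n
  have hWDc := WD_cont h hε (τ := τ)
  have hcont : Continuous fun x : EE n => WD f ε τ ‖x‖ ^ 2 :=
    (hWDc.comp continuous_norm).pow 2
  have hE0 : 0 ≤ ∫ x in {x | 0 < f x}, G x ^ 2 := integral_nonneg fun x => sq_nonneg _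
  have hint : Integrable fun x : EE n => WD f ε τ ‖x‖ ^ 2 := by
    refine hcont.integrable_of_hasCompactSupport ?_
    refine HasCompactSupport.of_support_subset_isCompact (isCompact_closedBall (0 : EE n) ρ) ?_
    intro x hx
    by_contra hne
    rw [mem_closedBall_zero_iff, not_le] at hne
    apply hx
    simp only [WD]
    rw [VV_zero h hρ hv, VV_zero h hρ hv]
    · simp
    · exact le_max_of_le_left (by linarith)
    · exact le_max_of_le_left (by linarith)
  have h1 : ∫ x : EE n, ‖fderiv ℝ (fun x : EE n => WW f ε τ ‖x‖) x‖ ^ 2 ≤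
      ∫ x : EE n, WD f ε τ ‖x‖ ^ 2 := by
    refine integral_mono_of_nonneg (Eventually.of_forall fun x => sq_nonneg _) hint
      (Eventually.of_forall fun x => ?_)
    have := (vC1 h hε hτ hτε).2 x
    simp only
    rw [← sq_abs (WD f ε τ ‖x‖)]
    gcongr
  refine h1.trans ?_
  rw [integral_fun_norm_addHaar volume (fun r => WD f ε τ r ^ 2)]
  have h2 : finrank ℝ (EE n) = n := by simp
  rw [h2, nsmul_eq_mul, smul_eq_mul, ← mul_assoc]
  have h3 : (volume.real (ball (0 : EE n) 1)) = unitBallVol n := rfl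
  rw [h3, ← integral_const_mul]
  simp only [smul_eq_mul]
  rw [integral_eq_lintegral_of_nonneg_ae]
  · refine ENNReal.toReal_le_of_le_ofReal (by positivity) ?_
    calc _ ≤ ∫⁻ y in Ioi (0 : ℝ), (ENNReal.ofReal ((1 + τ / ε) ^ (n + 1) / τ) * ENNReal.ofReal
          (∫ x in {x | VV f (y + τ + τ) < f x ∧ f x < VV f (y + τ)}, G x ^ 2)) := by
          refine setLIntegral_mono' measurableSet_Ioi fun y hy => ?_
          rw [← ENNReal.ofReal_mul (by positivity)]
          exact ENNReal.ofReal_le_ofReal (WD_sq h hε hτ hy)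
      _ ≤ ENNReal.ofReal ((1 + τ / ε) ^ (n + 1) / τ) *
          ENNReal.ofReal (τ * ∫ x in {x | 0 < f x}, G x ^ 2) := by
          rw [lintegral_const_mul' _ _ ENNReal.ofReal_ne_top]
          gcongr
          exact tonelli h hτ
      _ = _ := by
          rw [← ENNReal.ofReal_mul (by positivity)]
          congr 1
          field_simp
  · refine (ae_restrict_iff' measurableSet_Ioi).2 (Eventually.of_forall fun y hy => ?_)
    have : (0 : ℝ) < y := hy
    simp only [Pi.zero_apply]
    positivity
  · refine Continuous.aestronglyMeasurable ?_
    exact continuous_const.mul ((continuous_pow _).mul (hWDc.pow 2))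

lemma stepA (h : AP n f G M) {p ε ρ : ℝ} (hp : 1 ≤ p) (hε : 0 < ε) (hε2 : ε < 1 / 2)
    (hρ : 0 < ρ) (hv : volume {x | 0 < f x} ≤ ENNReal.ofReal (unitBallVol n * ρ ^ n)) :
    sobolevConstant p (ball (0 : EE n) ρ) * (∫ x : EE n, VV f (‖x‖ + 2 * ε) ^ p) ^ (2 / p) ≤
      (1 + ε) ^ (n + 1) * ∫ x in {x | 0 < f x}, G x ^ 2 := by
  have hτ : 0 < ε ^ 2 := by positivity
  have hτε : ε ^ 2 + ε ^ 2 < ε := by nlinarith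
  obtain ⟨hC1, hD⟩ := vC1 h hε hτ hτε
  have hen := energy h hε hτ hτε hρ hv
  have e1 : ε ^ 2 / ε = ε := by field_simp
  rw [e1] at hen
  have hts : tsupport (fun x : EE n => WW f ε (ε ^ 2) ‖x‖) ⊆ closedBall 0 (ρ - ε ^ 2) := by
    refine closure_minimal (fun x hx => ?_) isClosed_closedBall
    by_contra hne
    rw [mem_closedBall_zero_iff, not_le] at hne
    exact hx (WW_zero h hε hτ hρ hv (by linarith))
  have hcs : HasCompactSupport (fun x : EE n => WW f ε (ε ^ 2) ‖x‖) :=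
    (isCompact_closedBall (0 : EE n) _).of_isClosed_subset (isClosed_tsupport _) hts
  have h1 := sob_le hp hC1 hcs (hts.trans (closedBall_subset_ball (by linarith : ρ - ε ^ 2 < ρ)))
  refine le_trans ?_ (h1.trans hen)
  have hn := sob_nonneg p (ball (0 : EE n) ρ)
  have hle : ∫ x : EE n, VV f (‖x‖ + 2 * ε) ^ p ≤ ∫ x : EE n, |WW f ε (ε ^ 2) ‖x‖| ^ p := by
    refine integral_mono_of_nonneg (Eventually.of_forall fun x => Real.rpow_nonneg (VV_nonneg _) _)
      ?_ (Eventually.of_forall fun x => ?_)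
    · refine Continuous.integrable_of_hasCompactSupport ?_ ?_
      · exact hC1.continuous.abs.rpow_const fun x => Or.inr (by linarith)
      · exact hcs.comp_left (g := fun u : ℝ => |u| ^ p) (by rw [abs_zero, Real.zero_rpow (by linarith)])
    · simp only
      have h2 := WW_ge h hε hτ ‖x‖
      have h3 : VV f (‖x‖ + 2 * ε) ≤ VV f (max (‖x‖ + ε ^ 2 + ε ^ 2) ε) := by
        refine VV_anti h (max_le ?_ ?_)
        · linarith
        · have := norm_nonneg x; linarith
      refine Real.rpow_le_rpow (VV_nonneg _) ((h3.trans h2).trans (le_abs_self _)) (by linarith)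
  have : 0 ≤ ∫ x : EE n, VV f (‖x‖ + 2 * ε) ^ p :=
    integral_nonneg fun x => Real.rpow_nonneg (VV_nonneg _) _
  gcongr

lemma equimeas (h : AP n f G M) {t : ℝ} (ht : 0 ≤ t) :
    volume {x : EE n | t < VV f ‖x‖} = volume {x | t < f x} := by
  have ho := om_pos n
  have hn0 : n ≠ 0 := by have := h.n1; omega
  have hm0 : 0 ≤ muf f t := ENNReal.toReal_nonneg
  set r := (muf f t / unitBallVol n) ^ (1 / (n : ℝ)) with hr
  have hr0 : 0 ≤ r := by positivity
  have hrn : unitBallVol n * r ^ n = muf f t := by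
    rw [hr, ← Real.rpow_natCast, ← Real.rpow_mul (by positivity),
      one_div_mul_cancel (by exact_mod_cast hn0), Real.rpow_one]
    field_simp
  have h1 : {x : EE n | t < VV f ‖x‖} = ball 0 r := by
    ext x
    rw [mem_ball_zero_iff]
    simp only [mem_ofPred_eq]
    rw [lt_VV_iff h ht, ← hrn, max_eq_left (norm_nonneg x), mul_lt_mul_iff_right₀ ho]
    exact pow_lt_pow_iff_left₀ (norm_nonneg x) hr0 hn0
  rw [h1, vol_ball 0 hr0 (Or.inl hn0), hrn, muf, Measure.real, ENNReal.ofReal_toReal (h.fin ht)]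

lemma int_VV (h : AP n f G M) {p : ℝ} (hp : 1 ≤ p) :
    ∫ x : EE n, VV f ‖x‖ ^ p = ∫ x, f x ^ p := by
  have hm : Measurable fun x : EE n => VV f ‖x‖ := (VV_anti h).measurable.comp measurable_norm
  rw [integral_eq_lintegral_of_nonneg_ae
      (Eventually.of_forall fun x => Real.rpow_nonneg (VV_nonneg _) _)
      (hm.pow_const p).aestronglyMeasurable,
    integral_eq_lintegral_of_nonneg_ae
      (Eventually.of_forall fun x => Real.rpow_nonneg (h.f0 x) _)
      (h.fc.measurable.pow_const p).aestronglyMeasurable]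
  congr 1
  rw [lintegral_rpow_eq_lintegral_meas_lt_mul volume
      (Eventually.of_forall fun x => VV_nonneg _) hm.aemeasurable (by linarith),
    lintegral_rpow_eq_lintegral_meas_lt_mul volume
      (Eventually.of_forall h.f0) h.fc.measurable.aemeasurable (by linarith)]
  congr 1
  refine setLIntegral_congr_fun measurableSet_Ioi fun t ht => ?_
  rw [equimeas h (le_of_lt ht)]

theorem AP_main (h : AP n f G M) {p ρ : ℝ} (hp : 1 ≤ p)
    (hρ : 0 < ρ) (hv : volume {x | 0 < f x} ≤ ENNReal.ofReal (unitBallVol n * ρ ^ n)) :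
    sobolevConstant p (ball (0 : EE n) ρ) * (∫ x, f x ^ p) ^ (2 / p) ≤
      ∫ x in {x | 0 < f x}, G x ^ 2 := by
  have := nontriv h.n1
  have hVm := (VV_anti h).measurable
  obtain ⟨D, hD0, hD⟩ := h.bdd
  let ε : ℕ → ℝ := fun k => 1 / ((k : ℝ) + 1)
  have hε : Tendsto ε atTop (𝓝 0) := tendsto_one_div_add_atTop_nhds_zero_nat
  have hε0 : ∀ k, 0 < ε k := fun k => by simp only [ε]; positivity
  have hlim : Tendsto (fun k => ∫ x : EE n, VV f (‖x‖ + 2 * ε k) ^ p) atTop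
      (𝓝 (∫ x : EE n, VV f ‖x‖ ^ p)) := by
    refine tendsto_integral_of_dominated_convergence
      ((ball (0 : EE n) ρ).indicator fun _ => D ^ p) ?_ ?_ ?_ ?_
    · intro k
      exact ((hVm.comp (measurable_norm.add_const _)).pow_const p).aestronglyMeasurable
    · rw [integrable_indicator_iff measurableSet_ball]
      exact integrableOn_const measure_ball_lt_top.ne
    · intro k
      refine Eventually.of_forall fun x => ?_
      rw [Real.norm_of_nonneg (Real.rpow_nonneg (VV_nonneg _) _)]
      by_cases hx : x ∈ ball (0 : EE n) ρ
      · rw [indicator_of_mem hx]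
        exact Real.rpow_le_rpow (VV_nonneg _) (VV_le hD0 hD _) (by linarith)
      · rw [indicator_of_notMem hx]
        rw [mem_ball_zero_iff, not_lt] at hx
        rw [VV_zero h hρ hv (by have := hε0 k; linarith), Real.zero_rpow (by linarith)]
    · have : ∀ᵐ x : EE n, x ≠ 0 := by
        rw [ae_iff]; simp
      filter_upwards [this] with x hx
      have h1 := (VV_cont h (norm_pos_iff.2 hx)).tendsto
      have h2 : Tendsto (fun k => ‖x‖ + 2 * ε k) atTop (𝓝 ‖x‖) := by
        simpa using (hε.const_mul 2).const_add ‖x‖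
      exact (h1.comp h2).rpow_const (Or.inr (by linarith))
  rw [int_VV h hp] at hlim
  have hL := (hlim.rpow_const (p := 2 / p) (Or.inr (by positivity))).const_mul
    (sobolevConstant p (ball (0 : EE n) ρ))
  have hR : Tendsto (fun k => (1 + ε k) ^ (n + 1) * ∫ x in {x | 0 < f x}, G x ^ 2) atTop
      (𝓝 (∫ x in {x | 0 < f x}, G x ^ 2)) := by
    simpa using ((hε.const_add 1).pow (n + 1)).mul_const (∫ x in {x | 0 < f x}, G x ^ 2)
  refine le_of_tendsto_of_tendsto hL hR ?_
  filter_upwards [hε.eventually (gt_mem_nhds (show (0 : ℝ) < 1 / 2 by norm_num))] with k hk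
  exact stepA h hp (hε0 k) hk hρ hv

end PartF3

section PartG
open Filter Topology Module

variable {n : ℕ}

lemma adm_exists {Ω : Set (EE n)} (ho : IsOpen Ω) (hne : Ω.Nonempty) : ∃ u, Admissible Ω u := by
  obtain ⟨x, hx⟩ := hne
  obtain ⟨u, h1, h2, h3, _, h5⟩ := exists_contDiff_tsupport_subset (n := 1) (ho.mem_nhds hx)
  exact ⟨u, by simpa using h3, h2, h1, x, by rw [h5]; norm_num⟩

lemma adm_pos {p : ℝ} (hp : 1 ≤ p) {Ω : Set (EE n)} {u : EE n → ℝ} (hu : Admissible Ω u) :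
    0 < ∫ x, |u x| ^ p := by
  obtain ⟨h1, h2, h3, x, hx⟩ := hu
  refine Continuous.integral_pos_of_hasCompactSupport_nonneg_nonzero (x := x)
    (h1.continuous.abs.rpow_const fun x => Or.inr (by linarith))
    (h2.comp_left (g := fun u : ℝ => |u| ^ p) (by rw [abs_zero, Real.zero_rpow (by linarith)]))
    (fun x => Real.rpow_nonneg (abs_nonneg _) _) ?_
  have : 0 < |u x| := abs_pos.2 hx
  positivity

lemma le_sob {p : ℝ} (hp : 1 ≤ p) {Ω : Set (EE n)} (ho : IsOpen Ω) (hne : Ω.Nonempty) {c : ℝ}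
    (hc : ∀ u, Admissible Ω u → c * (∫ x, |u x| ^ p) ^ (2 / p) ≤ ∫ x, ‖fderiv ℝ u x‖ ^ 2) :
    c ≤ sobolevConstant p Ω := by
  obtain ⟨u0, hu0⟩ := adm_exists ho hne
  refine le_csInf ⟨_, u0, hu0, rfl⟩ ?_
  rintro _ ⟨u, hu, rfl⟩
  rw [quot_eq hp hu.2.2.1, le_div_iff₀ (Real.rpow_pos_of_pos (adm_pos hp hu) _)]
  exact hc u hu

lemma sob_ineq (hn : 2 ≤ n) {p : ℝ} (hp : 1 ≤ p)
    (hp2 : 3 ≤ n → p < 2 * (n : ℝ) / ((n : ℝ) - 2)) {Ω : Set (EE n)}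
    (hb : Bornology.IsBounded Ω) : ∃ K : ℝ, 0 < K ∧ ∀ u, Admissible Ω u →
      (∫ x, |u x| ^ p) ^ (2 / p) ≤ K * ∫ x, ‖fderiv ℝ u x‖ ^ 2 := by
  have hp0 : 0 < p := by linarith
  obtain ⟨s, hs1, hs2, hsn, hsp⟩ : ∃ s : ℝ, 1 ≤ s ∧ s ≤ 2 ∧ s < n ∧ s⁻¹ - (n : ℝ)⁻¹ ≤ p⁻¹ := by
    rcases Nat.lt_or_ge 2 n with h3 | h2
    · refine ⟨2, by norm_num, le_rfl, by exact_mod_cast h3, ?_⟩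
      have hn3 : (3 : ℝ) ≤ n := by exact_mod_cast h3
      have := hp2 h3
      rw [lt_div_iff₀ (by linarith)] at this
      have h4 : (2 : ℝ)⁻¹ - (n : ℝ)⁻¹ = (n - 2) / (2 * n) := by field_simp
      rw [h4, inv_eq_one_div, div_le_div_iff₀ (by positivity) hp0]
      linarith
    · have h2' : n = 2 := by omega
      subst h2'
      have hlt : 2 * p / (p + 2) < 2 := by rw [div_lt_iff₀ (by linarith)]; linarith
      refine ⟨max 1 (2 * p / (p + 2)), le_max_left _ _, max_le (by norm_num) hlt.le,
        by push_cast; exact max_lt (by norm_num) hlt, ?_⟩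
      have h5 : (max 1 (2 * p / (p + 2)))⁻¹ ≤ (2 * p / (p + 2))⁻¹ :=
        inv_anti₀ (by positivity) (le_max_right _ _)
      have h6 : (2 * p / (p + 2))⁻¹ = p⁻¹ + 2⁻¹ := by field_simp; ring
      push_cast
      linarith
  lift s to ℝ≥0 using (by linarith)
  have hpc : ∃ q : ℝ≥0, (q : ℝ) = p := ⟨⟨p, hp0.le⟩, rfl⟩
  obtain ⟨q, rfl⟩ := hpc
  set C := eLpNormLESNormFDerivOfLeConst ℝ (volume : Measure (EE n)) Ω s q with hC
  set m := volume Ω ^ (1 / (s : ℝ) - 1 / 2) with hm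
  have hmt : m ≠ ⊤ := ENNReal.rpow_ne_top_of_nonneg (by
    have : 1 / (2 : ℝ) ≤ 1 / (s : ℝ) := one_div_le_one_div_of_le (by linarith) hs2
    linarith) hb.measure_lt_top.ne
  set K : ℝ := C * m.toReal + 1 with hK
  have hK0 : 0 < K := by positivity
  refine ⟨K ^ 2, by positivity, fun u hu => ?_⟩
  obtain ⟨h1, h2, h3, -⟩ := hu
  have hsub : u.support ⊆ Ω := (subset_tsupport u).trans h3
  have hsub' : (fderiv ℝ u).support ⊆ Ω := (support_fderiv_subset ℝ).trans h3
  have hfc : Continuous (fderiv ℝ u) := h1.continuous_fderiv (by norm_num)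
  have hA := eLpNorm_le_eLpNorm_fderiv_of_le (μ := (volume : Measure (EE n))) h1 hsub
    (p := s) (q := q) (by exact_mod_cast hs1)
    (by rw [finrank_euclideanSpace_fin]; exact_mod_cast hsn)
    (by rw [finrank_euclideanSpace_fin]; exact hsp) hb
  have hB : eLpNorm (fderiv ℝ u) s volume ≤ eLpNorm (fderiv ℝ u) 2 volume * m := by
    have hres : ∀ q : ℝ≥0∞, eLpNorm (fderiv ℝ u) q (volume.restrict Ω) =
        eLpNorm (fderiv ℝ u) q volume := fun q =>
      eLpNorm_restrict_eq_of_support_subset (ε := EE n →L[ℝ] ℝ) (f := fderiv ℝ u) hsub'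
    rw [← hres, ← hres]
    have := eLpNorm_le_eLpNorm_mul_rpow_measure_univ (μ := volume.restrict Ω) (p := (s : ℝ≥0∞))
      (q := 2) (f := fderiv ℝ u) (by exact_mod_cast hs2) hfc.aestronglyMeasurable
    simpa [hm] using this
  have hD := hA.trans (mul_le_mul_right hB _)
  have hmu : MemLp u q volume := h1.continuous.memLp_of_hasCompactSupport h2
  have hmf : MemLp (fderiv ℝ u) 2 volume :=
    hfc.memLp_of_hasCompactSupport (h2.fderiv ℝ)
  rw [hmu.eLpNorm_eq_integral_rpow_norm (by simpa using hp0.ne') (by simp),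
    hmf.eLpNorm_eq_integral_rpow_norm (by simp) (by simp)] at hD
  simp only [ENNReal.coe_toReal, ENNReal.toReal_ofNat, Real.norm_eq_abs] at hD
  set P := ∫ x, |u x| ^ (q : ℝ)
  have hP0 : 0 ≤ P := integral_nonneg fun x => Real.rpow_nonneg (abs_nonneg _) _
  have e1 : ∫ x, ‖fderiv ℝ u x‖ ^ (2 : ℝ) = ∫ x, ‖fderiv ℝ u x‖ ^ 2 := by
    simp
  rw [e1] at hD
  set E := ∫ x, ‖fderiv ℝ u x‖ ^ 2
  have hE0 : 0 ≤ E := integral_nonneg fun x => sq_nonneg _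
  have hF : P ^ (q : ℝ)⁻¹ ≤ K * E ^ (2 : ℝ)⁻¹ := by
    have hR : (C : ℝ≥0∞) * (ENNReal.ofReal (E ^ (2 : ℝ)⁻¹) * m) =
        ENNReal.ofReal (C * (E ^ (2 : ℝ)⁻¹ * m.toReal)) := by
      rw [ENNReal.ofReal_mul (by positivity), ENNReal.ofReal_mul (by positivity),
        ENNReal.ofReal_toReal hmt, ENNReal.ofReal_coe_nnreal]
    rw [hR, ENNReal.ofReal_le_ofReal_iff (by positivity)] at hD
    refine hD.trans ?_
    have : 0 ≤ E ^ (2 : ℝ)⁻¹ := by positivity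
    rw [hK]
    nlinarith
  have h4 : P ^ (2 / (q : ℝ)) = (P ^ (q : ℝ)⁻¹) ^ 2 := by
    rw [← Real.rpow_natCast, ← Real.rpow_mul hP0]; congr 1; push_cast; ring
  have h5 : E = (E ^ (2 : ℝ)⁻¹) ^ 2 := by
    rw [← Real.rpow_natCast, ← Real.rpow_mul hE0]; norm_num
  rw [h4, h5, ← mul_pow]
  gcongr

lemma sob_pos (hn : 2 ≤ n) {p : ℝ} (hp : 1 ≤ p)
    (hp2 : 3 ≤ n → p < 2 * (n : ℝ) / ((n : ℝ) - 2)) {Ω : Set (EE n)} (ho : IsOpen Ω)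
    (hne : Ω.Nonempty) (hb : Bornology.IsBounded Ω) : 0 < sobolevConstant p Ω := by
  obtain ⟨K, hK, h⟩ := sob_ineq hn hp hp2 hb
  refine (show (0 : ℝ) < 1 / K by positivity).trans_le (le_sob hp ho hne fun u hu => ?_)
  have := h u hu
  rw [div_mul_eq_mul_div, one_mul, div_le_iff₀ hK]
  linarith

lemma sob_transl {p : ℝ} (hp : 1 ≤ p) (c c' : EE n) {ρ : ℝ} (hρ : 0 < ρ) :
    sobolevConstant p (ball c' ρ) ≤ sobolevConstant p (ball c ρ) := by
  refine le_sob hp isOpen_ball ⟨c, mem_ball_self hρ⟩ fun u hu => ?_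
  obtain ⟨h1, h2, h3, -⟩ := hu
  have e := tsupport_comp_eq_preimage u (Homeomorph.addRight (c - c'))
  have hv : ContDiff ℝ 1 (u ∘ Homeomorph.addRight (c - c')) :=
    h1.comp (show ContDiff ℝ 1 fun x => x + (c - c') by fun_prop)
  have := sob_le hp (Ω := ball c' ρ) hv (h2.comp_homeomorph _) (by
    rw [e]
    intro x hx
    have := h3 hx
    rw [mem_ball, dist_eq_norm] at this ⊢
    simp only [Homeomorph.coe_addRight] at this
    convert this using 2
    abel)
  have e2 : ∀ x, fderiv ℝ (u ∘ Homeomorph.addRight (c - c')) x = fderiv ℝ u (x + (c - c')) :=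
    fun x => fderiv_comp_add_right (f := u) (c - c')
  simp only [e2] at this
  rw [integral_add_right_eq_self (fun x => ‖fderiv ℝ u x‖ ^ 2)] at this
  simp only [Function.comp_apply, Homeomorph.coe_addRight] at this
  rw [integral_add_right_eq_self (fun x => |u x| ^ p)] at this
  exact this

lemma sob_scale {p : ℝ} (hp : 1 ≤ p) {R r : ℝ} (hR : 0 < R) (hr : 0 < r) :
    sobolevConstant p (ball (0 : EE n) (r * R)) ≤
      r ^ ((n : ℝ) - 2 - 2 * n / p) * sobolevConstant p (ball (0 : EE n) R) := by
  set α := (n : ℝ) - 2 - 2 * n / p with hα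
  have hra : 0 < r ^ α := Real.rpow_pos_of_pos hr _
  rw [← div_le_iff₀' hra]
  refine le_sob hp isOpen_ball ⟨0, mem_ball_self hR⟩ fun u hu => ?_
  obtain ⟨h1, h2, h3, -⟩ := hu
  let φ := Homeomorph.smulOfNeZero (α := EE n) (r⁻¹) (inv_ne_zero hr.ne')
  have e := tsupport_comp_eq_preimage u φ
  have hv : ContDiff ℝ 1 (u ∘ φ) :=
    h1.comp (show ContDiff ℝ 1 fun x => r⁻¹ • x by fun_prop)
  have := sob_le hp (Ω := ball 0 (r * R)) hv (h2.comp_homeomorph _) (by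
    rw [e]
    intro x hx
    have := h3 hx
    rw [mem_ball_zero_iff] at this ⊢
    have e3 : ‖φ x‖ = r⁻¹ * ‖x‖ := by
      change ‖r⁻¹ • x‖ = _
      rw [norm_smul, Real.norm_of_nonneg (by positivity)]
    rw [e3, inv_mul_lt_iff₀ hr] at this
    exact this)
  have e2 : ∀ x, ‖fderiv ℝ (u ∘ φ) x‖ ^ 2 = r⁻¹ ^ 2 * ‖fderiv ℝ u (r⁻¹ • x)‖ ^ 2 := by
    intro x
    have : fderiv ℝ (u ∘ φ) x = r⁻¹ • fderiv ℝ u (r⁻¹ • x) := fderiv_comp_smul (f := u) r⁻¹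
    rw [this, norm_smul, mul_pow, Real.norm_of_nonneg (by positivity)]
  have e4 : ∀ x, |(u ∘ φ) x| ^ p = |u (r⁻¹ • x)| ^ p := fun x => rfl
  simp only [e2, e4] at this
  rw [integral_const_mul, Measure.integral_comp_inv_smul volume (fun x => ‖fderiv ℝ u x‖ ^ 2),
    Measure.integral_comp_inv_smul volume (fun x => |u x| ^ p), finrank_euclideanSpace_fin,
    abs_of_nonneg (by positivity), smul_eq_mul, smul_eq_mul] at this
  set P := ∫ x, |u x| ^ p
  have hP0 : 0 ≤ P := integral_nonneg fun x => Real.rpow_nonneg (abs_nonneg _) _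
  set E := ∫ x, ‖fderiv ℝ u x‖ ^ 2
  rw [Real.mul_rpow (by positivity) hP0] at this
  have e5 : r⁻¹ ^ 2 * (r ^ n * E) = r ^ α * (r ^ n) ^ (2 / p) * E := by
    have : r ^ α * (r ^ n) ^ (2 / p) = r⁻¹ ^ 2 * r ^ n := by
      rw [← Real.rpow_natCast r n, ← Real.rpow_mul hr.le, ← Real.rpow_add hr, inv_pow,
        ← Real.rpow_natCast r 2, ← Real.rpow_neg hr.le, ← Real.rpow_add hr]
      congr 1
      rw [hα]; push_cast; ring
    rw [this]; ring
  rw [e5] at this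
  have hrn : 0 < (r ^ n) ^ (2 / p) := by positivity
  rw [div_mul_eq_mul_div, div_le_iff₀' hra]
  refine le_of_mul_le_mul_right ?_ hrn
  linarith

lemma alpha_neg (hn : 2 ≤ n) {p : ℝ} (hp : 1 ≤ p)
    (hp2 : 3 ≤ n → p < 2 * (n : ℝ) / ((n : ℝ) - 2)) : (n : ℝ) - 2 - 2 * n / p < 0 := by
  rw [sub_neg, lt_div_iff₀ (by linarith)]
  rcases Nat.lt_or_ge 2 n with h3 | h2
  · have hn3 : (3 : ℝ) ≤ n := by exact_mod_cast h3
    have := hp2 h3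
    rw [lt_div_iff₀ (by linarith)] at this
    linarith
  · have h2' : n = 2 := by omega
    subst h2'
    norm_num

lemma sob_strict (hn : 2 ≤ n) {p : ℝ} (hp : 1 ≤ p)
    (hp2 : 3 ≤ n → p < 2 * (n : ℝ) / ((n : ℝ) - 2)) {R R' : ℝ} (hR : 0 < R) (hRR : R < R') :
    sobolevConstant p (ball (0 : EE n) R') < sobolevConstant p (ball (0 : EE n) R) := by
  have h1 := sob_scale (n := n) hp hR (div_pos (hR.trans hRR) hR)
  rw [div_mul_cancel₀ _ hR.ne'] at h1
  have hpos := sob_pos hn hp hp2 (isOpen_ball (x := (0 : EE n)) (ε := R)) ⟨0, mem_ball_self hR⟩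
    isBounded_ball
  have h2 := Real.rpow_lt_one_of_one_lt_of_neg ((one_lt_div hR).2 hRR) (alpha_neg hn hp hp2)
  nlinarith

end PartG

section PartH
open Filter Topology Module

variable {n : ℕ}

lemma grad_bdd {f : EE n → ℝ} (hf : ContDiff ℝ 1 f) (hc : HasCompactSupport f) :
    ∃ M, ∀ x, ‖fderiv ℝ f x‖ ≤ M :=
  (hc.fderiv ℝ).exists_bound_of_continuous (hf.continuous_fderiv one_ne_zero)

lemma grad_meas {f : EE n → ℝ} (hf : ContDiff ℝ 1 f) : Measurable fun x => ‖fderiv ℝ f x‖ :=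
  (hf.continuous_fderiv one_ne_zero).norm.measurable

lemma grad_sq_int {f : EE n → ℝ} (hf : ContDiff ℝ 1 f) (hc : HasCompactSupport f) :
    Integrable fun x => ‖fderiv ℝ f x‖ ^ 2 := by
  have h1 : HasCompactSupport fun x => ‖fderiv ℝ f x‖ ^ 2 :=
    (hc.fderiv ℝ).comp_left (g := fun L : EE n →L[ℝ] ℝ => ‖L‖ ^ 2) (by simp)
  exact ((hf.continuous_fderiv one_ne_zero).norm.pow 2).integrable_of_hasCompactSupport h1

lemma grad_int {f : EE n → ℝ} (hf : ContDiff ℝ 1 f) (hc : HasCompactSupport f) :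
    Integrable fun x => ‖fderiv ℝ f x‖ :=
  (hf.continuous_fderiv one_ne_zero).norm.integrable_of_hasCompactSupport (hc.fderiv ℝ).norm

lemma grad_sq_le {f : EE n → ℝ} (hf : ContDiff ℝ 1 f) (hc : HasCompactSupport f)
    (S : Set (EE n)) : ∫ x in S, ‖fderiv ℝ f x‖ ^ 2 ≤ ∫ x, ‖fderiv ℝ f x‖ ^ 2 :=
  setIntegral_le_integral (grad_sq_int hf hc) (Eventually.of_forall fun x => sq_nonneg _)

/-- shifted truncation; `T = 0` gives `|f|` -/
lemma AP_trunc (hn : 1 ≤ n) {f : EE n → ℝ} (hf : ContDiff ℝ 1 f) (hc : HasCompactSupport f)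
    {T : ℝ} (hT : 0 ≤ T) : ∃ M, AP n (fun x => max (|f x| - T) 0) (fun x => ‖fderiv ℝ f x‖) M := by
  obtain ⟨M, hM⟩ := grad_bdd hf hc
  have hfc := hf.continuous
  refine ⟨M, hn, by fun_prop, fun x => le_max_right _ _, ?_, grad_meas hf, fun x => norm_nonneg _,
    hM, ?_⟩
  · exact hc.comp_left (g := fun u : ℝ => max (|u| - T) 0) (by simpa using hT)
  · intro R s t hR hs hst hv
    have e1 : {x | s < max (|f x| - T) 0} = {x | s + T < |f x|} := by
      ext x; simp only [mem_ofPred_eq, lt_max_iff]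
      constructor
      · rintro (h | h) <;> linarith
      · intro h; left; linarith
    have e2 : {x | t ≤ max (|f x| - T) 0} = {x | t + T ≤ |f x|} := by
      ext x; simp only [mem_ofPred_eq, le_max_iff]
      constructor
      · rintro (h | h) <;> linarith
      · intro h; left; linarith
    have e3 : {x | s < max (|f x| - T) 0 ∧ max (|f x| - T) 0 < t} =
        {x | s + T < |f x| ∧ |f x| < t + T} := by
      ext x; simp only [mem_ofPred_eq, lt_max_iff, max_lt_iff]
      constructor
      · rintro ⟨h | h, h2, h3⟩ <;> constructor <;> linarith
      · rintro ⟨h1, h2⟩; exact ⟨Or.inl (by linarith), by linarith, by linarith⟩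
    rw [e1] at hv
    rw [e2, e3]
    have := band_iso hf hc (s := s + T) (t := t + T) (by linarith) (by linarith) hR hv
    have e4 : t + T - (s + T) = t - s := by ring
    rwa [e4] at this

lemma trunc_ineq (hn : 1 ≤ n) {p : ℝ} (hp : 1 ≤ p) {f : EE n → ℝ} (hf : ContDiff ℝ 1 f)
    (hc : HasCompactSupport f) {T : ℝ} (hT : 0 ≤ T) {ρ : ℝ} (hρ : 0 < ρ)
    (hv : volume {x | T < |f x|} ≤ ENNReal.ofReal (unitBallVol n * ρ ^ n)) :
    sobolevConstant p (ball (0 : EE n) ρ) * (∫ x, (max (|f x| - T) 0) ^ p) ^ (2 / p) ≤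
      ∫ x, ‖fderiv ℝ f x‖ ^ 2 := by
  obtain ⟨M, hA⟩ := AP_trunc hn hf hc hT
  refine (AP_main hA hp hρ ?_).trans (grad_sq_le hf hc _)
  convert hv using 2
  ext x; simp only [mem_ofPred_eq, lt_max_iff, lt_irrefl, or_false, sub_pos]

theorem FK (hn : 1 ≤ n) {p : ℝ} (hp : 1 ≤ p) {Ω : Set (EE n)} (ho : IsOpen Ω) (hne : Ω.Nonempty)
    {ρ : ℝ} (hρ : 0 < ρ) (hv : volume Ω ≤ ENNReal.ofReal (unitBallVol n * ρ ^ n)) :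
    sobolevConstant p (ball (0 : EE n) ρ) ≤ sobolevConstant p Ω := by
  refine le_sob hp ho hne fun u hu => ?_
  have := trunc_ineq hn hp hu.1 hu.2.1 (le_refl (0 : ℝ)) hρ
    ((measure_mono ((mem_tsupp_of_lt le_rfl).trans hu.2.2.1)).trans hv)
  simpa using this

/-- the case where the superlevel set `{T ≤ |f|}` is not too large -/
lemma caseA (hn : 1 ≤ n) {p : ℝ} (hp : 1 ≤ p) {f : EE n → ℝ} {Ω : Set (EE n)}
    (hf : Admissible Ω f) (hΩ : MeasurableSet Ω) {V : ℝ} (hV : 0 < V)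
    (hΩV : volume Ω = ENNReal.ofReal V) {θ : ℝ} (hθ : 0 < θ) (hθ1 : θ < 1) {ρ : ℝ} (hρ : 0 < ρ)
    (hv : volume {x | θ * ((∫ x, |f x| ^ p) / V) ^ (1 / p) < |f x|} ≤
      ENNReal.ofReal (unitBallVol n * ρ ^ n)) :
    sobolevConstant p (ball (0 : EE n) ρ) * (1 - θ) ^ 2 * (∫ x, |f x| ^ p) ^ (2 / p) ≤
      ∫ x, ‖fderiv ℝ f x‖ ^ 2 := by
  set P := ∫ x, |f x| ^ p with hP
  have hP0 : 0 < P := adm_pos hp hf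
  have hp0 : 0 < p := by linarith
  set A := (P / V) ^ (1 / p) with hA
  have hA0 : 0 < A := by positivity
  have hAp : A ^ p = P / V := by
    rw [hA, ← Real.rpow_mul (by positivity), one_div_mul_cancel hp0.ne', Real.rpow_one]
  obtain ⟨hf1, hfc, hfs, hfx⟩ := hf
  have h1 := trunc_ineq hn hp hf1 hfc (T := θ * A) (by positivity) hρ hv
  set Q := ∫ x, (max (|f x| - θ * A) 0) ^ p with hQ
  have hgi : Integrable fun x => (max (|f x| - θ * A) 0) ^ p := by
    refine Continuous.integrable_of_hasCompactSupport ?_ ?_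
    · have := hf1.continuous
      exact (show Continuous fun x => max (|f x| - θ * A) 0 by fun_prop).rpow_const
        fun x => Or.inr hp0.le
    · refine hfc.comp_left (g := fun u : ℝ => (max (|u| - θ * A) 0) ^ p) ?_
      rw [abs_zero, zero_sub, max_eq_right (by simp; positivity), Real.zero_rpow hp0.ne']
  have hQ0 : 0 ≤ Q := integral_nonneg fun x => Real.rpow_nonneg (le_max_right _ _) _
  have h1θ : 0 < 1 - θ := by linarith
  have hpt : ∀ x, |f x| ^ p ≤ (1 - θ) * ((1 - θ) ^ p)⁻¹ * (max (|f x| - θ * A) 0) ^ p +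
      Ω.indicator (fun _ => θ * A ^ p) x := by
    intro x
    by_cases hx : x ∈ Ω
    · rw [indicator_of_mem hx]
      set g := max (|f x| - θ * A) 0 with hg
      have hg0 : 0 ≤ g := le_max_right _ _
      have hcv := (convexOn_rpow hp).2 (show g / (1 - θ) ∈ Ici 0 from div_nonneg hg0 h1θ.le)
        (show A ∈ Ici 0 from hA0.le) h1θ.le hθ.le (by ring)
      simp only [smul_eq_mul] at hcv
      rw [mul_div_cancel₀ _ h1θ.ne', Real.div_rpow hg0 h1θ.le] at hcv
      calc |f x| ^ p ≤ (g + θ * A) ^ p := by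
            refine Real.rpow_le_rpow (abs_nonneg _) ?_ hp0.le
            have : |f x| - θ * A ≤ g := le_max_left _ _
            linarith
        _ ≤ _ := hcv
        _ = _ := by ring
    · have : f x = 0 := image_eq_zero_of_notMem_tsupport (f := f) (fun hh => hx (hfs hh))
      rw [this, abs_zero, Real.zero_rpow hp0.ne', indicator_of_notMem hx]
      have : 0 ≤ (max (0 - θ * A) 0) ^ p := Real.rpow_nonneg (le_max_right _ _) _
      positivity
  have hii : Integrable (Ω.indicator (fun _ => θ * A ^ p)) := by
    rw [integrable_indicator_iff hΩ]
    exact integrableOn_const (by rw [hΩV]; exact ENNReal.ofReal_ne_top)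
  have h2 : P ≤ (1 - θ) * ((1 - θ) ^ p)⁻¹ * Q + V * (θ * A ^ p) := by
    have h3 := integral_mono_of_nonneg
      (Eventually.of_forall fun x => Real.rpow_nonneg (abs_nonneg (f x)) p)
      ((hgi.const_mul ((1 - θ) * ((1 - θ) ^ p)⁻¹)).add hii) (Eventually.of_forall hpt)
    rw [← hP] at h3
    refine h3.trans (le_of_eq ?_)
    simp only [Pi.add_apply]
    rw [integral_add (hgi.const_mul _) hii, integral_const_mul, integral_indicator hΩ,
      setIntegral_const, Measure.real, hΩV, ENNReal.toReal_ofReal hV.le, smul_eq_mul]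
  have h4 : (1 - θ) ^ p * P ≤ Q := by
    rw [hAp] at h2
    have e : V * (θ * (P / V)) = θ * P := by field_simp
    rw [e] at h2
    have h5 : (1 - θ) * P ≤ (1 - θ) * (((1 - θ) ^ p)⁻¹ * Q) := by linarith
    have h6 := le_of_mul_le_mul_left h5 h1θ
    have h7 : 0 < (1 - θ) ^ p := by positivity
    rwa [← div_eq_inv_mul, le_div_iff₀' h7] at h6
  have h8 : (1 - θ) ^ 2 * P ^ (2 / p) ≤ Q ^ (2 / p) := by
    have : ((1 - θ) ^ p * P) ^ (2 / p) ≤ Q ^ (2 / p) := by gcongr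
    rw [Real.mul_rpow (by positivity) hP0.le, ← Real.rpow_mul h1θ.le,
      mul_div_cancel₀ _ hp0.ne'] at this
    simpa using this
  refine le_trans ?_ h1
  rw [mul_assoc]
  exact mul_le_mul_of_nonneg_left h8 (sob_nonneg _ _)

/-- the case where small superlevel bands have improved isoperimetry -/
lemma caseB (hn : 1 ≤ n) {p : ℝ} (hp : 1 ≤ p) {f : EE n → ℝ} (hf : ContDiff ℝ 1 f)
    (hc : HasCompactSupport f) {T l : ℝ} (hT : 0 < T) (hl0 : 0 < l) (hl : l ≤ 1)
    {ρ : ℝ} (hρ : 0 < ρ)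
    (hv : volume {x | 0 < |f x|} ≤ ENNReal.ofReal (unitBallVol n * ρ ^ n))
    (himp : ∀ R s t : ℝ, 0 < R → 0 ≤ s → s < t → t ≤ T →
      volume {x | s < |f x|} ≤ ENNReal.ofReal (unitBallVol n * R ^ n) →
      (n / R) * (t - s) * volume.real {x | t ≤ |f x|} ≤
        l * ∫ x in {x | s < |f x| ∧ |f x| < t}, ‖fderiv ℝ f x‖) :
    sobolevConstant p (ball (0 : EE n) ρ) * (∫ x, |f x| ^ p) ^ (2 / p) +
      (1 - l ^ 2) * ∫ x in {x | 0 < |f x| ∧ |f x| < T}, ‖fderiv ℝ f x‖ ^ 2 ≤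
      ∫ x, ‖fderiv ℝ f x‖ ^ 2 := by
  obtain ⟨M, hM⟩ := grad_bdd hf hc
  have hfc := hf.continuous
  have hmS : ∀ s t : ℝ, MeasurableSet {x | s < |f x| ∧ |f x| < t} := fun s t =>
    ((isOpen_lt continuous_const hfc.abs).inter (isOpen_lt hfc.abs continuous_const)).measurableSet
  have hmT : MeasurableSet {x | |f x| < T} := (isOpen_lt hfc.abs continuous_const).measurableSet
  set c : EE n → ℝ := fun x => {x | |f x| < T}.piecewise (fun _ => l) (fun _ => 1) x with hcdef
  have hcm : Measurable c := Measurable.piecewise hmT measurable_const measurable_const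
  have hcl : ∀ x, |f x| < T → c x = l := fun x hx =>
    piecewise_eq_of_mem _ _ _ (show x ∈ {x | |f x| < T} from hx)
  have hc1 : ∀ x, T ≤ |f x| → c x = 1 := fun x hx =>
    piecewise_eq_of_notMem _ _ _ (show x ∉ {x | |f x| < T} from not_lt.2 hx)
  have hc01 : ∀ x, 0 ≤ c x ∧ c x ≤ 1 := fun x => by
    rcases lt_or_ge (|f x|) T with h | h
    · rw [hcl x h]; exact ⟨hl0.le, hl⟩
    · rw [hc1 x h]; norm_num
  set G : EE n → ℝ := fun x => c x * ‖fderiv ℝ f x‖ with hG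
  have hG0 : ∀ x, 0 ≤ G x := fun x => mul_nonneg (hc01 x).1 (norm_nonneg _)
  have hGle : ∀ x, G x ≤ ‖fderiv ℝ f x‖ := fun x =>
    mul_le_of_le_one_left (norm_nonneg _) (hc01 x).2
  have hGm : Measurable G := hcm.mul (grad_meas hf)
  have hGi : Integrable G := (grad_int hf hc).mono' hGm.aestronglyMeasurable
    (Eventually.of_forall fun x => by rw [Real.norm_of_nonneg (hG0 x)]; exact hGle x)
  have hlow : ∀ s t : ℝ, t ≤ T → ∫ x in {x | s < |f x| ∧ |f x| < t}, G x =
      l * ∫ x in {x | s < |f x| ∧ |f x| < t}, ‖fderiv ℝ f x‖ := by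
    intro s t ht
    rw [← integral_const_mul]
    refine setIntegral_congr_fun (hmS s t) fun x hx => ?_
    simp only [hG]
    rw [hcl x (hx.2.trans_le ht)]
  have hhigh : ∀ s t : ℝ, T ≤ s → ∫ x in {x | s < |f x| ∧ |f x| < t}, G x =
      ∫ x in {x | s < |f x| ∧ |f x| < t}, ‖fderiv ℝ f x‖ := by
    intro s t ht
    refine setIntegral_congr_fun (hmS s t) fun x hx => ?_
    simp only [hG]
    rw [hc1 x (ht.trans hx.1.le), one_mul]
  have hfin : ∀ t : ℝ, 0 < t → volume {x | t ≤ |f x|} ≠ ⊤ := fun t ht =>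
    ((measure_mono (fun x hx => mem_tsupp_of_lt (f := f) (s := t / 2) (by linarith) (by
      simp only [mem_ofPred_eq] at hx ⊢; linarith))).trans_lt hc.isCompact.measure_lt_top).ne
  have hAP : AP n (fun x => |f x|) G M := by
    refine ⟨hn, hfc.abs, fun x => abs_nonneg _, hc.comp_left (g := fun u : ℝ => |u|) abs_zero, hGm,
      hG0, fun x => (hGle x).trans (hM x), ?_⟩
    intro R s t hR hs hst hvs
    rcases le_or_gt t T with ht | ht
    · rw [hlow s t ht]
      exact himp R s t hR hs hst ht hvs
    · rcases le_or_gt T s with hsT | hsT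
      · rw [hhigh s t hsT]
        exact band_iso hf hc hs hst hR hvs
      · have h1 := himp R s T hR hs hsT le_rfl hvs
        have h2 := band_iso hf hc hT.le ht hR ((measure_mono (fun x hx => by
          simp only [mem_ofPred_eq] at hx ⊢; linarith)).trans hvs)
        rw [← hlow s T le_rfl] at h1
        rw [← hhigh T t le_rfl] at h2
        have hm : volume.real {x | t ≤ |f x|} ≤ volume.real {x | T ≤ |f x|} :=
          measureReal_mono (fun x hx => by simp only [mem_ofPred_eq] at hx ⊢; linarith) (hfin T hT)
        have hdis : Disjoint {x | s < |f x| ∧ |f x| < T} {x | T < |f x| ∧ |f x| < t} := by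
          rw [Set.disjoint_left]
          rintro x ⟨_, h3⟩ ⟨h4, _⟩
          linarith
        have h5 : ∫ x in {x | s < |f x| ∧ |f x| < T} ∪ {x | T < |f x| ∧ |f x| < t}, G x ≤
            ∫ x in {x | s < |f x| ∧ |f x| < t}, G x := by
          refine setIntegral_mono_set hGi.integrableOn (Eventually.of_forall hG0)
            (Eventually.of_forall ?_)
          rintro x (⟨h3, h4⟩ | ⟨h3, h4⟩)
          · exact ⟨h3, h4.trans ht⟩
          · exact ⟨hsT.trans h3, h4⟩
        rw [setIntegral_union hdis (hmS _ _) hGi.integrableOn hGi.integrableOn] at h5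
        have h6 : (n / R) * (T - s) * volume.real {x | t ≤ |f x|} ≤
            (n / R) * (T - s) * volume.real {x | T ≤ |f x|} := by
          have : 0 ≤ T - s := by linarith
          gcongr
        have h7 : (n / R) * (t - s) * volume.real {x | t ≤ |f x|} =
          (n / R) * (T - s) * volume.real {x | t ≤ |f x|} +
          (n / R) * (t - T) * volume.real {x | t ≤ |f x|} := by ring
        linarith
  have hmain := AP_main hAP hp hρ hv
  have hsq := grad_sq_int hf hc
  have hG2 : Integrable fun x => G x ^ 2 := hsq.mono' (hGm.pow_const 2).aestronglyMeasurable
    (Eventually.of_forall fun x => by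
      rw [Real.norm_of_nonneg (sq_nonneg _)]
      exact pow_le_pow_left₀ (hG0 x) (hGle x) 2)
  have h8 : ∫ x in {x | 0 < |f x|}, G x ^ 2 ≤ ∫ x, G x ^ 2 :=
    setIntegral_le_integral hG2 (Eventually.of_forall fun x => sq_nonneg _)
  have h9 : ∫ x, G x ^ 2 + {x | 0 < |f x| ∧ |f x| < T}.indicator
      (fun x => (1 - l ^ 2) * ‖fderiv ℝ f x‖ ^ 2) x ≤ ∫ x, ‖fderiv ℝ f x‖ ^ 2 := by
    refine integral_mono (hG2.add ((hsq.const_mul _).indicator (hmS 0 T))) hsq fun x => ?_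
    simp only
    by_cases hx : x ∈ {x | 0 < |f x| ∧ |f x| < T}
    · rw [indicator_of_mem hx]
      simp only [hG]
      rw [hcl x hx.2]
      exact le_of_eq (by ring)
    · rw [indicator_of_notMem hx, add_zero]
      exact pow_le_pow_left₀ (hG0 x) (hGle x) 2
  rw [integral_add hG2 ((hsq.const_mul _).indicator (hmS 0 T)), integral_indicator (hmS 0 T),
    integral_const_mul] at h9
  linarith

end PartH

section PartI
open Filter Topology Module

lemma imp_band {N : ℕ} {Ω : Set (EE (N + 1))} {ρ δ e V : ℝ} (hρ : 0 < ρ) (hδ : 0 < δ)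
    {E : Set (EE (N + 1))} (hEm : MeasurableSet E) (hEΩ : E ⊆ Ω) (hΩm : MeasurableSet Ω)
    (hV : 0 < V) (hΩV : volume Ω = ENNReal.ofReal V) (he : e = volume.real E)
    (hE : ∀ h : EE (N + 1) → ℝ, ContDiff ℝ 1 h → HasCompactSupport h → (∀ x, 0 ≤ h x) →
      tsupport h ⊆ Ω →
      ∫ x, (((N + 1 : ℕ) : ℝ) / ρ + E.indicator (fun _ => δ) x) * h x ≤ ∫ x, ‖fderiv ℝ h x‖)
    {f : EE (N + 1) → ℝ} (hf : ContDiff ℝ 1 f) (hc : HasCompactSupport f) (hfs : tsupport f ⊆ Ω)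
    {s t : ℝ} (hs : 0 ≤ s) (hst : s < t) (hm : V - volume.real {x | t ≤ |f x|} ≤ e / 2) :
    (t - s) * (((N + 1 : ℕ) : ℝ) / ρ * volume.real {x | t ≤ |f x|} + δ * (e / 2)) ≤
      ∫ x in {x | s < |f x| ∧ |f x| < t}, ‖fderiv ℝ f x‖ := by
  have hSm : MeasurableSet {x | t ≤ |f x|} :=
    (isClosed_le continuous_const hf.continuous.abs).measurableSet
  have hSΩ : {x | t ≤ |f x|} ⊆ Ω := fun x hx =>
    hfs (mem_tsupp_of_lt hs (lt_of_lt_of_le hst hx))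
  have hΩf : volume Ω ≠ ⊤ := by rw [hΩV]; exact ENNReal.ofReal_ne_top
  have hSf : volume {x | t ≤ |f x|} ≠ ⊤ := ne_top_of_le_ne_top hΩf (measure_mono hSΩ)
  have hΩr : volume.real Ω = V := by rw [measureReal_def, hΩV, ENNReal.toReal_ofReal hV.le]
  have hb := band hf hc (w := fun x => ((N + 1 : ℕ) : ℝ) / ρ + E.indicator (fun _ => δ) x)
    (measurable_const.add (measurable_const.indicator hEm))
    (fun x => add_nonneg (by positivity) (indicator_nonneg (fun _ _ => hδ.le) x))
    (B := ((N + 1 : ℕ) : ℝ) / ρ + δ)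
    (fun x => add_le_add le_rfl (indicator_le_self' (fun _ _ => hδ.le) x)) hs hst
    (fun h h1 h2 h3 h4 => hE h h1 h2 h3 (h4.trans ((mem_tsupp_of_lt hs).trans hfs)))
  refine le_trans (mul_le_mul_of_nonneg_left ?_ (by linarith)) hb
  have hi2 : IntegrableOn (E.indicator (fun _ => δ)) {x | t ≤ |f x|} :=
    (integrableOn_const hSf).indicator hEm
  have hi1 : IntegrableOn (fun _ : EE (N + 1) => ((N + 1 : ℕ) : ℝ) / ρ) {x | t ≤ |f x|} :=
    integrableOn_const hSf
  have hia := integral_add hi1 hi2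
  rw [hia, setIntegral_const, setIntegral_indicator hEm,
    setIntegral_const, smul_eq_mul, smul_eq_mul, mul_comm (volume.real _), mul_comm _ δ]
  have hd : volume.real (Ω \ {x | t ≤ |f x|}) = V - volume.real {x | t ≤ |f x|} := by
    rw [measureReal_sdiff hSΩ hSm hΩf, hΩr]
  have h1 : e ≤ volume.real ({x | t ≤ |f x|} ∩ E) + volume.real (Ω \ {x | t ≤ |f x|}) := by
    rw [he]
    refine le_trans (measureReal_mono (fun x hx => ?_) ?_) (measureReal_union_le _ _)
    · by_cases hxS : x ∈ {x | t ≤ |f x|}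
      · exact Or.inl ⟨hxS, hx⟩
      · exact Or.inr ⟨hEΩ hx, hxS⟩
    · exact ne_top_of_le_ne_top hΩf (measure_mono (union_subset (inter_subset_left.trans hSΩ)
        diff_subset))
  have h2 : e / 2 ≤ volume.real ({x | t ≤ |f x|} ∩ E) := by linarith
  have := mul_le_mul_of_nonneg_left h2 hδ.le
  linarith

theorem strict_FK {N : ℕ} (hN : 1 ≤ N) {p : ℝ} (hp : 1 ≤ p)
    (hp2 : 3 ≤ N + 1 → p < 2 * ((N + 1 : ℕ) : ℝ) / (((N + 1 : ℕ) : ℝ) - 2))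
    {Ω : Set (EE (N + 1))} (ho : IsOpen Ω) (hne : Ω.Nonempty) {ρ : ℝ} (hρ : 0 < ρ)
    (hv : volume Ω = ENNReal.ofReal (unitBallVol (N + 1) * ρ ^ (N + 1)))
    (himp : Improved N Ω ρ) :
    sobolevConstant p (ball (0 : EE (N + 1)) ρ) < sobolevConstant p Ω := by
  obtain ⟨δ, hδ, E, hEm, hEΩ, hEpos, hE⟩ := himp
  have hom := om_pos (N + 1)
  obtain ⟨V, hVdef⟩ : ∃ V, V = unitBallVol (N + 1) * ρ ^ (N + 1) := ⟨_, rfl⟩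
  have hV : 0 < V := by rw [hVdef]; positivity
  have hΩV : volume Ω = ENNReal.ofReal V := by rw [hVdef, hv]
  have hΩf : volume Ω ≠ ⊤ := by rw [hΩV]; exact ENNReal.ofReal_ne_top
  have hΩr : volume.real Ω = V := by rw [measureReal_def, hΩV, ENNReal.toReal_ofReal hV.le]
  obtain ⟨e, he⟩ : ∃ e, e = volume.real E := ⟨_, rfl⟩
  have he0 : 0 < e := by
    rw [he]
    exact ENNReal.toReal_pos hEpos.ne' (ne_top_of_le_ne_top hΩf (measure_mono hEΩ))
  obtain ⟨n, hn⟩ : ∃ n : ℝ, n = ((N + 1 : ℕ) : ℝ) := ⟨_, rfl⟩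
  have hn0 : 0 < n := by rw [hn]; positivity
  obtain ⟨d, hd⟩ : ∃ d, d = δ * e * ρ / (2 * n * V) := ⟨_, rfl⟩
  have hd0 : 0 < d := by rw [hd]; positivity
  obtain ⟨lam, hlam1, hlamsq⟩ : ∃ lam : ℝ, 1 < lam ∧ lam ^ 2 = 1 + d :=
    ⟨√(1 + d), by rw [Real.lt_sqrt zero_le_one]; linarith, Real.sq_sqrt (by linarith)⟩
  have hlam0 : 0 < lam := by linarith
  -- the radius ρ1
  obtain ⟨ρ1, hρ1, hρ1ρ, hρl, hρe⟩ : ∃ ρ1, 0 < ρ1 ∧ ρ1 < ρ ∧ ρ ≤ lam * ρ1 ∧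
      V - unitBallVol (N + 1) * ρ1 ^ (N + 1) ≤ e / 2 := by
    have e1 : ∀ᶠ r in 𝓝[<] ρ, 0 < r := nhdsWithin_le_nhds (lt_mem_nhds hρ)
    have e2 : ∀ᶠ r in 𝓝[<] ρ, r < ρ := self_mem_nhdsWithin
    have e3 : ∀ᶠ r in 𝓝[<] ρ, ρ < lam * r := by
      refine nhdsWithin_le_nhds ((continuous_const.mul continuous_id).continuousAt.eventually
        (lt_mem_nhds ?_))
      show ρ < lam * ρ
      nlinarith
    have e4 : ∀ᶠ r in 𝓝[<] ρ, V - unitBallVol (N + 1) * r ^ (N + 1) < e / 2 := by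
      have hcont : Continuous fun r : ℝ => V - unitBallVol (N + 1) * r ^ (N + 1) := by fun_prop
      refine nhdsWithin_le_nhds (hcont.continuousAt.eventually (gt_mem_nhds ?_))
      show V - unitBallVol (N + 1) * ρ ^ (N + 1) < e / 2
      rw [← hVdef]; linarith
    obtain ⟨r, h1, h2, h3, h4⟩ := (e1.and (e2.and (e3.and e4))).exists
    exact ⟨r, h1, h2, h3.le, h4.le⟩
  obtain ⟨W, hW⟩ : ∃ W, W = unitBallVol (N + 1) * ρ1 ^ (N + 1) := ⟨_, rfl⟩
  have hW0 : 0 < W := by rw [hW]; positivity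
  obtain ⟨Cs, hCs⟩ : ∃ Cs, Cs = sobolevConstant p (ball (0 : EE (N + 1)) ρ) := ⟨_, rfl⟩
  obtain ⟨C1, hC1⟩ : ∃ C1, C1 = sobolevConstant p (ball (0 : EE (N + 1)) ρ1) := ⟨_, rfl⟩
  have hCC : Cs < C1 := by rw [hCs, hC1]; exact sob_strict (by omega) hp hp2 hρ1 hρ1ρ
  obtain ⟨θ, hθ0, hθ1, hθ⟩ : ∃ θ : ℝ, 0 < θ ∧ θ < 1 ∧ Cs < C1 * (1 - θ) ^ 2 := by
    have e1 : ∀ᶠ r in 𝓝[>] (0 : ℝ), 0 < r := self_mem_nhdsWithin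
    have e2 : ∀ᶠ r in 𝓝[>] (0 : ℝ), r < 1 := nhdsWithin_le_nhds (gt_mem_nhds one_pos)
    have e3 : ∀ᶠ r in 𝓝[>] (0 : ℝ), Cs < C1 * (1 - r) ^ 2 := by
      have hcont : Continuous fun r : ℝ => C1 * (1 - r) ^ 2 := by fun_prop
      refine nhdsWithin_le_nhds (hcont.continuousAt.eventually (lt_mem_nhds ?_))
      simpa using hCC
    obtain ⟨r, h1, h2, h3⟩ := (e1.and (e2.and e3)).exists
    exact ⟨r, h1, h2, h3⟩
  have hp0 : 0 < p := by linarith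
  obtain ⟨g1, hg1⟩ : ∃ g1, g1 = (1 - (lam⁻¹) ^ 2) * (n / ρ * θ * W) ^ 2 / (V * V ^ (2 / p)) :=
    ⟨_, rfl⟩
  have hl1 : lam⁻¹ < 1 := inv_lt_one_of_one_lt₀ hlam1
  have hl0 : 0 < lam⁻¹ := inv_pos.2 hlam0
  have hls : 0 < 1 - (lam⁻¹) ^ 2 := by nlinarith
  have hVp : 0 < V ^ (2 / p) := Real.rpow_pos_of_pos hV _
  have hg10 : 0 < g1 := by rw [hg1]; positivity
  have hg20 : 0 < C1 * (1 - θ) ^ 2 - Cs := by linarith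
  have hmin := lt_min hg10 hg20
  rw [← hCs]
  refine lt_of_lt_of_le (show Cs < Cs + min g1 (C1 * (1 - θ) ^ 2 - Cs) by linarith)
    (le_sob hp ho hne fun f hf => ?_)
  have hP0 : 0 < ∫ x, |f x| ^ p := adm_pos hp hf
  by_cases hcase : volume {x | θ * ((∫ x, |f x| ^ p) / V) ^ (1 / p) < |f x|} ≤
      ENNReal.ofReal (unitBallVol (N + 1) * ρ1 ^ (N + 1))
  · have := caseA (by omega) hp hf ho.measurableSet hV hΩV hθ0 hθ1 hρ1 hcase
    rw [← hC1] at this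
    refine le_trans (mul_le_mul_of_nonneg_right ?_ (Real.rpow_nonneg hP0.le _)) this
    linarith [min_le_right g1 (C1 * (1 - θ) ^ 2 - Cs)]
  · obtain ⟨hf1, hfc, hfs, -⟩ := hf
    obtain ⟨P, hP⟩ : ∃ P, P = ∫ x, |f x| ^ p := ⟨_, rfl⟩
    obtain ⟨T, hT⟩ : ∃ T, T = θ * (P / V) ^ (1 / p) := ⟨_, rfl⟩
    rw [← hP, ← hT, not_le, ← hW] at hcase
    rw [← hP] at hP0 ⊢
    have hPp : 0 < P ^ (2 / p) := Real.rpow_pos_of_pos hP0 _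
    have hT0 : 0 < T := by rw [hT]; positivity
    have hTsq : T ^ 2 = θ ^ 2 * (P ^ (2 / p) / V ^ (2 / p)) := by
      rw [hT, mul_pow, ← Real.rpow_natCast ((P / V) ^ (1 / p)), ← Real.rpow_mul (by positivity),
        Real.div_rpow hP0.le hV.le, show 1 / p * ((2 : ℕ) : ℝ) = 2 / p by push_cast; ring]
    have hfin : ∀ s : ℝ, 0 ≤ s → volume {x | s < |f x|} ≠ ⊤ := fun s hs =>
      ne_top_of_le_ne_top hΩf (measure_mono ((mem_tsupp_of_lt hs).trans hfs))
    have hfin2 : ∀ t : ℝ, 0 < t → volume {x | t ≤ |f x|} ≠ ⊤ := fun t ht =>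
      ne_top_of_le_ne_top (hfin 0 le_rfl) (measure_mono fun x hx => lt_of_lt_of_le ht hx)
    have hmV : ∀ t : ℝ, 0 < t → volume.real {x | t ≤ |f x|} ≤ V := fun t ht => by
      rw [← hΩr]
      exact measureReal_mono (fun x hx => hfs (mem_tsupp_of_lt le_rfl (lt_of_lt_of_le ht hx))) hΩf
    have hmW : ∀ t : ℝ, 0 < t → t ≤ T → W ≤ volume.real {x | t ≤ |f x|} := fun t ht htT => by
      rw [measureReal_def]
      exact (ENNReal.ofReal_le_iff_le_toReal (hfin2 t ht)).1
        (hcase.le.trans (measure_mono fun x hx => htT.trans (le_of_lt hx)))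
    have h0 : volume {x | 0 < |f x|} ≤ ENNReal.ofReal (unitBallVol (N + 1) * ρ ^ (N + 1)) := by
      rw [← hv]; exact measure_mono ((mem_tsupp_of_lt le_rfl).trans hfs)
    have hB := caseB (by omega) hp hf1 hfc hT0 hl0 hl1.le hρ h0 (fun R s t hR hs hst htT hRv => by
      have ht : 0 < t := lt_of_le_of_lt hs hst
      have hm1 := hmW t ht htT
      have hm2 := hmV t ht
      have hI := imp_band hρ hδ hEm hEΩ ho.measurableSet hV hΩV he hE hf1 hfc hfs hs hst
        (by rw [← hW] at hρe; linarith)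
      rw [← hn] at hI ⊢
      obtain ⟨m, hm⟩ : ∃ m, m = volume.real {x | t ≤ |f x|} := ⟨_, rfl⟩
      rw [← hm] at hm1 hm2 hI ⊢
      have hm0 : 0 < m := lt_of_lt_of_le hW0 hm1
      have hRR : ρ1 ≤ R := by
        by_contra hlt
        push Not at hlt
        have h1 : ENNReal.ofReal W < ENNReal.ofReal (unitBallVol (N + 1) * R ^ (N + 1)) :=
          hcase.trans_le ((measure_mono fun x hx => lt_trans (hst.trans_le htT) hx).trans hRv)
        refine absurd h1 (not_lt.2 (ENNReal.ofReal_le_ofReal ?_))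
        rw [hW]; gcongr
      have hRρ : n / R ≤ n / ρ * lam := by
        rw [div_mul_eq_mul_div, div_le_div_iff₀ hR hρ]
        have : ρ ≤ lam * R := hρl.trans (by gcongr)
        calc n * ρ ≤ n * (lam * R) := by gcongr
          _ = n * lam * R := by ring
      have hgain : n / ρ * m * (1 + d) ≤ n / ρ * m + δ * (e / 2) := by
        have : n / ρ * d * V = δ * (e / 2) := by rw [hd]; field_simp
        have h2 : n / ρ * d * m ≤ n / ρ * d * V := by gcongr
        linarith
      have hts : 0 < t - s := by linarith
      have h3 : n / R * (t - s) * m ≤ lam⁻¹ * ((t - s) * (n / ρ * m * (1 + d))) := by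
        rw [← hlamsq]
        have : lam⁻¹ * ((t - s) * (n / ρ * m * lam ^ 2)) = n / ρ * lam * (t - s) * m := by
          field_simp
        rw [this]; gcongr
      refine h3.trans (mul_le_mul_of_nonneg_left (le_trans ?_ hI) hl0.le)
      gcongr)
    rw [← hP, ← hCs] at hB
    obtain ⟨M, hM⟩ := grad_bdd hf1 hfc
    have hbfin : volume {x | 0 < |f x| ∧ |f x| < T} ≠ ⊤ :=
      ne_top_of_le_ne_top (hfin 0 le_rfl) (measure_mono fun x hx => hx.1)
    have hsq := sq_int_le (grad_meas hf1) (fun x => norm_nonneg _) hM hbfin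
    have hbi := band_iso hf1 hfc le_rfl hT0 hρ h0
    have hbV : volume.real {x | 0 < |f x| ∧ |f x| < T} ≤ V := by
      rw [← hΩr]
      exact measureReal_mono (fun x hx => hfs (mem_tsupp_of_lt le_rfl hx.1)) hΩf
    rw [← hn, sub_zero] at hbi
    have hmT := hmW T hT0 le_rfl
    have hI0 : 0 ≤ ∫ x in {x | 0 < |f x| ∧ |f x| < T}, ‖fderiv ℝ f x‖ ^ 2 :=
      integral_nonneg fun x => sq_nonneg _
    obtain ⟨I, hI⟩ : ∃ I, I = ∫ x in {x | 0 < |f x| ∧ |f x| < T}, ‖fderiv ℝ f x‖ ^ 2 := ⟨_, rfl⟩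
    rw [← hI] at hB hsq hI0
    have h5 : (n / ρ * T * W) ^ 2 ≤ V * I := by
      have : n / ρ * T * W ≤ ∫ x in {x | 0 < |f x| ∧ |f x| < T}, ‖fderiv ℝ f x‖ :=
        le_trans (by gcongr) hbi
      refine le_trans (pow_le_pow_left₀ (by positivity) this 2) (hsq.trans ?_)
      gcongr
    have h6 : g1 * P ^ (2 / p) ≤ (1 - (lam⁻¹) ^ 2) * I := by
      have e1 : g1 * P ^ (2 / p) = (1 - (lam⁻¹) ^ 2) * ((n / ρ * T * W) ^ 2 / V) := by
        rw [hg1, show (n / ρ * T * W) ^ 2 = (n / ρ * W) ^ 2 * T ^ 2 by ring, hTsq]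
        generalize 1 - (lam⁻¹) ^ 2 = a
        field_simp
      rw [e1]
      refine mul_le_mul_of_nonneg_left ?_ hls.le
      rw [div_le_iff₀ hV]; linarith
    have h7 : min g1 (C1 * (1 - θ) ^ 2 - Cs) * P ^ (2 / p) ≤ g1 * P ^ (2 / p) :=
      mul_le_mul_of_nonneg_right (min_le_left _ _) hPp.le
    linarith

end PartI

/-- Faber–Krahn comparison of the two balls. Let `Ω*` be the ball centered at
the origin with `|Ω*| = |Ω|` and `B*` the ball with `C_p(B*) = C_p(Ω)`. Then `B* ⊆ Ω*`, with
equality if and only if `Ω` is a ball. -/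
theorem ball_inclusion_faber_krahn (n : ℕ) (hn : 2 ≤ n)
    (Ω : Set (EuclideanSpace ℝ (Fin n)))
    (hΩo : IsOpen Ω) (hΩc : IsConnected Ω) (hΩb : Bornology.IsBounded Ω)
    (hΩbd : HasC1Boundary Ω)
    (p : ℝ) (hp1 : 1 ≤ p) (hp2 : 3 ≤ n → p < 2 * (n : ℝ) / ((n : ℝ) - 2))
    (R ρ : ℝ) (hR : 0 < R) (hρ : 0 < ρ)
    (hCp : sobolevConstant p (ball (0 : EuclideanSpace ℝ (Fin n)) R) = sobolevConstant p Ω)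
    (hvol : volume (ball (0 : EuclideanSpace ℝ (Fin n)) ρ) = volume Ω) :
    ball (0 : EuclideanSpace ℝ (Fin n)) R ⊆ ball (0 : EuclideanSpace ℝ (Fin n)) ρ ∧
      (ball (0 : EuclideanSpace ℝ (Fin n)) R = ball (0 : EuclideanSpace ℝ (Fin n)) ρ ↔
        ∃ c : EuclideanSpace ℝ (Fin n), Ω = ball c ρ) := by
  have hn0 : n ≠ 0 := by omega
  have hne := hΩc.nonempty
  have hv : volume Ω = ENNReal.ofReal (unitBallVol n * ρ ^ n) := by
    rw [← hvol]; exact vol_ball _ hρ.le (Or.inr hρ)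
  have hFK : sobolevConstant p (ball (0 : EuclideanSpace ℝ (Fin n)) ρ) ≤ sobolevConstant p Ω :=
    FK (by omega) hp1 hΩo hne hρ hv.le
  have hRρ : R ≤ ρ := by
    by_contra hlt
    push Not at hlt
    have := sob_strict hn hp1 hp2 hρ hlt
    linarith
  refine ⟨ball_subset_ball hRρ, fun hb => ?_, ?_⟩
  · have hEq : sobolevConstant p (ball (0 : EuclideanSpace ℝ (Fin n)) ρ) =
        sobolevConstant p Ω := by rw [← hb, hCp]
    obtain ⟨N, rfl⟩ : ∃ N, n = N + 1 := ⟨n - 1, by omega⟩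
    rcases rigidity (by omega) hΩo hΩc hΩb hΩbd hρ hv with h | h
    · exact h
    · exact absurd hEq (strict_FK (by omega) hp1 hp2 hΩo hne hρ hv h).ne
  · rintro ⟨c, rfl⟩
    have h1 := sob_transl hp1 0 c hρ
    rcases hRρ.eq_or_lt with h | h
    · rw [h]
    · have := sob_strict hn hp1 hp2 hR h
      linarith
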